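/- arXiv:2001.01933 — 2 statements merged into one kernel-verified Lean document; each statement's English description precedes it below -/
import Mathlib

section
/- For every ε > 0 the following holds: for n ranging over even natural numbers and Δ drawn from U(n), with probability tending to 1 as n → ∞, the number of (n/2+1)-element subsets x of [n] that are holes of Δ and such that no other hole x' of size n/2+1 satisfies |x ∩ x'| = n/2 is at least (1−ε)·2^{(n−1)/2}/√(πn). (This yields that the homology group H_{n/2−1}(Δ) over any field has rank at least (1+o(1))·2^{(n−1)/2}/√(πn) with high probability.) -/
open scoped Classical

noncomputable section

/-- `Δ` is a simplicial complex on vertex set `Fin n`: all faces are nonempty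
and it is downward closed. -/
def IsComplex {n : ℕ} (Δ : Finset (Finset (Fin n))) : Prop :=
  (∀ x ∈ Δ, x.Nonempty) ∧
    ∀ x ∈ Δ, ∀ y : Finset (Fin n), y.Nonempty → y ⊆ x → y ∈ Δ

/-- The finite set of all simplicial complexes on `n` vertices. -/
def allComplexes (n : ℕ) : Finset (Finset (Finset (Fin n))) :=
  Finset.univ.filter IsComplex

/-- The probability, under the uniform measure `U(n)` on all simplicial
complexes on `n` vertices, of the event `P`. -/
def uniformProb (n : ℕ) (P : Finset (Finset (Fin n)) → Prop) : ℝ :=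
  (((allComplexes n).filter P).card : ℝ) / ((allComplexes n).card : ℝ)

/-- `x` is a hole of `Δ` of dimension `m`: an `(m+1)`-set that is not a face
although all its `m`-subsets are faces. -/
def IsHole {n : ℕ} (Δ : Finset (Finset (Fin n))) (m : ℕ) (x : Finset (Fin n)) : Prop :=
  x.card = m + 1 ∧ x ∉ Δ ∧ ∀ y ⊆ x, y.card = m → y ∈ Δ

namespace UC

structure BG {α : Type*} [DecidableEq α] (X Y : Finset α) (dn up : α → Finset α) (a b : ℕ) :
    Prop where
  dn_sub : ∀ x ∈ X, dn x ⊆ Y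
  up_sub : ∀ y ∈ Y, up y ⊆ X
  dn_card : ∀ x ∈ X, (dn x).card = a
  up_card : ∀ y ∈ Y, (up y).card = b
  mem : ∀ x ∈ X, ∀ y ∈ Y, (y ∈ dn x ↔ x ∈ up y)
  codeg : ∀ y ∈ Y, ∀ x1 ∈ up y, ∀ x2 ∈ up y, x1 ≠ x2 → dn x1 ∩ dn x2 ⊆ {y}

section core
variable {α : Type*} [DecidableEq α] {X Y : Finset α} {dn up : α → Finset α} {a b : ℕ}

/-- closure of `G` -/
def cl (X : Finset α) (dn : α → Finset α) (G : Finset α) : Finset α :=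
  X.filter (fun x => dn x ⊆ G)

/-- number of edges between `G` and the complement of its closure -/
def ed (X : Finset α) (dn up : α → Finset α) (G : Finset α) : ℕ :=
  ∑ y ∈ G, (up y \ cl X dn G).card

theorem BG.dc (h : BG X Y dn up a b) {A B : Finset α} (hA : A ⊆ X) (hB : B ⊆ Y) :
    ∑ y ∈ B, (up y ∩ A).card = ∑ x ∈ A, (dn x ∩ B).card := by
  have h1 : ∀ y ∈ B, (up y ∩ A).card = ∑ x ∈ A, if y ∈ dn x then 1 else 0 := by
    intro y hy
    rw [Finset.sum_boole, Nat.cast_id]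
    congr 1
    ext x
    simp only [Finset.mem_inter, Finset.mem_filter]
    constructor
    · rintro ⟨h1, h2⟩
      exact ⟨h2, (h.mem x (hA h2) y (hB hy)).2 h1⟩
    · rintro ⟨h1, h2⟩
      exact ⟨(h.mem x (hA h1) y (hB hy)).1 h2, h1⟩
  have h2 : ∀ x ∈ A, (dn x ∩ B).card = ∑ y ∈ B, if y ∈ dn x then 1 else 0 := by
    intro x hx
    rw [Finset.sum_boole, Nat.cast_id]
    congr 1
    ext y
    simp only [Finset.mem_inter, Finset.mem_filter]
    tauto
  rw [Finset.sum_congr rfl h1, Finset.sum_congr rfl h2, Finset.sum_comm]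

theorem cl_sub (G : Finset α) : cl X dn G ⊆ X := Finset.filter_subset _ _

theorem BG.edge_count (h : BG X Y dn up a b) {G : Finset α} (hG : G ⊆ Y) :
    b * G.card = a * (cl X dn G).card + ed X dn up G := by
  have h1 := h.dc (cl_sub (dn := dn) G) hG
  have h2 : ∑ x ∈ cl X dn G, (dn x ∩ G).card = a * (cl X dn G).card := by
    rw [Finset.sum_congr rfl (g := fun _ => a)]
    · simp [mul_comm]
    · intro x hx
      have hx' := Finset.mem_filter.1 hx
      rw [Finset.inter_eq_left.2 hx'.2, h.dn_card x hx'.1]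
  rw [← h2, ← h1, ed, ← Finset.sum_add_distrib]
  rw [Finset.sum_congr rfl (g := fun _ => b)]
  · simp [mul_comm]
  · intro y hy
    rw [add_comm, Finset.card_sdiff_add_card_inter, h.up_card y (hG hy)]

/-- weights of Bernoulli subset -/
theorem bern_avoid (Y Z : Finset α) (hZ : Z ⊆ Y) (p : ℝ) :
    ∑ T ∈ Y.powerset, (p ^ T.card * (1 - p) ^ (Y.card - T.card)) * (if T ∩ Z = ∅ then 1 else 0)
      = (1 - p) ^ Z.card := by
  simp only [mul_ite, mul_one, mul_zero]
  rw [← Finset.sum_filter]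
  have : Y.powerset.filter (fun T => T ∩ Z = ∅) = (Y \ Z).powerset := by
    ext T
    simp only [Finset.mem_filter, Finset.mem_powerset, Finset.subset_sdiff,
      Finset.disjoint_iff_inter_eq_empty]
  rw [this]
  have h2 := Finset.sum_pow_mul_eq_add_pow p (1 - p) (Y \ Z)
  have h3 : ∀ T ∈ (Y \ Z).powerset, p ^ T.card * (1 - p) ^ (Y.card - T.card) =
      (p ^ T.card * (1 - p) ^ ((Y \ Z).card - T.card)) * (1 - p) ^ Z.card := by
    intro T hT
    have h4 := Finset.card_le_card (Finset.mem_powerset.1 hT)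
    have h5 := Finset.card_sdiff_add_card_eq_card hZ
    rw [mul_assoc, ← pow_add]
    congr 2
    omega
  rw [Finset.sum_congr rfl h3, ← Finset.sum_mul, h2]
  simp

theorem bern_one (Y : Finset α) (p : ℝ) :
    ∑ T ∈ Y.powerset, (p ^ T.card * (1 - p) ^ (Y.card - T.card)) = 1 := by
  rw [Finset.sum_pow_mul_eq_add_pow]; simp

theorem bern_mem (Y : Finset α) (y : α) (hy : y ∈ Y) (p : ℝ) :
    ∑ T ∈ Y.powerset, (p ^ T.card * (1 - p) ^ (Y.card - T.card)) * (if y ∈ T then 1 else 0)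
      = p := by
  have h1 := bern_avoid Y {y} (by simpa using hy) p
  have h2 := bern_one Y p
  have h3 : ∀ T : Finset α, (if y ∈ T then (1:ℝ) else 0) = 1 - if T ∩ {y} = ∅ then 1 else 0 := by
    intro T
    by_cases h : y ∈ T <;> simp [h]
  simp only [h3, mul_sub, mul_one, Finset.sum_sub_distrib, h2]
  rw [h1]; simp

/-- The set known from `Z1, Z2`. -/
def LL (dn up : α → Finset α) (Z1 Z2 : Finset α) : Finset α :=
  ((Z1.biUnion up) \ Z2).biUnion dn

def ZZ2 (X : Finset α) (dn up : α → Finset α) (G T : Finset α) : Finset α :=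
  ((G ∩ T).biUnion up) \ cl X dn G

theorem BG.LL_sub (h : BG X Y dn up a b) {G : Finset α} (hG : G ⊆ Y) (T : Finset α) :
    LL dn up (G ∩ T) (ZZ2 X dn up G T) ⊆ G := by
  intro y hy
  simp only [LL, Finset.mem_biUnion] at hy
  obtain ⟨x, hx, hy⟩ := hy
  simp only [ZZ2, Finset.mem_sdiff, not_and, not_not] at hx
  have := hx.2 hx.1
  exact (Finset.mem_filter.1 this).2 hy

theorem BG.mem_LL (h : BG X Y dn up a b) {G : Finset α} (hG : G ⊆ Y) {T : Finset α} {y : α}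
    (hy : y ∈ G) (hT : T ∩ ((up y ∩ cl X dn G).biUnion dn) ≠ ∅) :
    y ∈ LL dn up (G ∩ T) (ZZ2 X dn up G T) := by
  obtain ⟨y', hy'⟩ := Finset.nonempty_iff_ne_empty.2 hT
  simp only [Finset.mem_inter, Finset.mem_biUnion] at hy'
  obtain ⟨hT, x, ⟨hxu, hxc⟩, hyx⟩ := hy'
  have hxc' := Finset.mem_filter.1 hxc
  have hG' := hxc'.2 hyx
  simp only [LL, Finset.mem_biUnion]
  refine ⟨x, ?_, (h.mem x hxc'.1 y (hG hy)).2 hxu⟩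
  simp only [ZZ2, Finset.mem_sdiff, Finset.mem_biUnion, not_and, not_not]
  refine ⟨⟨y', Finset.mem_inter.2 ⟨hG', hT⟩, (h.mem x hxc'.1 y' (hG hG')).1 hyx⟩, fun _ => hxc⟩

theorem BG.second_nbhd (h : BG X Y dn up a b) {y : α} (hy : y ∈ Y) {U : Finset α} (hU : U ⊆ up y) :
    U.card * (a - 1) ≤ (U.biUnion dn).card := by
  have h1 : (U.biUnion (fun x => dn x \ {y})).card = ∑ x ∈ U, (dn x \ {y}).card := by
    apply Finset.card_biUnion
    intro x1 h1 x2 h2 hne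
    have := h.codeg y hy x1 (hU h1) x2 (hU h2) hne
    rw [Function.onFun, Finset.disjoint_left]
    intro z hz1 hz2
    simp only [Finset.mem_sdiff, Finset.mem_singleton] at hz1 hz2
    have := this (Finset.mem_inter.2 ⟨hz1.1, hz2.1⟩)
    simp at this
    exact hz1.2 this
  have h2 : ∑ x ∈ U, (a - 1) ≤ ∑ x ∈ U, (dn x \ {y}).card := by
    apply Finset.sum_le_sum
    intro x hx
    have := Finset.le_card_sdiff {y} (dn x)
    rw [h.dn_card x (h.up_sub y hy (hU hx))] at this
    simpa using this
  rw [Finset.sum_const, smul_eq_mul, ← h1] at h2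
  refine h2.trans (Finset.card_le_card ?_)
  exact Finset.biUnion_mono (fun x _ => Finset.sdiff_subset)

theorem card_low (h : BG X Y dn up a b) {G : Finset α} (hG : G ⊆ Y) :
    b * (G.filter (fun y => 2 * (up y ∩ cl X dn G).card < b)).card ≤ 2 * ed X dn up G := by
  rw [ed, Finset.mul_sum, mul_comm, ← smul_eq_mul, ← Finset.sum_const]
  refine (Finset.sum_le_sum ?_).trans
    (Finset.sum_le_sum_of_subset (Finset.filter_subset _ _))
  intro y hy
  have hy := Finset.mem_filter.1 hy
  have := Finset.card_sdiff_add_card_inter (up y) (cl X dn G)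
  rw [h.up_card y (hG hy.1)] at this
  omega

/-- per-`G` expectation bound over `T` -/
theorem BG.expT (h : BG X Y dn up a b) {G : Finset α} (hG : G ⊆ Y) {p q c1 c2 : ℝ}
    (hp0 : 0 ≤ p) (hp1 : p ≤ 1) (hc1 : 0 ≤ c1) (hc2 : 0 ≤ c2) (hb : 0 < b)
    {r : ℕ} (hr : 2 * r ≤ b * (a - 1)) (hq : (1 - p) ^ r ≤ q) (hq0 : 0 ≤ q) :
    ∑ T ∈ Y.powerset, (p ^ T.card * (1 - p) ^ (Y.card - T.card)) *
      (c1 * ((G ∩ T).card + (ZZ2 X dn up G T).card) +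
        c2 * (G \ LL dn up (G ∩ T) (ZZ2 X dn up G T)).card) ≤
    c1 * p * G.card + c1 * p * ed X dn up G + c2 * (2 / b * ed X dn up G + q * G.card) := by
  set w : Finset α → ℝ := fun T => p ^ T.card * (1 - p) ^ (Y.card - T.card) with hw
  have hw0 : ∀ T, 0 ≤ w T := fun T => by
    have : 0 ≤ 1 - p := by linarith
    positivity
  have e1 : ∑ T ∈ Y.powerset, w T * ((G ∩ T).card : ℝ) = p * G.card := by
    have : ∀ T : Finset α, ((G ∩ T).card : ℝ) = ∑ y ∈ G, if y ∈ T then 1 else 0 := by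
      intro T
      rw [Finset.sum_boole, Finset.filter_mem_eq_inter]
    simp only [this, Finset.mul_sum]
    rw [Finset.sum_comm, Finset.sum_congr rfl (fun y hy => bern_mem Y y (hG hy) p)]
    simp [mul_comm]
  have e2 : ∑ T ∈ Y.powerset, w T * ((ZZ2 X dn up G T).card : ℝ) ≤ p * ed X dn up G := by
    have : ∀ T : Finset α, ((ZZ2 X dn up G T).card : ℝ) ≤
        ∑ y ∈ G, ((up y \ cl X dn G).card : ℝ) * if y ∈ T then 1 else 0 := by
      intro T
      have h1 : ZZ2 X dn up G T ⊆ (G ∩ T).biUnion (fun y => up y \ cl X dn G) := by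
        intro x hx
        simp only [ZZ2, Finset.mem_sdiff, Finset.mem_biUnion] at hx ⊢
        obtain ⟨⟨y, hy, hxy⟩, hx⟩ := hx
        exact ⟨y, hy, hxy, hx⟩
      have h2 := (Finset.card_le_card h1).trans Finset.card_biUnion_le
      have h3 : ((ZZ2 X dn up G T).card : ℝ) ≤ ∑ y ∈ G ∩ T, ((up y \ cl X dn G).card : ℝ) := by
        exact_mod_cast h2
      refine h3.trans (le_of_eq ?_)
      rw [← Finset.filter_mem_eq_inter, Finset.sum_filter]
      simp
    calc _ ≤ ∑ T ∈ Y.powerset, w T *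
          ∑ y ∈ G, ((up y \ cl X dn G).card : ℝ) * (if y ∈ T then 1 else 0) :=
          Finset.sum_le_sum (fun T _ => mul_le_mul_of_nonneg_left (this T) (hw0 T))
      _ = ∑ y ∈ G, ((up y \ cl X dn G).card : ℝ) *
            ∑ T ∈ Y.powerset, w T * (if y ∈ T then 1 else 0) := by
          simp only [Finset.mul_sum]
          rw [Finset.sum_comm]
          refine Finset.sum_congr rfl (fun y _ => Finset.sum_congr rfl (fun T _ => ?_))
          ring
      _ = ∑ y ∈ G, ((up y \ cl X dn G).card : ℝ) * p :=
          Finset.sum_congr rfl (fun y hy => by rw [bern_mem Y y (hG hy) p])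
      _ = p * ed X dn up G := by
          rw [← Finset.sum_mul, ed]; push_cast; ring
  have e3 : ∑ T ∈ Y.powerset, w T * ((G \ LL dn up (G ∩ T) (ZZ2 X dn up G T)).card : ℝ) ≤
      2 / b * ed X dn up G + q * G.card := by
    have : ∀ T : Finset α, ((G \ LL dn up (G ∩ T) (ZZ2 X dn up G T)).card : ℝ) ≤
        ∑ y ∈ G, if T ∩ ((up y ∩ cl X dn G).biUnion dn) = ∅ then 1 else 0 := by
      intro T
      rw [Finset.sum_boole]
      norm_cast
      apply Finset.card_le_card
      intro y hy
      rw [Finset.mem_sdiff] at hy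
      rw [Finset.mem_filter]
      refine ⟨hy.1, ?_⟩
      by_contra hne
      exact hy.2 (h.mem_LL hG hy.1 hne)
    have hsubY : ∀ y ∈ G, (up y ∩ cl X dn G).biUnion dn ⊆ Y := by
      intro y hy z hz
      simp only [Finset.mem_biUnion, Finset.mem_inter] at hz
      obtain ⟨x, ⟨_, hx⟩, hz⟩ := hz
      exact hG ((Finset.mem_filter.1 hx).2 hz)
    have hpt : ∀ y ∈ G, (1 - p) ^ ((up y ∩ cl X dn G).biUnion dn).card ≤
        (if 2 * (up y ∩ cl X dn G).card < b then 1 else 0) + q := by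
      intro y hy
      split_ifs with hlt
      · have : (1 - p) ^ ((up y ∩ cl X dn G).biUnion dn).card ≤ 1 :=
          pow_le_one₀ (by linarith) (by linarith)
        linarith
      · rw [zero_add]
        refine le_trans ?_ hq
        apply pow_le_pow_of_le_one (by linarith) (by linarith)
        have h1 := h.second_nbhd (hG hy) (U := up y ∩ cl X dn G) Finset.inter_subset_left
        push Not at hlt
        have h2 := Nat.mul_le_mul_right (a - 1) hlt
        nlinarith
    calc _ ≤ ∑ T ∈ Y.powerset, w T *
          ∑ y ∈ G, (if T ∩ ((up y ∩ cl X dn G).biUnion dn) = ∅ then 1 else 0) :=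
          Finset.sum_le_sum (fun T _ => mul_le_mul_of_nonneg_left (this T) (hw0 T))
      _ = ∑ y ∈ G, (1 - p) ^ ((up y ∩ cl X dn G).biUnion dn).card := by
          simp only [Finset.mul_sum]
          rw [Finset.sum_comm]
          exact Finset.sum_congr rfl (fun y hy => bern_avoid Y _ (hsubY y hy) p)
      _ ≤ ∑ y ∈ G, ((if 2 * (up y ∩ cl X dn G).card < b then 1 else 0) + q) :=
          Finset.sum_le_sum hpt
      _ ≤ _ := by
          rw [Finset.sum_add_distrib, Finset.sum_boole, Finset.sum_const, nsmul_eq_mul]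
          have h1 := card_low h hG
          have h2 : (b : ℝ) * ((G.filter (fun y => 2 * (up y ∩ cl X dn G).card < b)).card : ℝ)
            ≤ 2 * ed X dn up G := by exact_mod_cast h1
          have hb' : (0 : ℝ) < b := by exact_mod_cast hb
          have h3 : ((G.filter (fun y => 2 * (up y ∩ cl X dn G).card < b)).card : ℝ) ≤
              2 / b * ed X dn up G := by
            rw [div_mul_eq_mul_div, le_div_iff₀ hb']; linarith
          linarith [mul_comm (G.card : ℝ) q]
  calc _ = c1 * (∑ T ∈ Y.powerset, w T * ((G ∩ T).card : ℝ)) +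
        c1 * (∑ T ∈ Y.powerset, w T * ((ZZ2 X dn up G T).card : ℝ)) +
        c2 * (∑ T ∈ Y.powerset, w T * ((G \ LL dn up (G ∩ T) (ZZ2 X dn up G T)).card : ℝ)) := by
        simp only [Finset.mul_sum, ← Finset.sum_add_distrib]
        exact Finset.sum_congr rfl (fun T _ => by ring)
    _ ≤ _ := by
        rw [e1]
        have := mul_le_mul_of_nonneg_left e2 hc1
        have := mul_le_mul_of_nonneg_left e3 hc2
        linarith

theorem BG.existsT (h : BG X Y dn up a b) {ι : Type*} (Ω : Finset ι) (G : ι → Finset α)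
    (hG : ∀ i ∈ Ω, G i ⊆ Y) {p q c1 c2 : ℝ}
    (hp0 : 0 ≤ p) (hp1 : p ≤ 1) (hc1 : 0 ≤ c1) (hc2 : 0 ≤ c2) (hb : 0 < b)
    {r : ℕ} (hr : 2 * r ≤ b * (a - 1)) (hq : (1 - p) ^ r ≤ q) (hq0 : 0 ≤ q) :
    ∃ T ⊆ Y, ∑ i ∈ Ω,
      (c1 * ((G i ∩ T).card + (ZZ2 X dn up (G i) T).card) +
        c2 * (G i \ LL dn up (G i ∩ T) (ZZ2 X dn up (G i) T)).card) ≤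
    ∑ i ∈ Ω, (c1 * p * (G i).card + c1 * p * ed X dn up (G i) +
      c2 * (2 / b * ed X dn up (G i) + q * (G i).card)) := by
  by_contra hcon
  push Not at hcon
  set B := ∑ i ∈ Ω, (c1 * p * (G i).card + c1 * p * ed X dn up (G i) +
      c2 * (2 / b * ed X dn up (G i) + q * (G i).card)) with hB
  set φ : Finset α → ℝ := fun T => ∑ i ∈ Ω,
      (c1 * ((G i ∩ T).card + (ZZ2 X dn up (G i) T).card) +
        c2 * (G i \ LL dn up (G i ∩ T) (ZZ2 X dn up (G i) T)).card) with hφ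
  have h1p : 0 ≤ 1 - p := by linarith
  have h1 : ∑ T ∈ Y.powerset, (p ^ T.card * (1 - p) ^ (Y.card - T.card)) * φ T ≤ B := by
    simp only [hφ, Finset.mul_sum]
    rw [Finset.sum_comm]
    refine Finset.sum_le_sum (fun i hi => ?_)
    exact h.expT (hG i hi) hp0 hp1 hc1 hc2 hb hr hq hq0
  have h2 : ∑ T ∈ Y.powerset, (p ^ T.card * (1 - p) ^ (Y.card - T.card)) * (φ T - B) ≤ 0 := by
    simp only [mul_sub, Finset.sum_sub_distrib, ← Finset.sum_mul, bern_one]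
    linarith
  have h3 : ∀ T ∈ Y.powerset, 0 ≤ (p ^ T.card * (1 - p) ^ (Y.card - T.card)) * (φ T - B) := by
    intro T hT
    have := hcon T (Finset.mem_powerset.1 hT)
    exact mul_nonneg (by positivity) (by linarith)
  have h4 := (Finset.sum_eq_zero_iff_of_nonneg h3).1
    (le_antisymm h2 (Finset.sum_nonneg h3))
  have h5 : ∀ T ∈ Y.powerset, (p ^ T.card * (1 - p) ^ (Y.card - T.card)) = 0 := by
    intro T hT
    have h6 := hcon T (Finset.mem_powerset.1 hT)
    rcases mul_eq_zero.1 (h4 T hT) with h7 | h7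
    · exact h7
    · linarith
  have := bern_one Y p
  rw [Finset.sum_eq_zero h5] at this
  norm_num at this

end core
end UC

namespace UC
section core2
variable {α : Type*} [DecidableEq α] {X Y : Finset α} {dn up : α → Finset α} {a b : ℕ}

def S0 (X : Finset α) (dn : α → Finset α) (ψ : ℕ) (F : Finset α) : Finset α :=
  X.filter (fun x => (dn x \ F).card ≤ ψ)

def SS (X : Finset α) (dn up : α → Finset α) (ψ : ℕ) (F Q : Finset α) : Finset α :=
  S0 X dn ψ F \ Q.biUnion up

def FF (X Y : Finset α) (dn up : α → Finset α) (ψ : ℕ) (F Q : Finset α) : Finset α :=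
  F ∪ Y.filter (fun y => ψ < (up y ∩ SS X dn up ψ F Q).card)

theorem BG.stage2a {G L : Finset α} (ψ : ℕ) (hL : L ⊆ G) :
    ∃ R ⊆ cl X dn G, ψ * R.card ≤ (G \ L).card ∧ L ∪ R.biUnion dn ⊆ G ∧
      ∀ x ∈ cl X dn G, (dn x \ (L ∪ R.biUnion dn)).card ≤ ψ := by
  have hne : ((cl X dn G).powerset.filter
      (fun R => ψ * R.card ≤ (R.biUnion dn \ L).card)).Nonempty := ⟨∅, by simp⟩
  obtain ⟨R, hR, hmax⟩ := Finset.exists_max_image _ (fun R => R.card) hne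
  simp only [Finset.mem_filter, Finset.mem_powerset] at hR hmax
  have hsub : R.biUnion dn ⊆ G := by
    intro y hy
    obtain ⟨x, hx, hy⟩ := Finset.mem_biUnion.1 hy
    exact (Finset.mem_filter.1 (hR.1 hx)).2 hy
  refine ⟨R, hR.1, hR.2.trans (Finset.card_le_card (Finset.sdiff_subset_sdiff hsub le_rfl)),
    Finset.union_subset hL hsub, ?_⟩
  intro x hx
  by_contra hlt
  push Not at hlt
  have hxR : x ∉ R := by
    intro hxR
    have : dn x \ (L ∪ R.biUnion dn) = ∅ := by
      rw [Finset.sdiff_eq_empty_iff_subset]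
      exact (Finset.subset_biUnion_of_mem dn hxR).trans Finset.subset_union_right
    rw [this] at hlt
    simp at hlt
  have := hmax (insert x R) ⟨Finset.insert_subset hx hR.1, ?_⟩
  · rw [Finset.card_insert_of_notMem hxR] at this
    omega
  · rw [Finset.card_insert_of_notMem hxR, Finset.biUnion_insert]
    have h1 : (dn x \ (L ∪ R.biUnion dn)) ∪ (R.biUnion dn \ L) ⊆ (dn x ∪ R.biUnion dn) \ L := by
      intro z
      simp only [Finset.mem_union, Finset.mem_sdiff]
      tauto
    have h2 : Disjoint (dn x \ (L ∪ R.biUnion dn)) (R.biUnion dn \ L) := by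
      rw [Finset.disjoint_left]
      intro z
      simp only [Finset.mem_union, Finset.mem_sdiff]
      tauto
    have h3 := Finset.card_le_card h1
    rw [Finset.card_union_of_disjoint h2] at h3
    have := hR.2
    rw [mul_add]
    omega

theorem BG.stage2b (h : BG X Y dn up a b) {G F : Finset α} (ψ : ℕ) (hG : G ⊆ Y)
    (hC : cl X dn G ⊆ S0 X dn ψ F) :
    ∃ Q ⊆ Y \ G, ψ * Q.card ≤ (S0 X dn ψ F \ cl X dn G).card ∧
      cl X dn G ⊆ SS X dn up ψ F Q ∧
      ∀ y ∈ Y \ G, (up y ∩ SS X dn up ψ F Q).card ≤ ψ := by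
  have hne : ((Y \ G).powerset.filter
      (fun Q => ψ * Q.card ≤ (Q.biUnion up ∩ S0 X dn ψ F).card)).Nonempty := ⟨∅, by simp⟩
  obtain ⟨Q, hQ, hmax⟩ := Finset.exists_max_image _ (fun R => R.card) hne
  simp only [Finset.mem_filter, Finset.mem_powerset] at hQ hmax
  have hdis : ∀ x ∈ cl X dn G, x ∉ Q.biUnion up := by
    intro x hx hxQ
    obtain ⟨y, hy, hxy⟩ := Finset.mem_biUnion.1 hxQ
    have hy' := Finset.mem_sdiff.1 (hQ.1 hy)
    have hx' := Finset.mem_filter.1 hx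
    exact hy'.2 (hx'.2 ((h.mem x hx'.1 y hy'.1).2 hxy))
  refine ⟨Q, hQ.1, hQ.2.trans (Finset.card_le_card ?_), ?_, ?_⟩
  · intro x hx
    rw [Finset.mem_inter] at hx
    exact Finset.mem_sdiff.2 ⟨hx.2, fun hc => hdis x hc hx.1⟩
  · intro x hx
    exact Finset.mem_sdiff.2 ⟨hC hx, hdis x hx⟩
  · intro y hy
    by_contra hlt
    push Not at hlt
    have hyQ : y ∉ Q := by
      intro hyQ
      have : up y ∩ SS X dn up ψ F Q = ∅ := by
        rw [SS, Finset.eq_empty_iff_forall_notMem]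
        intro x hx
        simp only [Finset.mem_inter, Finset.mem_sdiff] at hx
        exact hx.2.2 (Finset.mem_biUnion.2 ⟨y, hyQ, hx.1⟩)
      rw [this] at hlt
      simp at hlt
    have := hmax (insert y Q) ⟨Finset.insert_subset hy hQ.1, ?_⟩
    · rw [Finset.card_insert_of_notMem hyQ] at this
      omega
    · rw [Finset.card_insert_of_notMem hyQ, Finset.biUnion_insert]
      have h1 : (up y ∩ SS X dn up ψ F Q) ∪ (Q.biUnion up ∩ S0 X dn ψ F) ⊆
          (up y ∪ Q.biUnion up) ∩ S0 X dn ψ F := by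
        intro z
        simp only [SS, Finset.mem_union, Finset.mem_sdiff, Finset.mem_inter]
        tauto
      have h2 : Disjoint (up y ∩ SS X dn up ψ F Q) (Q.biUnion up ∩ S0 X dn ψ F) := by
        rw [Finset.disjoint_left]
        intro z
        simp only [SS, Finset.mem_sdiff, Finset.mem_inter]
        tauto
      have h3 := Finset.card_le_card h1
      rw [Finset.card_union_of_disjoint h2] at h3
      have := hQ.2
      rw [mul_add]
      omega

theorem BG.S0_count (h : BG X Y dn up a b) {G F : Finset α} (ψ : ℕ) (hG : G ⊆ Y)
    (hF : F ⊆ G) :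
    (a - ψ) * (S0 X dn ψ F \ cl X dn G).card ≤ ed X dn up G := by
  set D := S0 X dn ψ F \ cl X dn G with hD
  have hDX : D ⊆ X := Finset.sdiff_subset.trans (Finset.filter_subset _ _)
  have h1 := h.dc hDX hG
  have h2 : ∑ y ∈ G, (up y ∩ D).card ≤ ed X dn up G := by
    apply Finset.sum_le_sum
    intro y hy
    apply Finset.card_le_card
    intro x hx
    simp only [hD, Finset.mem_inter, Finset.mem_sdiff] at hx ⊢
    tauto
  have h3 : ∑ x ∈ D, (a - ψ) ≤ ∑ x ∈ D, (dn x ∩ G).card := by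
    apply Finset.sum_le_sum
    intro x hx
    have hx' := Finset.mem_filter.1 (Finset.mem_sdiff.1 hx).1
    have h4 := Finset.card_sdiff_add_card_inter (dn x) F
    have h5 : (dn x ∩ F).card ≤ (dn x ∩ G).card :=
      Finset.card_le_card (Finset.inter_subset_inter le_rfl hF)
    rw [h.dn_card x hx'.1] at h4
    omega
  rw [Finset.sum_const, smul_eq_mul] at h3
  rw [mul_comm]
  omega

theorem BG.SS_count (h : BG X Y dn up a b) {G F Q : Finset α} (ψ : ℕ) (hG : G ⊆ Y)
    (hF : F ⊆ G) (hC : cl X dn G ⊆ SS X dn up ψ F Q)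
    (hQ : ∀ y ∈ Y \ G, (up y ∩ SS X dn up ψ F Q).card ≤ ψ) :
    FF X Y dn up ψ F Q ⊆ G ∧
    a * (SS X dn up ψ F Q).card ≤ b * (FF X Y dn up ψ F Q).card +
      ψ * (G \ FF X Y dn up ψ F Q).card + ψ * (S0 X dn ψ F \ cl X dn G).card := by
  set S := SS X dn up ψ F Q with hS
  set F' := FF X Y dn up ψ F Q with hF'
  have hFG : F' ⊆ G := by
    intro y hy
    rw [hF', FF, Finset.mem_union] at hy
    rcases hy with hy | hy
    · exact hF hy
    · rw [Finset.mem_filter] at hy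
      by_contra hyG
      exact absurd (hQ y (Finset.mem_sdiff.2 ⟨hy.1, hyG⟩)) (not_le.2 hy.2)
  refine ⟨hFG, ?_⟩
  have hSS0 : S ⊆ S0 X dn ψ F := Finset.sdiff_subset
  have hSX : S ⊆ X := hSS0.trans (Finset.filter_subset _ _)
  have h1 : ∑ x ∈ S, (dn x ∩ F').card ≤ b * F'.card := by
    rw [← h.dc hSX (hFG.trans hG), mul_comm, ← smul_eq_mul, ← Finset.sum_const]
    apply Finset.sum_le_sum
    intro y hy
    rw [← h.up_card y (hG (hFG hy))]
    exact Finset.card_le_card Finset.inter_subset_left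
  have h2 : ∑ x ∈ S, (dn x ∩ (G \ F')).card ≤ ψ * (G \ F').card := by
    rw [← h.dc hSX (Finset.sdiff_subset.trans hG), mul_comm, ← smul_eq_mul, ← Finset.sum_const]
    apply Finset.sum_le_sum
    intro y hy
    rw [Finset.mem_sdiff] at hy
    by_contra hlt
    push Not at hlt
    apply hy.2
    rw [hF', FF, Finset.mem_union, Finset.mem_filter]
    exact Or.inr ⟨hG hy.1, hlt⟩
  have h3 : ∑ x ∈ S, (dn x \ G).card ≤ ψ * (S0 X dn ψ F \ cl X dn G).card := by
    have h31 : ∑ x ∈ S, (dn x \ G).card = ∑ x ∈ S \ cl X dn G, (dn x \ G).card := by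
      symm
      apply Finset.sum_subset Finset.sdiff_subset
      intro x hx hx2
      have : x ∈ cl X dn G := by
        by_contra hc
        exact hx2 (Finset.mem_sdiff.2 ⟨hx, hc⟩)
      rw [Finset.sdiff_eq_empty_iff_subset.2 (Finset.mem_filter.1 this).2]
      simp
    rw [h31]
    have h32 : ∑ x ∈ S \ cl X dn G, (dn x \ G).card ≤ ∑ x ∈ S \ cl X dn G, ψ := by
      apply Finset.sum_le_sum
      intro x hx
      have hx' := Finset.mem_filter.1 (hSS0 (Finset.mem_sdiff.1 hx).1)
      exact (Finset.card_le_card (Finset.sdiff_subset_sdiff le_rfl hF)).trans hx'.2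
    refine h32.trans ?_
    rw [Finset.sum_const, smul_eq_mul, mul_comm]
    exact Nat.mul_le_mul_left _ (Finset.card_le_card (Finset.sdiff_subset_sdiff hSS0 le_rfl))
  have h4 : a * S.card = ∑ x ∈ S, ((dn x ∩ F').card + (dn x ∩ (G \ F')).card + (dn x \ G).card) := by
    rw [mul_comm, ← smul_eq_mul, ← Finset.sum_const]
    apply Finset.sum_congr rfl
    intro x hx
    rw [← h.dn_card x (hSX hx), ← Finset.card_sdiff_add_card_inter (dn x) G,
      ← Finset.card_sdiff_add_card_inter (dn x ∩ G) F']
    have e1 : dn x ∩ G ∩ F' = dn x ∩ F' := by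
      rw [Finset.inter_assoc, Finset.inter_eq_right.2 hFG]
    have e2 : (dn x ∩ G) \ F' = dn x ∩ (G \ F') := by
      rw [Finset.inter_sdiff_assoc]
    rw [e1, e2]
    omega
  rw [h4, Finset.sum_add_distrib, Finset.sum_add_distrib]
  omega

set_option maxHeartbeats 4000000 in
theorem BG.core (h : BG X Y dn up a b) {ι : Type*} (Ω : Finset ι) (Gf : ι → Finset α)
    (hGf : ∀ i ∈ Ω, Gf i ⊆ Y) {p q lam : ℝ} {ψ r : ℕ}
    (hp0 : 0 ≤ p) (hp1 : p ≤ 1) (hlam : 1 ≤ lam) (hψ0 : 0 < ψ) (hba : b + 1 ≤ a)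
    (hab : a ≤ 4 * b) (hψ : 8 * ψ ≤ a)
    (hr : 2 * r ≤ b * (a - 1)) (hq : (1 - p) ^ r ≤ q) (hq0 : 0 ≤ q)
    (H1 : a * lam * p + a * lam * q / ψ ≤ 1 / 4)
    (H2 : a * lam * p + 10 * lam / ψ + 2 * ψ / a ≤ 1 / (64 * lam)) :
    ∃ (f : Finset α → Fin 5 → Finset α) (S : Finset α → Finset α),
      (∀ G ⊆ Y, ∀ i, f G i ⊆ X ∪ Y) ∧ (∀ G ⊆ Y, cl X dn G ⊆ S G) ∧
      (∀ G ⊆ Y, ∀ G' ⊆ Y, f G = f G' → S G = S G') ∧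
      ∑ i ∈ Ω, (lam * ∑ t, ((f (Gf i) t).card : ℝ) + Real.log 2 * (S (Gf i)).card) ≤
        Real.log 2 * (1 - 1 / (2 * a)) * ∑ i ∈ Ω, ((Gf i).card : ℝ) := by
  have hb : 0 < b := by omega
  have ha : 0 < a := by omega
  have hψR : (0 : ℝ) < ψ := by exact_mod_cast hψ0
  have haR : (0 : ℝ) < a := by exact_mod_cast ha
  have hbR : (0 : ℝ) < b := by exact_mod_cast hb
  have hlam0 : 0 < lam := by linarith
  obtain ⟨T, hTY, hT⟩ := h.existsT Ω Gf hGf (c1 := lam) (c2 := lam / ψ) hp0 hp1 hlam0.le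
    (by positivity) hb hr hq hq0
  have hR' : ∀ G : Finset α, ∃ R : Finset α, G ⊆ Y → (R ⊆ cl X dn G ∧
      ψ * R.card ≤ (G \ LL dn up (G ∩ T) (ZZ2 X dn up G T)).card ∧
      LL dn up (G ∩ T) (ZZ2 X dn up G T) ∪ R.biUnion dn ⊆ G ∧
      ∀ x ∈ cl X dn G, (dn x \ (LL dn up (G ∩ T) (ZZ2 X dn up G T) ∪ R.biUnion dn)).card ≤ ψ) := by
    intro G
    by_cases hG : G ⊆ Y
    · obtain ⟨R, h1, h2⟩ := BG.stage2a (X := X) (dn := dn) ψ (h.LL_sub hG T)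
      exact ⟨R, fun _ => ⟨h1, h2⟩⟩
    · exact ⟨∅, fun h => absurd h hG⟩
  choose R hR using hR'
  set F : Finset α → Finset α := fun G =>
    LL dn up (G ∩ T) (ZZ2 X dn up G T) ∪ (R G).biUnion dn with hF
  have hQ' : ∀ G : Finset α, ∃ Q : Finset α, G ⊆ Y → (Q ⊆ Y \ G ∧
      ψ * Q.card ≤ (S0 X dn ψ (F G) \ cl X dn G).card ∧
      cl X dn G ⊆ SS X dn up ψ (F G) Q ∧
      ∀ y ∈ Y \ G, (up y ∩ SS X dn up ψ (F G) Q).card ≤ ψ) := by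
    intro G
    by_cases hG : G ⊆ Y
    · obtain ⟨Q, h1⟩ := h.stage2b (F := F G) ψ hG (fun x hx =>
        Finset.mem_filter.2 ⟨(Finset.mem_filter.1 hx).1, (hR G hG).2.2.2 x hx⟩)
      exact ⟨Q, fun _ => h1⟩
    · exact ⟨∅, fun h => absurd h hG⟩
  choose Q hQ using hQ'
  set SG : Finset α → Finset α := fun G => SS X dn up ψ (F G) (Q G) with hSG
  set FG : Finset α → Finset α := fun G => FF X Y dn up ψ (F G) (Q G) with hFG
  have hcnt : ∀ G ⊆ Y, FG G ⊆ G ∧ a * (SG G).card ≤ b * (FG G).card +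
      ψ * (G \ FG G).card + ψ * (S0 X dn ψ (F G) \ cl X dn G).card := fun G hG =>
    h.SS_count ψ hG (hR G hG).2.2.1 (hQ G hG).2.2.1 (hQ G hG).2.2.2
  -- aggregated quantities
  set g : ℝ := ∑ i ∈ Ω, ((Gf i).card : ℝ) with hg
  set c : ℝ := ∑ i ∈ Ω, ((cl X dn (Gf i)).card : ℝ) with hc
  set e : ℝ := ∑ i ∈ Ω, (ed X dn up (Gf i) : ℝ) with he
  set t : ℝ := ∑ i ∈ Ω, ((Gf i \ FG (Gf i)).card : ℝ) with ht
  set s : ℝ := ∑ i ∈ Ω, ((SG (Gf i)).card : ℝ) with hs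
  set d : ℝ := ∑ i ∈ Ω, ((S0 X dn ψ (F (Gf i)) \ cl X dn (Gf i)).card : ℝ) with hd
  set z12 : ℝ := ∑ i ∈ Ω, (((Gf i ∩ T).card : ℝ) + (ZZ2 X dn up (Gf i) T).card) with hz12
  set z3 : ℝ := ∑ i ∈ Ω, ((R (Gf i)).card : ℝ) with hz3
  set z4 : ℝ := ∑ i ∈ Ω, ((Q (Gf i)).card : ℝ) with hz4
  set m : ℝ := ∑ i ∈ Ω, ((Gf i \ LL dn up (Gf i ∩ T) (ZZ2 X dn up (Gf i) T)).card : ℝ) with hm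
  have hg0 : 0 ≤ g := Finset.sum_nonneg (fun _ _ => by positivity)
  have he0 : 0 ≤ e := Finset.sum_nonneg (fun _ _ => by positivity)
  have ht0 : 0 ≤ t := Finset.sum_nonneg (fun _ _ => by positivity)
  have hd0 : 0 ≤ d := Finset.sum_nonneg (fun _ _ => by positivity)
  have i1 : b * g = a * c + e := by
    rw [hg, hc, he, Finset.mul_sum, Finset.mul_sum, ← Finset.sum_add_distrib]
    exact Finset.sum_congr rfl (fun i hi => by exact_mod_cast h.edge_count (hGf i hi))
  have i2 : lam * z12 + lam / ψ * m ≤ lam * p * g + lam * p * e + lam / ψ * (2 / b * e + q * g) := by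
    have l : ∑ i ∈ Ω, (lam * (((Gf i ∩ T).card : ℝ) + (ZZ2 X dn up (Gf i) T).card) +
        lam / ψ * (Gf i \ LL dn up (Gf i ∩ T) (ZZ2 X dn up (Gf i) T)).card) =
        lam * z12 + lam / ψ * m := by
      rw [Finset.sum_add_distrib, ← Finset.mul_sum, ← Finset.mul_sum]
    rw [← l]
    refine hT.trans (le_of_eq ?_)
    simp only [hg, he, Finset.mul_sum, ← Finset.sum_add_distrib]
  have i3 : ψ * z3 ≤ m := by
    rw [hz3, hm, Finset.mul_sum]
    exact Finset.sum_le_sum (fun i hi => by exact_mod_cast (hR _ (hGf i hi)).2.1)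
  have i4 : ψ * z4 ≤ d := by
    rw [hz4, hd, Finset.mul_sum]
    exact Finset.sum_le_sum (fun i hi => by exact_mod_cast (hQ _ (hGf i hi)).2.1)
  have i5 : (a / 2) * d ≤ e := by
    rw [hd, he, Finset.mul_sum]
    refine Finset.sum_le_sum (fun i hi => ?_)
    have h1 := h.S0_count ψ (hGf i hi) (hR _ (hGf i hi)).2.2.1
    have h2 : ((a - ψ : ℕ) : ℝ) * (S0 X dn ψ (F (Gf i)) \ cl X dn (Gf i)).card ≤
      ed X dn up (Gf i) := by exact_mod_cast h1
    have h3 : (a / 2 : ℝ) ≤ ((a - ψ : ℕ) : ℝ) := by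
      rw [Nat.cast_sub (by omega)]
      have : (8 * ψ : ℝ) ≤ a := by exact_mod_cast hψ
      linarith
    exact (mul_le_mul_of_nonneg_right h3 (by positivity)).trans h2
  have i6 : a * s ≤ b * (g - t) + ψ * t + ψ * d := by
    rw [hs, hg, ht, hd, ← Finset.sum_sub_distrib]
    simp only [Finset.mul_sum, ← Finset.sum_add_distrib]
    refine Finset.sum_le_sum (fun i hi => ?_)
    obtain ⟨h1, h2⟩ := hcnt _ (hGf i hi)
    have h3 := Finset.card_sdiff_add_card_eq_card h1
    have h4 : ((Gf i).card : ℝ) - ((Gf i \ FG (Gf i)).card : ℝ) = (FG (Gf i)).card := by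
      rw [← h3]; push_cast; ring
    rw [h4]
    exact_mod_cast h2
  set l2 := Real.log 2 with hl2
  have hl2a : 0.69 < l2 := by have := Real.log_two_gt_d9; linarith
  have hl2b : l2 < 0.7 := by have := Real.log_two_lt_d9; linarith
  -- the base cost bound
  have base : lam * z12 + lam * z3 + lam * z4 ≤
      l2 / (2 * a) * g + (lam * p + 10 * lam / ψ / a) * e := by
    have b1 : lam * z3 ≤ lam / ψ * m := by
      rw [div_mul_eq_mul_div, le_div_iff₀ hψR]; nlinarith
    have b2 : lam * z4 ≤ lam / ψ * (2 * e / a) := by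
      rw [div_mul_eq_mul_div, le_div_iff₀ hψR]
      have : d ≤ 2 * e / a := by rw [le_div_iff₀ haR]; linarith
      nlinarith
    have b3 : 2 / b * e ≤ 8 * e / a := by
      rw [div_mul_eq_mul_div, div_le_div_iff₀ hbR haR]
      have : (a : ℝ) ≤ 4 * b := by exact_mod_cast hab
      nlinarith
    have b4 : lam * p + lam / ψ * q ≤ l2 / (2 * a) := by
      rw [le_div_iff₀ (by positivity)]
      have : (lam * p + lam / ψ * q) * (2 * a) = 2 * (a * lam * p + a * lam * q / ψ) := by
        ring
      rw [this]; linarith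
    have b5 := mul_le_mul_of_nonneg_left b3 (by positivity : 0 ≤ lam / ψ)
    have b6 := mul_le_mul_of_nonneg_right b4 hg0
    have b7 : lam / ψ * (8 * e / a) + lam / ψ * (2 * e / a) = (10 * lam / ψ / a) * e := by ring
    linarith
  have hGrec : ∀ G ⊆ Y, G = FG G ∪ (G \ FG G) := fun G hG =>
    (Finset.union_sdiff_of_subset (hcnt G hG).1).symm
  have hSGdet : ∀ G G' : Finset α, G ∩ T = G' ∩ T → ZZ2 X dn up G T = ZZ2 X dn up G' T →
      R G = R G' → Q G = Q G' → SG G = SG G' ∧ FG G = FG G' := by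
    intro G G' e1 e2 e3 e4
    simp only [hSG, hFG, hF, e1, e2, e3, e4, and_self]
  have hZsub : ∀ G ⊆ Y, ZZ2 X dn up G T ⊆ X ∪ Y := by
    intro G hG x hx
    obtain ⟨y, hy, hxy⟩ := Finset.mem_biUnion.1 (Finset.mem_sdiff.1 hx).1
    exact Finset.mem_union_left _ (h.up_sub y (hG (Finset.mem_inter.1 hy).1) hxy)
  have hYs : ∀ {B : Finset α}, B ⊆ Y → B ⊆ X ∪ Y := fun hB => hB.trans Finset.subset_union_right
  have hXs : ∀ {B : Finset α}, B ⊆ X → B ⊆ X ∪ Y := fun hB => hB.trans Finset.subset_union_left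
  have hbaR : (b : ℝ) + 1 ≤ a := by exact_mod_cast hba
  have habR : (a : ℝ) ≤ 4 * b := by exact_mod_cast hab
  have hψa : (8 * ψ : ℝ) ≤ a := by exact_mod_cast hψ
  have H2' : (lam * p + 10 * lam / ψ / a + 2 * ψ / a / a) * (64 * lam * a) ≤ 1 := by
    have : (lam * p + 10 * lam / ψ / a + 2 * ψ / a / a) * (64 * lam * a) =
      (a * lam * p + 10 * lam / ψ + 2 * ψ / a) * (64 * lam) := by
      field_simp
    rw [this]
    rwa [le_div_iff₀ (by positivity)] at H2
  have target : l2 * (1 - 1 / (2 * a)) * g = l2 * ((1 - 1 / a) * g) + l2 / (2 * a) * g := by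
    field_simp; ring
  by_cases hcase : lam * t * (2 * a) ≤ l2 * e
  · refine ⟨fun G => ![G ∩ T, ZZ2 X dn up G T, R G, Q G, G \ FG G], fun G => cl X dn G,
      ?_, fun G _ => le_rfl, ?_, ?_⟩
    · intro G hG i
      fin_cases i
      · exact hYs (Finset.inter_subset_left.trans hG)
      · exact hZsub G hG
      · exact hXs ((hR G hG).1.trans (cl_sub G))
      · exact hYs ((hQ G hG).1.trans Finset.sdiff_subset)
      · exact hYs (Finset.sdiff_subset.trans hG)
    · intro G hG G' hG' heq
      have e0 := congrFun heq 0
      have e1 := congrFun heq 1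
      have e2 := congrFun heq 2
      have e3 := congrFun heq 3
      have e4 := congrFun heq 4
      simp only [Matrix.cons_val] at e0 e1 e2 e3 e4
      have := (hSGdet G G' e0 e1 e2 e3).2
      have hGG : G = G' := by
        rw [hGrec G hG, hGrec G' hG', e4, this]
      rw [hGG]
    · have tot : ∑ i ∈ Ω, (lam * ∑ k, (((![Gf i ∩ T, ZZ2 X dn up (Gf i) T, R (Gf i), Q (Gf i),
          Gf i \ FG (Gf i)] : Fin 5 → Finset α) k).card : ℝ) + l2 * (cl X dn (Gf i)).card) =
          lam * z12 + lam * z3 + lam * z4 + lam * t + l2 * c := by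
        simp only [hz12, hz3, hz4, ht, hc, Finset.mul_sum, ← Finset.sum_add_distrib]
        refine Finset.sum_congr rfl (fun i _ => ?_)
        simp [Fin.sum_univ_succ]
        ring
      refine (le_of_eq tot).trans ?_
      rw [target]
      have k1 : c = (b * g - e) / a := by rw [i1]; field_simp; ring
      have k2 : c ≤ (1 - 1 / a) * g - e / a := by
        have : (1 - 1 / (a:ℝ)) * g - e / a = ((a - 1) * g - e) / a := by field_simp
        rw [k1, this]
        apply div_le_div_of_nonneg_right _ haR.le
        nlinarith
      have k3 : lam * t ≤ l2 * e / (2 * a) := by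
        rw [le_div_iff₀ (by positivity)]; linarith
      have k4 : lam * p + 10 * lam / ψ / a ≤ l2 / (2 * a) := by
        rw [le_div_iff₀ (by positivity)]
        have : 0 ≤ 2 * (ψ:ℝ) / a / a := by positivity
        have hnn : 0 ≤ lam * p + 10 * lam / ψ / a := by positivity
        have h5 : (lam * p + 10 * lam / ψ / a) * (64 * a) ≤ 1 := by
          calc _ ≤ (lam * p + 10 * lam / ψ / a) * (64 * lam * a) := by
                apply mul_le_mul_of_nonneg_left _ hnn
                nlinarith
            _ ≤ (lam * p + 10 * lam / ψ / a + 2 * ψ / a / a) * (64 * lam * a) := by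
                apply mul_le_mul_of_nonneg_right _ (by positivity)
                linarith
            _ ≤ 1 := H2'
        linarith
      have k5 := mul_le_mul_of_nonneg_right k4 he0
      have k6 := mul_le_mul_of_nonneg_left k2 (by linarith : 0 ≤ l2)
      have k7 : l2 / (2 * a) * e + l2 * e / (2 * a) = l2 * (e / a) := by field_simp; ring
      linarith
  · refine ⟨fun G => ![G ∩ T, ZZ2 X dn up G T, R G, Q G, ∅], fun G => SG G,
      ?_, fun G hG => (hQ G hG).2.2.1, ?_, ?_⟩
    · intro G hG i
      fin_cases i
      · exact hYs (Finset.inter_subset_left.trans hG)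
      · exact hZsub G hG
      · exact hXs ((hR G hG).1.trans (cl_sub G))
      · exact hYs ((hQ G hG).1.trans Finset.sdiff_subset)
      · exact Finset.empty_subset _
    · intro G hG G' hG' heq
      have e0 := congrFun heq 0
      have e1 := congrFun heq 1
      have e2 := congrFun heq 2
      have e3 := congrFun heq 3
      simp only [Matrix.cons_val] at e0 e1 e2 e3
      exact (hSGdet G G' e0 e1 e2 e3).1
    · have tot : ∑ i ∈ Ω, (lam * ∑ k, (((![Gf i ∩ T, ZZ2 X dn up (Gf i) T, R (Gf i), Q (Gf i),
          ∅] : Fin 5 → Finset α) k).card : ℝ) + l2 * (SG (Gf i)).card) =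
          lam * z12 + lam * z3 + lam * z4 + l2 * s := by
        simp only [hz12, hz3, hz4, hs, Finset.mul_sum, ← Finset.sum_add_distrib]
        refine Finset.sum_congr rfl (fun i _ => ?_)
        simp [Fin.sum_univ_succ]
        ring
      refine (le_of_eq tot).trans ?_
      rw [target]
      push Not at hcase
      have k1 : d ≤ 2 * e / a := by rw [le_div_iff₀ haR]; linarith
      have k2 : s ≤ (1 - 1 / a) * g - t / 8 + 2 * ψ / a / a * e := by
        have : a * s ≤ (a - 1) * g - a / 8 * t + ψ * (2 * e / a) := by
          have := mul_le_mul_of_nonneg_left k1 hψR.le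
          nlinarith
        have h3 : (1 - 1 / a) * g - t / 8 + 2 * ψ / a / a * e =
          ((a - 1) * g - a / 8 * t + ψ * (2 * e / a)) / a := by field_simp
        rw [h3, le_div_iff₀ haR]; linarith
      have k3 : (lam * p + 10 * lam / ψ / a + 2 * ψ / a / a) * e ≤ l2 * (t / 8) := by
        have h1 : (lam * p + 10 * lam / ψ / a + 2 * ψ / a / a) * (64 * lam * a) * e ≤ e := by
          have := mul_le_mul_of_nonneg_right H2' he0
          linarith
        have h2 : (lam * p + 10 * lam / ψ / a + 2 * ψ / a / a) * e * (64 * lam * a) ≤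
            l2 * (t / 8) * (64 * lam * a) := by
          have : l2 * (t / 8) * (64 * lam * a) = 4 * l2 * (lam * t * (2 * a)) := by ring
          rw [this]
          have m1 := mul_le_mul_of_nonneg_left hcase.le (by linarith : 0 ≤ 4 * l2)
          have m2 : 1 ≤ 4 * l2 * l2 := by nlinarith only [hl2a]
          have m3 := mul_le_mul_of_nonneg_right m2 he0
          linarith
        exact le_of_mul_le_mul_right h2 (by positivity)
      have k6 := mul_le_mul_of_nonneg_left k2 (by linarith : 0 ≤ l2)
      have k7 : l2 * (2 * ψ / a / a * e) ≤ 2 * ψ / a / a * e := by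
        have : 0 ≤ 2 * ψ / a / a * e := by positivity
        nlinarith
      have k8 : (lam * p + 10 * lam / ψ / a + 2 * ψ / a / a) * e =
        (lam * p + 10 * lam / ψ / a) * e + 2 * ψ / a / a * e := by ring
      linarith
end core2
end UC

namespace UC

theorem kraft_tuple {α β : Type*} [DecidableEq α] (𝒟 : Finset β) (f : β → Fin 5 → Finset α)
    (E : Finset α)
    (hf : ∀ D ∈ 𝒟, ∀ t, f D t ⊆ E) (v : β → ℝ)
    (hfib : ∀ Z, ∑ D ∈ 𝒟.filter (fun D => f D = Z), v D ≤ 1) (θ : ℝ) (hθ : 0 ≤ θ) :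
    ∑ D ∈ 𝒟, θ ^ (∑ t, (f D t).card) * v D ≤ Real.exp (5 * θ * E.card) := by
  have hmaps : ∀ D ∈ 𝒟, f D ∈ Fintype.piFinset (fun _ : Fin 5 => E.powerset) := by
    intro D hD
    rw [Fintype.mem_piFinset]
    exact fun t => Finset.mem_powerset.2 (hf D hD t)
  rw [← Finset.sum_fiberwise_of_maps_to hmaps]
  have h1 : ∀ Z ∈ Fintype.piFinset (fun _ : Fin 5 => E.powerset),
      ∑ D ∈ 𝒟.filter (fun D => f D = Z), θ ^ (∑ t, (f D t).card) * v D ≤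
        ∏ t, θ ^ (Z t).card := by
    intro Z _
    have : ∑ D ∈ 𝒟.filter (fun D => f D = Z), θ ^ (∑ t, (f D t).card) * v D =
        (∏ t, θ ^ (Z t).card) * ∑ D ∈ 𝒟.filter (fun D => f D = Z), v D := by
      rw [Finset.mul_sum]
      refine Finset.sum_congr rfl (fun D hD => ?_)
      rw [(Finset.mem_filter.1 hD).2, Finset.prod_pow_eq_pow_sum]
    rw [this]
    have h2 : 0 ≤ ∏ t, θ ^ (Z t).card := Finset.prod_nonneg (fun _ _ => by positivity)
    exact mul_le_of_le_one_right h2 (hfib Z)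
  refine (Finset.sum_le_sum h1).trans ?_
  rw [← Finset.prod_univ_sum (fun _ : Fin 5 => E.powerset) (fun _ z => θ ^ z.card)]
  have h3 : ∑ z ∈ E.powerset, θ ^ z.card = (θ + 1) ^ E.card := by
    rw [← Finset.sum_pow_mul_eq_add_pow θ 1 E]
    simp
  rw [h3, Finset.prod_const, Finset.card_univ, Fintype.card_fin]
  have h4 : θ + 1 ≤ Real.exp θ := Real.add_one_le_exp θ
  calc ((θ + 1) ^ E.card) ^ 5 ≤ ((Real.exp θ) ^ E.card) ^ 5 := by gcongr
    _ = _ := by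
      rw [← Real.exp_nat_mul, ← Real.exp_nat_mul]
      congr 1; push_cast; ring

theorem gibbs {β : Type*} (Ω : Finset β) (w : β → ℝ) (hw : ∀ x ∈ Ω, 0 < w x)
    (hs : ∑ x ∈ Ω, w x ≤ 1) (hne : Ω.Nonempty) :
    (Ω.card : ℝ) * Real.log Ω.card ≤ ∑ x ∈ Ω, -Real.log (w x) := by
  have hc : (0 : ℝ) < Ω.card := by exact_mod_cast hne.card_pos
  have h1 : ∀ x ∈ Ω, Real.log Ω.card + Real.log (w x) ≤ Ω.card * w x - 1 := by
    intro x hx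
    rw [← Real.log_mul hc.ne' (hw x hx).ne']
    exact Real.log_le_sub_one_of_pos (mul_pos hc (hw x hx))
  have h2 := Finset.sum_le_sum h1
  rw [Finset.sum_add_distrib, Finset.sum_sub_distrib, ← Finset.mul_sum] at h2
  simp only [Finset.sum_const, nsmul_eq_mul, mul_one] at h2
  rw [Finset.sum_neg_distrib]
  nlinarith

/-- layer `j` -/
def lay (n j : ℕ) : Finset (Finset (Fin n)) := Finset.powersetCard j Finset.univ

theorem mem_lay {n j : ℕ} {x : Finset (Fin n)} : x ∈ lay n j ↔ x.card = j := by
  simp [lay, Finset.mem_powersetCard]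

theorem card_lay (n j : ℕ) : (lay n j).card = n.choose j := by
  simp [lay, Finset.card_powersetCard]

def ldn {n : ℕ} (j : ℕ) (x : Finset (Fin n)) : Finset (Finset (Fin n)) := x.powersetCard j

def lup {n : ℕ} (j : ℕ) (y : Finset (Fin n)) : Finset (Finset (Fin n)) :=
  (lay n (j + 1)).filter (fun x => y ⊆ x)

theorem mem_ldn {n j : ℕ} {x y : Finset (Fin n)} : y ∈ ldn j x ↔ y ⊆ x ∧ y.card = j :=
  Finset.mem_powersetCard

theorem mem_lup {n j : ℕ} {x y : Finset (Fin n)} : x ∈ lup j y ↔ x.card = j + 1 ∧ y ⊆ x := by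
  simp [lup, mem_lay]

theorem card_lup {n j : ℕ} {y : Finset (Fin n)} (hy : y.card = j) : (lup j y).card = n - j := by
  have : lup j y = (Finset.univ \ y).image (fun i => insert i y) := by
    ext x
    simp only [mem_lup, Finset.mem_image, Finset.mem_sdiff, Finset.mem_univ, true_and]
    constructor
    · rintro ⟨h1, h2⟩
      have h3 : (x \ y).card = 1 := by
        rw [Finset.card_sdiff_of_subset h2]; omega
      obtain ⟨i, hi⟩ := Finset.card_eq_one.1 h3
      refine ⟨i, ?_, ?_⟩
      · have : i ∈ x \ y := by rw [hi]; simp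
        exact (Finset.mem_sdiff.1 this).2
      · rw [Finset.insert_eq, ← hi, Finset.sdiff_union_of_subset h2]
    · rintro ⟨i, hi, rfl⟩
      rw [Finset.card_insert_of_notMem hi]
      exact ⟨by omega, Finset.subset_insert _ _⟩
  rw [this, Finset.card_image_of_injOn, Finset.card_sdiff_of_subset (Finset.subset_univ _),
    Finset.card_univ, Fintype.card_fin, hy]
  intro i hi i' hi' heq
  simp only [Finset.coe_sdiff, Finset.coe_univ, Set.mem_diff, Set.mem_univ, true_and,
    Finset.mem_coe] at hi hi'
  simp only at heq
  have : i ∈ insert i' y := by rw [← heq]; simp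
  rcases Finset.mem_insert.1 this with h | h
  · exact h
  · exact absurd h hi

theorem bg_lay (n j : ℕ) :
    BG (lay n (j + 1)) (lay n j) (ldn j) (lup j) (j + 1) (n - j) where
  dn_sub := fun x _ y hy => mem_lay.2 (mem_ldn.1 hy).2
  up_sub := fun y _ x hx => mem_lay.2 (mem_lup.1 hx).1
  dn_card := fun x hx => by
    rw [ldn, Finset.card_powersetCard, mem_lay.1 hx, Nat.choose_succ_self_right]
  up_card := fun y hy => card_lup (mem_lay.1 hy)
  mem := fun x hx y hy => by
    rw [mem_ldn, mem_lup]
    have := mem_lay.1 hx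
    have := mem_lay.1 hy
    tauto
  codeg := fun y hy x1 h1 x2 h2 hne z hz => by
    rw [mem_lup] at h1 h2
    rw [Finset.mem_inter, mem_ldn, mem_ldn] at hz
    have hy := mem_lay.1 hy
    have h3 : (x1 ∩ x2).card ≤ j := by
      by_contra hlt
      push Not at hlt
      have e1 : x1 ∩ x2 = x1 := Finset.eq_of_subset_of_card_le Finset.inter_subset_left (by omega)
      have e2 : x1 ∩ x2 = x2 := Finset.eq_of_subset_of_card_le Finset.inter_subset_right (by omega)
      exact hne (e1.symm.trans e2)
    have e1 : z = x1 ∩ x2 := Finset.eq_of_subset_of_card_le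
      (Finset.subset_inter hz.1.1 hz.2.1) (by omega)
    have e2 : y = x1 ∩ x2 := Finset.eq_of_subset_of_card_le
      (Finset.subset_inter h1.2 h2.2) (by omega)
    rw [Finset.mem_singleton, e1, e2]

/-- families of sets of size `> j`, closed under subsets of size `> j` -/
def UF (n j : ℕ) : Finset (Finset (Finset (Fin n))) :=
  Finset.univ.filter (fun D => ∀ x ∈ D, j < x.card ∧ ∀ y ⊆ x, j < y.card → y ∈ D)

theorem mem_UF {n j : ℕ} {D : Finset (Finset (Fin n))} :
    D ∈ UF n j ↔ ∀ x ∈ D, j < x.card ∧ ∀ y ⊆ x, j < y.card → y ∈ D := by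
  simp [UF]

def shad {n : ℕ} (j : ℕ) (D : Finset (Finset (Fin n))) : Finset (Finset (Fin n)) :=
  (lay n j).filter (fun y => ∃ x ∈ D, y ⊆ x)

theorem mem_shad {n j : ℕ} {D : Finset (Finset (Fin n))} {y : Finset (Fin n)} :
    y ∈ shad j D ↔ y.card = j ∧ ∃ x ∈ D, y ⊆ x := by
  simp [shad, mem_lay]

/-- upper part -/
def upp {n : ℕ} (j : ℕ) (D : Finset (Finset (Fin n))) : Finset (Finset (Fin n)) :=
  D.filter (fun x => j < x.card)

theorem upp_mem {n j : ℕ} {D : Finset (Finset (Fin n))} (hD : D ∈ UF n j) :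
    upp (j + 1) D ∈ UF n (j + 1) := by
  rw [mem_UF] at *
  intro x hx
  rw [upp, Finset.mem_filter] at hx
  refine ⟨hx.2, fun y hy hc => ?_⟩
  rw [upp, Finset.mem_filter]
  exact ⟨(hD x hx.1).2 y hy (by omega), hc⟩

def Ladder (n j : ℕ) (err : ℝ) : Prop :=
  ∀ (ι : Type) (Ω : Finset ι) (D : ι → Finset (Finset (Fin n))), (∀ i ∈ Ω, D i ∈ UF n j) →
    ∃ w : Finset (Finset (Fin n)) → ℝ, (∀ E ∈ UF n j, 0 < w E) ∧ ∑ E ∈ UF n j, w E ≤ 1 ∧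
      ∑ i ∈ Ω, -Real.log (w (D i)) ≤
        Real.log 2 * (1 - 1 / (2 * ((j + 1 : ℕ) : ℝ))) * ∑ i ∈ Ω, ((shad j (D i)).card : ℝ)
          + Ω.card * err

theorem ladder_base (n j : ℕ) :
    Ladder n j (Real.log 2 * (Finset.univ.filter (fun x : Finset (Fin n) => j < x.card)).card) := by
  intro ι Ω D hD
  set M := (Finset.univ.filter (fun x : Finset (Fin n) => j < x.card)) with hM
  refine ⟨fun _ => (1 / 2 : ℝ) ^ M.card, fun _ _ => by positivity, ?_, ?_⟩
  · rw [Finset.sum_const, nsmul_eq_mul]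
    have h1 : UF n j ⊆ M.powerset := by
      intro E hE
      rw [Finset.mem_powerset]
      intro x hx
      exact Finset.mem_filter.2 ⟨Finset.mem_univ _, (mem_UF.1 hE x hx).1⟩
    have h2 := Finset.card_le_card h1
    rw [Finset.card_powerset] at h2
    have h3 : ((UF n j).card : ℝ) ≤ 2 ^ M.card := by exact_mod_cast h2
    calc _ ≤ (2 : ℝ) ^ M.card * (1 / 2 : ℝ) ^ M.card := by gcongr
      _ = 1 := by rw [← mul_pow]; norm_num
  · rw [Finset.sum_const, nsmul_eq_mul, Real.log_pow, one_div, Real.log_inv]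
    have h1 : 0 ≤ Real.log 2 := Real.log_nonneg (by norm_num)
    have h2 : 0 ≤ 1 - 1 / (2 * ((j + 1 : ℕ) : ℝ)) := by
      rw [sub_nonneg, div_le_one (by positivity)]
      have : (1 : ℝ) ≤ ((j + 1 : ℕ) : ℝ) := by exact_mod_cast Nat.le_add_left 1 j
      linarith
    have h3 : 0 ≤ ∑ i ∈ Ω, ((shad j (D i)).card : ℝ) := Finset.sum_nonneg (fun _ _ => by positivity)
    have h4 := mul_nonneg (mul_nonneg h1 h2) h3
    nlinarith

theorem fiber_bound {n j : ℕ} (w' : Finset (Finset (Fin n)) → ℝ)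
    (hw0 : ∀ E ∈ UF n (j + 1), 0 < w' E) (hw1 : ∑ E ∈ UF n (j + 1), w' E ≤ 1)
    (𝒟 : Finset (Finset (Finset (Fin n)))) (h𝒟 : 𝒟 ⊆ UF n j) (S : Finset (Finset (Fin n)))
    (hS : ∀ D ∈ 𝒟, D.filter (fun x => x.card = j + 1) ⊆ S) :
    ∑ D ∈ 𝒟, w' (upp (j + 1) D) *
      (1 / 2 : ℝ) ^ (S.card - (shad (j + 1) (upp (j + 1) D)).card) ≤ 1 := by
  have hmaps : ∀ D ∈ 𝒟, upp (j + 1) D ∈ UF n (j + 1) := fun D hD => upp_mem (h𝒟 hD)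
  rw [← Finset.sum_fiberwise_of_maps_to hmaps]
  refine le_trans (Finset.sum_le_sum (fun E' hE' => ?_)) hw1
  have h1 : ∑ D ∈ 𝒟.filter (fun D => upp (j + 1) D = E'), w' (upp (j + 1) D) *
      (1 / 2 : ℝ) ^ (S.card - (shad (j + 1) (upp (j + 1) D)).card) =
      ((𝒟.filter (fun D => upp (j + 1) D = E')).card : ℝ) *
        (w' E' * (1 / 2 : ℝ) ^ (S.card - (shad (j + 1) E').card)) := by
    rw [← nsmul_eq_mul, ← Finset.sum_const]
    refine Finset.sum_congr rfl (fun D hD => ?_)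
    rw [(Finset.mem_filter.1 hD).2]
  rw [h1]
  have hsub : ∀ D ∈ 𝒟.filter (fun D => upp (j + 1) D = E'),
      shad (j + 1) E' ⊆ D.filter (fun x => x.card = j + 1) := by
    intro D hDD y hy
    obtain ⟨hD, hE⟩ := Finset.mem_filter.1 hDD
    rw [mem_shad, ← hE] at hy
    obtain ⟨hy, x, hx, hyx⟩ := hy
    rw [Finset.mem_filter]
    exact ⟨(mem_UF.1 (h𝒟 hD) x (Finset.mem_filter.1 hx).1).2 y hyx (by omega), hy⟩
  have h2 : ((𝒟.filter (fun D => upp (j + 1) D = E')).card : ℝ) ≤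
      2 ^ (S.card - (shad (j + 1) E').card) := by
    rcases (𝒟.filter (fun D => upp (j + 1) D = E')).eq_empty_or_nonempty with he | ⟨D0, hD0⟩
    · rw [he]; simp
    · have hss : shad (j + 1) E' ⊆ S := (hsub D0 hD0).trans (hS D0 (Finset.mem_filter.1 hD0).1)
      have h3 : (𝒟.filter (fun D => upp (j + 1) D = E')).card ≤
          (Finset.Icc (shad (j + 1) E') S).card := by
        apply Finset.card_le_card_of_injOn (fun D => D.filter (fun x => x.card = j + 1))
        · intro D hD
          simp only [Finset.coe_Icc, Set.mem_Icc]
          exact ⟨hsub D hD, hS D (Finset.mem_filter.1 hD).1⟩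
        · intro D1 h1 D2 h2 heq
          simp only at heq
          have key : ∀ D ∈ 𝒟.filter (fun D => upp (j + 1) D = E'),
              D = D.filter (fun x => x.card = j + 1) ∪ E' := by
            intro D hDD
            obtain ⟨hD, hE⟩ := Finset.mem_filter.1 hDD
            rw [← hE]
            ext x
            simp only [upp, Finset.mem_union, Finset.mem_filter]
            constructor
            · intro hx
              have := (mem_UF.1 (h𝒟 hD) x hx).1
              rcases Nat.lt_or_ge (j + 1) x.card with h | h
              · exact Or.inr ⟨hx, h⟩
              · exact Or.inl ⟨hx, by omega⟩
            · rintro (h | h) <;> exact h.1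
          rw [key D1 h1, key D2 h2, heq]
      rw [Finset.card_Icc_finset hss] at h3
      exact_mod_cast h3
  have hw := hw0 E' hE'
  calc _ ≤ (2 : ℝ) ^ (S.card - (shad (j + 1) E').card) *
        (w' E' * (1 / 2 : ℝ) ^ (S.card - (shad (j + 1) E').card)) := by gcongr
    _ = w' E' * ((2 : ℝ) * (1 / 2)) ^ (S.card - (shad (j + 1) E').card) := by
        rw [mul_pow]; ring
    _ = w' E' := by norm_num

theorem ladder_step {n j : ℕ} {err p q lam : ℝ} {ψ r : ℕ} (hL : Ladder n (j + 1) err)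
    (hp0 : 0 ≤ p) (hp1 : p ≤ 1) (hlam : 1 ≤ lam) (hψ0 : 0 < ψ) (hba : n - j + 1 ≤ j + 1)
    (hab : j + 1 ≤ 4 * (n - j)) (hψ : 8 * ψ ≤ j + 1)
    (hr : 2 * r ≤ (n - j) * (j + 1 - 1)) (hq : (1 - p) ^ r ≤ q) (hq0 : 0 ≤ q)
    (H1 : ((j + 1 : ℕ) : ℝ) * lam * p + ((j + 1 : ℕ) : ℝ) * lam * q / ψ ≤ 1 / 4)
    (H2 : ((j + 1 : ℕ) : ℝ) * lam * p + 10 * lam / ψ + 2 * ψ / ((j + 1 : ℕ) : ℝ) ≤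
      1 / (64 * lam)) :
    Ladder n j (err + 5 * Real.exp (-lam) * (n.choose (j + 1) + n.choose j)) := by
  intro ι Ω D hD
  obtain ⟨w', hw0, hw1, hw2⟩ := hL _ Ω (fun i => upp (j + 1) (D i)) (fun i hi => upp_mem (hD i hi))
  obtain ⟨f, S, hf, hS, hdet, hcost⟩ := (bg_lay n j).core Ω (fun i => shad j (D i))
    (fun i _ => Finset.filter_subset _ _) hp0 hp1 hlam hψ0 hba hab hψ hr hq hq0 H1 H2
  set θ := Real.exp (-lam) with hθ
  set E0 := lay n (j + 1) ∪ lay n j with hE0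
  have hshY : ∀ D : Finset (Finset (Fin n)), shad j D ⊆ lay n j := fun D => Finset.filter_subset _ _
  have hfilS : ∀ D ∈ UF n j, D.filter (fun x => x.card = j + 1) ⊆ S (shad j D) := by
    intro D _
    refine subset_trans ?_ (hS (shad j D) (hshY D))
    intro x hx
    rw [Finset.mem_filter] at hx
    rw [cl, Finset.mem_filter]
    refine ⟨mem_lay.2 hx.2, fun y hy => ?_⟩
    rw [mem_ldn] at hy
    exact mem_shad.2 ⟨hy.2, x, hx.1, hy.1⟩
  have hsubS : ∀ D ∈ UF n j, shad (j + 1) (upp (j + 1) D) ⊆ S (shad j D) := by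
    intro D hD
    refine subset_trans ?_ (hfilS D hD)
    intro y hy
    rw [mem_shad] at hy
    obtain ⟨hy, x, hx, hyx⟩ := hy
    rw [Finset.mem_filter]
    exact ⟨(mem_UF.1 hD x (Finset.mem_filter.1 hx).1).2 y hyx (by omega), hy⟩
  set v : Finset (Finset (Fin n)) → ℝ := fun E => w' (upp (j + 1) E) *
      (1 / 2 : ℝ) ^ ((S (shad j E)).card - (shad (j + 1) (upp (j + 1) E)).card) with hv
  have hvpos : ∀ E ∈ UF n j, 0 < v E := fun E hE =>
    mul_pos (hw0 _ (upp_mem hE)) (by positivity)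
  have hkr := kraft_tuple (UF n j) (fun E => f (shad j E)) E0
    (fun E _ t => hf _ (hshY E) t) v (by
      intro Z
      rcases ((UF n j).filter (fun E => f (shad j E) = Z)).eq_empty_or_nonempty with he | ⟨D0, hD0⟩
      · rw [he]; simp
      · have hSeq : ∀ E ∈ (UF n j).filter (fun E => f (shad j E) = Z),
            S (shad j E) = S (shad j D0) := by
          intro E hE
          apply hdet _ (hshY E) _ (hshY D0)
          rw [(Finset.mem_filter.1 hE).2, (Finset.mem_filter.1 hD0).2]
        have := fiber_bound w' hw0 hw1 ((UF n j).filter (fun E => f (shad j E) = Z))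
          (Finset.filter_subset _ _) (S (shad j D0)) (fun E hE => by
            rw [← hSeq E hE]; exact hfilS E (Finset.mem_filter.1 hE).1)
        refine le_trans (le_of_eq (Finset.sum_congr rfl (fun E hE => ?_))) this
        simp only [hv, hSeq E hE]) θ (Real.exp_pos _).le
  refine ⟨fun E => (θ ^ (∑ t, (f (shad j E) t).card) * v E) * Real.exp (-(5 * θ * E0.card)),
    fun E hE => ?_, ?_, ?_⟩
  · have := hvpos E hE
    have := Real.exp_pos (-lam)
    positivity
  · rw [← Finset.sum_mul]
    calc _ ≤ Real.exp (5 * θ * E0.card) * Real.exp (-(5 * θ * E0.card)) :=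
        mul_le_mul_of_nonneg_right hkr (Real.exp_pos _).le
      _ = 1 := by rw [← Real.exp_add]; simp
  · have hlog : ∀ i ∈ Ω, -Real.log ((θ ^ (∑ t, (f (shad j (D i)) t).card) * v (D i)) *
        Real.exp (-(5 * θ * E0.card))) =
        (lam * ∑ t, ((f (shad j (D i)) t).card : ℝ) + Real.log 2 * (S (shad j (D i))).card)
        + -Real.log (w' (upp (j + 1) (D i)))
        - Real.log 2 * (shad (j + 1) (upp (j + 1) (D i))).card + 5 * θ * E0.card := by
      intro i hi
      have h1 := hvpos _ (hD i hi)
      have h2 := Real.exp_pos (-lam)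
      have h3 := hw0 _ (upp_mem (hD i hi))
      rw [Real.log_mul (by positivity) (by positivity), Real.log_mul (by positivity) h1.ne',
        Real.log_exp, Real.log_pow, Real.log_exp, hv]
      simp only
      rw [Real.log_mul h3.ne' (by positivity), Real.log_pow, one_div, Real.log_inv,
        Nat.cast_sub (Finset.card_le_card (hsubS _ (hD i hi)))]
      push_cast
      ring
    rw [Finset.sum_congr rfl hlog, Finset.sum_add_distrib, Finset.sum_sub_distrib,
      Finset.sum_add_distrib]
    have hE0c : (E0.card : ℝ) ≤ n.choose (j + 1) + n.choose j := by
      have := Finset.card_union_le (lay n (j + 1)) (lay n j)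
      rw [card_lay, card_lay] at this
      exact_mod_cast this
    have h5 : ∑ i ∈ Ω, Real.log 2 * ((shad (j + 1) (upp (j + 1) (D i))).card : ℝ) =
      Real.log 2 * ∑ i ∈ Ω, ((shad (j + 1) (upp (j + 1) (D i))).card : ℝ) := by
      rw [Finset.mul_sum]
    rw [h5, Finset.sum_const, nsmul_eq_mul]
    have h6 : Real.log 2 * (1 - 1 / (2 * ((j + 1 + 1 : ℕ) : ℝ))) *
        ∑ i ∈ Ω, ((shad (j + 1) (upp (j + 1) (D i))).card : ℝ) ≤
        Real.log 2 * ∑ i ∈ Ω, ((shad (j + 1) (upp (j + 1) (D i))).card : ℝ) := by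
      have h61 : 0 ≤ ∑ i ∈ Ω, ((shad (j + 1) (upp (j + 1) (D i))).card : ℝ) :=
        Finset.sum_nonneg (fun _ _ => by positivity)
      have h62 : 0 ≤ Real.log 2 := Real.log_nonneg (by norm_num)
      have h63 : 0 ≤ 1 / (2 * ((j + 1 + 1 : ℕ) : ℝ)) := by positivity
      have := mul_nonneg (mul_nonneg h62 h63) h61
      linarith
    have h7 : (Ω.card : ℝ) * (5 * θ * E0.card) ≤
        Ω.card * (5 * θ * (n.choose (j + 1) + n.choose j)) := by
      have := Real.exp_pos (-lam)
      gcongr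
    have h8 := hcost
    linarith
end UC

namespace UC

/-- low part -/
def lw {n : ℕ} (k : ℕ) (Δ : Finset (Finset (Fin n))) : Finset (Finset (Fin n)) :=
  Finset.univ.filter (fun x => k < x.card ∧ xᶜ.Nonempty ∧ xᶜ ∉ Δ)

def nlow {n : ℕ} (k : ℕ) (Δ : Finset (Finset (Fin n))) : Finset (Finset (Fin n)) :=
  (lay n k).filter (fun y => yᶜ ∈ shad k (lw k Δ))

def nf {n : ℕ} (k : ℕ) (Δ : Finset (Finset (Fin n))) : Finset (Finset (Fin n)) :=
  shad k (upp k Δ) ∪ nlow k Δ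

def fr {n : ℕ} (k : ℕ) (Δ : Finset (Finset (Fin n))) : Finset (Finset (Fin n)) :=
  lay n k \ nf k Δ

theorem mem_allC {n : ℕ} {Δ : Finset (Finset (Fin n))} : Δ ∈ allComplexes n ↔ IsComplex Δ := by
  simp [allComplexes]

theorem cardc {k : ℕ} (x : Finset (Fin (2 * k))) : xᶜ.card + x.card = 2 * k := by
  have := Finset.card_compl_add_card x
  simp

theorem mem_lw {n k : ℕ} {Δ : Finset (Finset (Fin n))} {x : Finset (Fin n)} :
    x ∈ lw k Δ ↔ k < x.card ∧ xᶜ.Nonempty ∧ xᶜ ∉ Δ := by simp [lw]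

theorem mem_upp {n k : ℕ} {Δ : Finset (Finset (Fin n))} {x : Finset (Fin n)} :
    x ∈ upp k Δ ↔ x ∈ Δ ∧ k < x.card := by simp [upp]

theorem mem_nlow {k : ℕ} {Δ : Finset (Finset (Fin (2 * k)))} {y : Finset (Fin (2 * k))} :
    y ∈ nlow k Δ ↔ y.card = k ∧ ∃ z ⊆ y, z.card < k ∧ z.Nonempty ∧ z ∉ Δ := by
  simp only [nlow, Finset.mem_filter, mem_lay, mem_shad, mem_lw]
  constructor
  · rintro ⟨h1, h2, x, ⟨hx1, hx2, hx3⟩, hx4⟩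
    refine ⟨h1, xᶜ, ?_, ?_, hx2, hx3⟩
    · exact compl_le_iff_compl_le.1 hx4
    · have := cardc x; omega
  · rintro ⟨h1, z, hz, hz1, hz2, hz3⟩
    refine ⟨h1, ?_, zᶜ, ⟨?_, ?_, ?_⟩, ?_⟩
    · have := cardc y; omega
    · have := cardc z; omega
    · simpa using hz2
    · simpa using hz3
    · exact Finset.compl_subset_compl.2 hz

theorem upp_UF {n k : ℕ} {Δ : Finset (Finset (Fin n))} (h : IsComplex Δ) : upp k Δ ∈ UF n k := by
  rw [mem_UF]
  intro x hx
  rw [mem_upp] at hx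
  refine ⟨hx.2, fun y hy hk => mem_upp.2 ⟨h.2 x hx.1 y ?_ hy, hk⟩⟩
  rw [← Finset.card_pos]; omega

theorem lw_UF {n k : ℕ} {Δ : Finset (Finset (Fin n))} (h : IsComplex Δ) : lw k Δ ∈ UF n k := by
  rw [mem_UF]
  intro x hx
  rw [mem_lw] at hx
  refine ⟨hx.1, fun y hy hk => mem_lw.2 ⟨hk, ?_, ?_⟩⟩
  · exact hx.2.1.mono (Finset.compl_subset_compl.2 hy)
  · exact fun hc => hx.2.2 (h.2 _ hc _ hx.2.1 (Finset.compl_subset_compl.2 hy))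

theorem shad_sub {n k : ℕ} (hk : 1 ≤ k) {Δ : Finset (Finset (Fin n))} (h : IsComplex Δ) :
    shad k (upp k Δ) ⊆ Δ := by
  intro y hy
  obtain ⟨h1, x, hx, hyx⟩ := mem_shad.1 hy
  refine h.2 x (mem_upp.1 hx).1 y ?_ hyx
  rw [← Finset.card_pos]; omega

theorem nlow_disj {k : ℕ} {Δ : Finset (Finset (Fin (2 * k)))} (h : IsComplex Δ)
    {y : Finset (Fin (2 * k))} (hy : y ∈ nlow k Δ) : y ∉ Δ := by
  obtain ⟨h1, z, hz, hz1, hz2, hz3⟩ := mem_nlow.1 hy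
  exact fun hc => hz3 (h.2 y hc z hz2 hz)

theorem card_nlow {k : ℕ} (Δ : Finset (Finset (Fin (2 * k)))) :
    (nlow k Δ).card = (shad k (lw k Δ)).card := by
  refine Finset.card_bij (fun y _ => yᶜ) ?_ ?_ ?_
  · intro y hy; exact (Finset.mem_filter.1 hy).2
  · intro a _ b _ hab; exact compl_injective hab
  · intro b hb
    refine ⟨bᶜ, ?_, compl_compl b⟩
    rw [nlow, Finset.mem_filter, compl_compl, mem_lay]
    have := (mem_shad.1 hb).1
    have := cardc b
    exact ⟨by omega, hb⟩

theorem card_nf {k : ℕ} (hk : 1 ≤ k) {Δ : Finset (Finset (Fin (2 * k)))} (h : IsComplex Δ) :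
    (nf k Δ).card = (shad k (upp k Δ)).card + (shad k (lw k Δ)).card := by
  rw [nf, Finset.card_union_of_disjoint, card_nlow]
  rw [Finset.disjoint_left]
  exact fun y h1 h2 => nlow_disj h h2 (shad_sub hk h h1)

theorem nf_sub {k : ℕ} (Δ : Finset (Finset (Fin (2 * k)))) : nf k Δ ⊆ lay (2 * k) k := by
  apply Finset.union_subset <;> exact Finset.filter_subset _ _

theorem card_fr {k : ℕ} (Δ : Finset (Finset (Fin (2 * k)))) :
    (fr k Δ).card + (nf k Δ).card = (2 * k).choose k := by
  rw [fr, Finset.card_sdiff_add_card_eq_card (nf_sub Δ), card_lay]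

/-- class of `Δ` -/
def cls {n : ℕ} (k : ℕ) (Δ : Finset (Finset (Fin n))) : Finset (Finset (Finset (Fin n))) :=
  (allComplexes n).filter (fun Δ' => upp k Δ' = upp k Δ ∧ lw k Δ' = lw k Δ)

theorem fr_congr {n k : ℕ} {Δ Δ' : Finset (Finset (Fin n))} (h1 : upp k Δ' = upp k Δ)
    (h2 : lw k Δ' = lw k Δ) : fr k Δ' = fr k Δ := by
  simp only [fr, nf, nlow, h1, h2]

def glue {n : ℕ} (k : ℕ) (Δ B : Finset (Finset (Fin n))) : Finset (Finset (Fin n)) :=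
  (Δ \ fr k Δ) ∪ B

theorem fr_card {n k : ℕ} {Δ : Finset (Finset (Fin n))} {x} (hx : x ∈ fr k Δ) : x.card = k :=
  mem_lay.1 (Finset.mem_sdiff.1 hx).1

theorem mem_glue_ne {n k : ℕ} {Δ B : Finset (Finset (Fin n))} (hB : B ⊆ fr k Δ)
    {x : Finset (Fin n)} (hx : x.card ≠ k) : x ∈ glue k Δ B ↔ x ∈ Δ := by
  rw [glue, Finset.mem_union, Finset.mem_sdiff]
  have h1 : x ∉ fr k Δ := fun h => hx (fr_card h)
  have h2 : x ∉ B := fun h => h1 (hB h)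
  tauto

theorem cls_eq {k : ℕ} (hk : 1 ≤ k) {Δ : Finset (Finset (Fin (2 * k)))} (h : IsComplex Δ) :
    cls k Δ = (fr k Δ).powerset.image (glue k Δ) := by
  ext Δ'
  simp only [cls, Finset.mem_filter, mem_allC, Finset.mem_image, Finset.mem_powerset]
  constructor
  · rintro ⟨hc, h1, h2⟩
    refine ⟨Δ' ∩ fr k Δ, Finset.inter_subset_right, ?_⟩
    ext x
    rw [glue, Finset.mem_union, Finset.mem_sdiff, Finset.mem_inter]
    by_cases hf : x ∈ fr k Δ
    · tauto
    · have key : x ∈ Δ ↔ x ∈ Δ' := by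
        rcases lt_trichotomy x.card k with hlt | heq | hgt
        · rcases x.eq_empty_or_nonempty with rfl | hne
          · exact ⟨fun hx => absurd (h.1 _ hx) (by simp), fun hx => absurd (hc.1 _ hx) (by simp)⟩
          · have h3 : xᶜ ∈ lw k Δ' ↔ xᶜ ∈ lw k Δ := by rw [h2]
            rw [mem_lw, mem_lw, compl_compl] at h3
            have := cardc x
            have h4 : k < xᶜ.card := by omega
            tauto
        · have hn : x ∈ nf k Δ := by
            by_contra hn
            exact hf (Finset.mem_sdiff.2 ⟨mem_lay.2 heq, hn⟩)
          rcases Finset.mem_union.1 hn with hn | hn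
          · refine ⟨fun _ => shad_sub hk hc (by rwa [h1]), fun _ => shad_sub hk h hn⟩
          · have hn' : x ∈ nlow k Δ' := by rwa [nlow, h2]
            exact ⟨fun hx => absurd hx (nlow_disj h hn), fun hx => absurd hx (nlow_disj hc hn')⟩
        · have h3 : x ∈ upp k Δ' ↔ x ∈ upp k Δ := by rw [h1]
          rw [mem_upp, mem_upp] at h3
          tauto
      tauto
  · rintro ⟨B, hB, rfl⟩
    have hin : ∀ y, y ∈ Δ → y ∉ fr k Δ → y ∈ glue k Δ B := fun y h1 h2 =>
      Finset.mem_union_left _ (Finset.mem_sdiff.2 ⟨h1, h2⟩)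
    refine ⟨⟨?_, ?_⟩, ?_, ?_⟩
    · intro x hx
      rcases Finset.mem_union.1 hx with hx | hx
      · exact h.1 x (Finset.mem_sdiff.1 hx).1
      · rw [← Finset.card_pos, fr_card (hB hx)]; omega
    · intro x hx y hy hyx
      by_cases hxy : y = x
      · rwa [hxy]
      have hlt : y.card < x.card := Finset.card_lt_card ⟨hyx, fun h => hxy (hyx.antisymm h)⟩
      rcases Finset.mem_union.1 hx with hx | hx
      · have hxΔ := (Finset.mem_sdiff.1 hx).1
        have hyΔ := h.2 x hxΔ y hy hyx
        refine hin y hyΔ (fun hf => ?_)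
        have := fr_card hf
        refine (Finset.mem_sdiff.1 hf).2 (Finset.mem_union_left _ ?_)
        exact mem_shad.2 ⟨this, x, mem_upp.2 ⟨hxΔ, by omega⟩, hyx⟩
      · have hxk := fr_card (hB hx)
        rw [mem_glue_ne hB (by omega)]
        by_contra hyΔ
        refine (Finset.mem_sdiff.1 (hB hx)).2 (Finset.mem_union_right _ ?_)
        exact mem_nlow.2 ⟨hxk, y, hyx, by omega, hy, hyΔ⟩
    · ext x
      rw [mem_upp, mem_upp]
      constructor
      · rintro ⟨h1, h2⟩; exact ⟨(mem_glue_ne hB (by omega)).1 h1, h2⟩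
      · rintro ⟨h1, h2⟩; exact ⟨(mem_glue_ne hB (by omega)).2 h1, h2⟩
    · ext x
      rw [mem_lw, mem_lw]
      have := cardc x
      constructor
      · rintro ⟨h1, h2, h3⟩; exact ⟨h1, h2, fun hh => h3 ((mem_glue_ne hB (by omega)).2 hh)⟩
      · rintro ⟨h1, h2, h3⟩; exact ⟨h1, h2, fun hh => h3 ((mem_glue_ne hB (by omega)).1 hh)⟩

theorem glue_inter {n k : ℕ} {Δ B : Finset (Finset (Fin n))} (hB : B ⊆ fr k Δ) :
    glue k Δ B ∩ fr k Δ = B := by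
  ext x
  rw [glue, Finset.mem_inter, Finset.mem_union, Finset.mem_sdiff]
  have := @hB x
  tauto

theorem glue_inj {n k : ℕ} (Δ : Finset (Finset (Fin n))) :
    Set.InjOn (glue k Δ) ((fr k Δ).powerset : Set (Finset (Finset (Fin n)))) := by
  intro B hB B' hB' heq
  rw [Finset.mem_coe, Finset.mem_powerset] at hB hB'
  rw [← glue_inter hB, ← glue_inter hB', heq]

theorem card_cls {k : ℕ} (hk : 1 ≤ k) {Δ : Finset (Finset (Fin (2 * k)))} (h : IsComplex Δ) :
    (cls k Δ).card = 2 ^ (fr k Δ).card := by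
  rw [cls_eq hk h, Finset.card_image_of_injOn (glue_inj Δ), Finset.card_powerset]

theorem card_allC_ge {k : ℕ} (hk : 1 ≤ k) :
    2 ^ ((2 * k).choose k) ≤ (allComplexes (2 * k)).card := by
  set Δ0 : Finset (Finset (Fin (2 * k))) :=
    Finset.univ.filter (fun x => x.Nonempty ∧ x.card ≤ k) with h0
  have hm : ∀ x, x ∈ Δ0 ↔ x.Nonempty ∧ x.card ≤ k := by intro x; simp [h0]
  have hC : IsComplex Δ0 := by
    refine ⟨fun x hx => ((hm x).1 hx).1, fun x hx y hy hyx => (hm y).2 ⟨hy, ?_⟩⟩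
    exact (Finset.card_le_card hyx).trans ((hm x).1 hx).2
  have h1 : upp k Δ0 = ∅ := by
    rw [Finset.eq_empty_iff_forall_notMem]
    intro x hx
    rw [mem_upp, hm] at hx
    omega
  have h2 : lw k Δ0 = ∅ := by
    rw [Finset.eq_empty_iff_forall_notMem]
    intro x hx
    rw [mem_lw, hm] at hx
    have := cardc x
    exact hx.2.2 ⟨hx.2.1, by omega⟩
  have h3 : (nf k Δ0).card = 0 := by
    rw [card_nf hk hC, h1, h2]
    simp [shad]
  have h4 := card_fr Δ0
  rw [h3, add_zero] at h4
  rw [← h4, ← card_cls hk hC]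
  exact Finset.card_le_card (Finset.filter_subset _ _)

theorem weight_sum {k : ℕ} (hk : 1 ≤ k) (w1 w2 : Finset (Finset (Fin (2 * k))) → ℝ)
    (h1 : ∀ E ∈ UF (2 * k) k, 0 < w1 E) (h1' : ∑ E ∈ UF (2 * k) k, w1 E ≤ 1)
    (h2 : ∀ E ∈ UF (2 * k) k, 0 < w2 E) (h2' : ∑ E ∈ UF (2 * k) k, w2 E ≤ 1) :
    ∑ Δ ∈ allComplexes (2 * k), w1 (upp k Δ) * w2 (lw k Δ) * (1 / 2 : ℝ) ^ (fr k Δ).card ≤ 1 := by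
  have hmaps : ∀ Δ ∈ allComplexes (2 * k), (upp k Δ, lw k Δ) ∈ UF (2 * k) k ×ˢ UF (2 * k) k :=
    fun Δ hΔ => Finset.mem_product.2 ⟨upp_UF (mem_allC.1 hΔ), lw_UF (mem_allC.1 hΔ)⟩
  rw [← Finset.sum_fiberwise_of_maps_to hmaps]
  have key : ∀ P ∈ UF (2 * k) k ×ˢ UF (2 * k) k,
      ∑ Δ ∈ (allComplexes (2 * k)).filter (fun Δ => (upp k Δ, lw k Δ) = P),
        w1 (upp k Δ) * w2 (lw k Δ) * (1 / 2 : ℝ) ^ (fr k Δ).card ≤ w1 P.1 * w2 P.2 := by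
    intro P hP
    rw [Finset.mem_product] at hP
    have hpos := mul_pos (h1 _ hP.1) (h2 _ hP.2)
    rcases ((allComplexes (2 * k)).filter
      (fun Δ => (upp k Δ, lw k Δ) = P)).eq_empty_or_nonempty with he | ⟨Δ0, hΔ0⟩
    · rw [he, Finset.sum_empty]; exact hpos.le
    · obtain ⟨hΔ, hP0⟩ := Finset.mem_filter.1 hΔ0
      have hcls : (allComplexes (2 * k)).filter (fun Δ => (upp k Δ, lw k Δ) = P) = cls k Δ0 := by
        rw [cls, ← hP0]
        simp only [Prod.mk.injEq]
      rw [hcls]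
      have : ∀ Δ ∈ cls k Δ0, w1 (upp k Δ) * w2 (lw k Δ) * (1 / 2 : ℝ) ^ (fr k Δ).card =
          w1 P.1 * w2 P.2 * (1 / 2 : ℝ) ^ (fr k Δ0).card := by
        intro Δ hΔ
        obtain ⟨_, e1, e2⟩ := Finset.mem_filter.1 hΔ
        rw [fr_congr e1 e2, e1, e2, ← hP0]
      rw [Finset.sum_congr rfl this, Finset.sum_const, card_cls hk (mem_allC.1 hΔ), nsmul_eq_mul]
      push_cast
      have e : (2 : ℝ) ^ (fr k Δ0).card * (1 / 2 : ℝ) ^ (fr k Δ0).card = 1 := by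
        rw [← mul_pow]; norm_num
      calc _ = w1 P.1 * w2 P.2 * ((2 : ℝ) ^ (fr k Δ0).card * (1 / 2 : ℝ) ^ (fr k Δ0).card) := by ring
        _ = w1 P.1 * w2 P.2 := by rw [e, mul_one]
        _ ≤ _ := le_rfl
  refine (Finset.sum_le_sum key).trans ?_
  rw [Finset.sum_product' (f := fun a b => w1 a * w2 b), ← Finset.sum_mul_sum]
  have p1 : 0 ≤ ∑ E ∈ UF (2 * k) k, w1 E := Finset.sum_nonneg (fun E hE => (h1 E hE).le)
  have p2 : 0 ≤ ∑ E ∈ UF (2 * k) k, w2 E := Finset.sum_nonneg (fun E hE => (h2 E hE).le)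
  nlinarith

theorem struct_bound {k : ℕ} (hk : 1 ≤ k) {err : ℝ} (hL : Ladder (2 * k) k err) :
    Real.log 2 * (1 / (2 * ((k + 1 : ℕ) : ℝ))) *
      ∑ Δ ∈ allComplexes (2 * k), ((nf k Δ).card : ℝ) ≤
      2 * (allComplexes (2 * k)).card * err := by
  set Ω := allComplexes (2 * k) with hΩ
  obtain ⟨w1, hw1, hw1', hc1⟩ := hL _ Ω (fun Δ => upp k Δ) (fun Δ hΔ => upp_UF (mem_allC.1 hΔ))
  obtain ⟨w2, hw2, hw2', hc2⟩ := hL _ Ω (fun Δ => lw k Δ) (fun Δ hΔ => lw_UF (mem_allC.1 hΔ))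
  have hpos : ∀ Δ ∈ Ω, 0 < w1 (upp k Δ) ∧ 0 < w2 (lw k Δ) := fun Δ hΔ =>
    ⟨hw1 _ (upp_UF (mem_allC.1 hΔ)), hw2 _ (lw_UF (mem_allC.1 hΔ))⟩
  have hcard := card_allC_ge hk
  have hne : Ω.Nonempty := by
    rw [← Finset.card_pos]; exact lt_of_lt_of_le (by positivity) hcard
  have hg := gibbs Ω (fun Δ => w1 (upp k Δ) * w2 (lw k Δ) * (1 / 2 : ℝ) ^ (fr k Δ).card)
    (fun Δ hΔ => mul_pos (mul_pos (hpos Δ hΔ).1 (hpos Δ hΔ).2) (by positivity))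
    (weight_sum hk w1 w2 hw1 hw1' hw2 hw2') hne
  have hlog : (((2 * k).choose k : ℕ) : ℝ) * Real.log 2 ≤ Real.log Ω.card := by
    rw [← Real.log_pow]
    apply Real.log_le_log (by positivity)
    exact_mod_cast hcard
  have hexp : ∀ Δ ∈ Ω, -Real.log (w1 (upp k Δ) * w2 (lw k Δ) * (1 / 2 : ℝ) ^ (fr k Δ).card) =
      -Real.log (w1 (upp k Δ)) + -Real.log (w2 (lw k Δ)) +
      Real.log 2 * ((((2 * k).choose k : ℕ) : ℝ) - (nf k Δ).card) := by
    intro Δ hΔ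
    have h1 := hpos Δ hΔ
    rw [Real.log_mul (mul_pos h1.1 h1.2).ne' (by positivity), Real.log_mul h1.1.ne' h1.2.ne',
      Real.log_pow, one_div, Real.log_inv, ← card_fr Δ]
    push_cast; ring
  have hsum : ∑ Δ ∈ Ω, ((nf k Δ).card : ℝ) = ∑ Δ ∈ Ω, ((shad k (upp k Δ)).card : ℝ) +
      ∑ Δ ∈ Ω, ((shad k (lw k Δ)).card : ℝ) := by
    rw [← Finset.sum_add_distrib]
    refine Finset.sum_congr rfl (fun Δ hΔ => ?_)
    rw [card_nf hk (mem_allC.1 hΔ)]; push_cast; rfl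
  rw [Finset.sum_congr rfl hexp, Finset.sum_add_distrib, Finset.sum_add_distrib, ← Finset.mul_sum,
    Finset.sum_sub_distrib, Finset.sum_const, nsmul_eq_mul] at hg
  have hO : (0 : ℝ) ≤ Ω.card := by positivity
  have h5 := mul_le_mul_of_nonneg_left hlog hO
  rw [hsum] at hg ⊢
  linarith
end UC

namespace UC

theorem Ladder.mono {n j : ℕ} {e1 e2 : ℝ} (h : Ladder n j e1) (he : e1 ≤ e2) : Ladder n j e2 := by
  intro ι Ω D hD
  obtain ⟨w, h1, h2, h3⟩ := h ι Ω D hD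
  refine ⟨w, h1, h2, h3.trans ?_⟩
  gcongr

theorem tail_bound (k j0 : ℕ) (hj : 3 * k ≤ 2 * j0) :
    ((Finset.univ.filter (fun x : Finset (Fin (2 * k)) => j0 < x.card)).card : ℝ) ≤
      (25 / 8 : ℝ) ^ k := by
  have h1 : ∑ x : Finset (Fin (2 * k)), (4 : ℝ) ^ x.card = 5 ^ (2 * k) := by
    have := Finset.sum_pow_mul_eq_add_pow (4 : ℝ) 1 (Finset.univ : Finset (Fin (2 * k)))
    simp only [one_pow, mul_one, Finset.powerset_univ, Finset.card_univ, Fintype.card_fin] at this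
    rw [this]; norm_num
  have h2 : ∑ x ∈ Finset.univ.filter (fun x : Finset (Fin (2 * k)) => j0 < x.card), (8 : ℝ) ^ k ≤
      ∑ x : Finset (Fin (2 * k)), (4 : ℝ) ^ x.card := by
    refine le_trans (Finset.sum_le_sum (g := fun x => (4 : ℝ) ^ x.card) ?_) ?_
    · intro x hx
      have hx := (Finset.mem_filter.1 hx).2
      have e1 : (8 : ℝ) ^ k = 2 ^ (3 * k) := by rw [pow_mul]; norm_num
      have e2 : (4 : ℝ) ^ x.card = 2 ^ (2 * x.card) := by rw [pow_mul]; norm_num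
      rw [e1, e2]
      exact pow_le_pow_right₀ (by norm_num) (by omega)
    · exact Finset.sum_le_sum_of_subset_of_nonneg (Finset.filter_subset _ _)
        (fun _ _ _ => by positivity)
  rw [h1, Finset.sum_const, nsmul_eq_mul, pow_mul] at h2
  rw [div_pow, le_div_iff₀ (by positivity)]
  norm_num at h2 ⊢
  exact h2

theorem ladder_chain {k : ℕ} {p q lam : ℝ} {ψ r : ℕ} (hk : 1 ≤ k)
    (hp0 : 0 ≤ p) (hp1 : p ≤ 1) (hlam : 1 ≤ lam) (hψ0 : 0 < ψ)
    (hψ : 8 * ψ ≤ k) (hr : 4 * r ≤ k * k) (hq : (1 - p) ^ r ≤ q) (hq0 : 0 ≤ q)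
    (H1 : (2 * k : ℝ) * lam * p + (2 * k : ℝ) * lam * q / ψ ≤ 1 / 4)
    (H2 : (2 * k : ℝ) * lam * p + 10 * lam / ψ + 2 * ψ / (k : ℝ) ≤ 1 / (64 * lam)) :
    Ladder (2 * k) k ((25 / 8 : ℝ) ^ k + k * (10 * Real.exp (-lam) * ((2 * k).choose k : ℕ))) := by
  set N : ℝ := (((2 * k).choose k : ℕ) : ℝ) with hN
  have hkR : (1 : ℝ) ≤ k := by exact_mod_cast hk
  have hlog2 : Real.log 2 ≤ 1 := by linarith [Real.log_two_lt_d9]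
  have main : ∀ d, d ≤ (k + 1) / 2 → Ladder (2 * k) (k + (k + 1) / 2 - d)
      ((25 / 8 : ℝ) ^ k + d * (10 * Real.exp (-lam) * N)) := by
    intro d
    induction d with
    | zero =>
      intro _
      refine (ladder_base (2 * k) _).mono ?_
      have h1 := tail_bound k (k + (k + 1) / 2 - 0) (by omega)
      have h2 : 0 ≤ Real.log 2 := Real.log_nonneg (by norm_num)
      have h3 : (0 : ℝ) ≤ ((Finset.univ.filter
        (fun x : Finset (Fin (2 * k)) => k + (k + 1) / 2 - 0 < x.card)).card : ℝ) := by positivity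
      push_cast
      nlinarith
    | succ d ih =>
      intro hd
      have ih := ih (by omega)
      obtain ⟨j, hj⟩ : ∃ j, j = k + (k + 1) / 2 - (d + 1) := ⟨_, rfl⟩
      rw [show k + (k + 1) / 2 - d = j + 1 by omega] at ih
      rw [← hj]
      have hjk : k ≤ j := by omega
      have hj2 : 2 * j ≤ 3 * k := by omega
      have hjR : (k : ℝ) ≤ ((j + 1 : ℕ) : ℝ) := by exact_mod_cast (by omega)
      have hjR2 : ((j + 1 : ℕ) : ℝ) ≤ 2 * k := by exact_mod_cast (by omega)
      have hst := ladder_step (p := p) (q := q) (lam := lam) (ψ := ψ) (r := r) ih hp0 hp1 hlam hψ0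
        (by omega) (by omega) (by omega)
        (by
          have e : j + 1 - 1 = j := by omega
          rw [e]
          have h2 : k ≤ 2 * (2 * k - j) := by omega
          have := Nat.mul_le_mul h2 hjk
          have e2 : 2 * (2 * k - j) * j = 2 * ((2 * k - j) * j) := by ring
          omega) hq hq0
        (by
          refine le_trans ?_ H1
          gcongr)
        (by
          refine le_trans ?_ H2
          gcongr)
      refine hst.mono ?_
      have c1 : (((2 * k).choose (j + 1) : ℕ) : ℝ) ≤ N := by
        rw [hN]; exact_mod_cast (Nat.choose_le_centralBinom (j + 1) k)
      have c2 : (((2 * k).choose j : ℕ) : ℝ) ≤ N := by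
        rw [hN]; exact_mod_cast (Nat.choose_le_centralBinom j k)
      have hθ := Real.exp_pos (-lam)
      have : 5 * Real.exp (-lam) * ((((2 * k).choose (j + 1) : ℕ) : ℝ) + ((2 * k).choose j : ℕ)) ≤
          5 * Real.exp (-lam) * (N + N) := by gcongr
      push_cast
      linarith
  have := main ((k + 1) / 2) le_rfl
  rw [Nat.add_sub_cancel] at this
  refine this.mono ?_
  have h1 : (((k + 1) / 2 : ℕ) : ℝ) ≤ k := by exact_mod_cast (by omega)
  have h2 := Real.exp_pos (-lam)
  gcongr

theorem params {s : ℝ} {k : ℕ} (hs : 1000000 ≤ s) (hks : (k : ℝ) = s ^ 6)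
    (hlog : Real.log k ≤ s) :
    Ladder (2 * k) k ((25 / 8 : ℝ) ^ k + k * (10 * (1 / (k : ℝ) ^ 12) * ((2 * k).choose k : ℕ))) := by
  have hs0 : 0 < s := by linarith
  have hs1 : 1 ≤ s := by linarith
  have hkR : (1000000 : ℝ) ≤ k := by
    rw [hks]
    calc (1000000 : ℝ) ≤ s := hs
      _ = s ^ 1 := by ring
      _ ≤ s ^ 6 := pow_le_pow_right₀ hs1 (by norm_num)
  have hk0 : (0 : ℝ) < k := by linarith
  have hkn : 1000000 ≤ k := by exact_mod_cast hkR
  have hl1 : 1 ≤ Real.log k := by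
    rw [Real.le_log_iff_exp_le hk0]
    linarith [Real.exp_one_lt_d9]
  set l := Real.log k with hl
  have hθ : Real.exp (-(12 * l)) = 1 / (k : ℝ) ^ 12 := by
    have e : 12 * l = Real.log ((k : ℝ) ^ 12) := by rw [Real.log_pow, hl]; norm_num
    rw [e, Real.exp_neg, one_div, Real.exp_log (by positivity)]
  set ψ := Nat.sqrt k with hψd
  have hψ1 : (ψ : ℝ) ≤ s ^ 3 := by
    have : ψ * ψ ≤ k := Nat.sqrt_le k
    have : (ψ : ℝ) * ψ ≤ s ^ 6 := by rw [← hks]; exact_mod_cast this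
    refine abs_le_of_sq_le_sq' (by nlinarith) (by positivity) |>.2
  have hψ2 : s ^ 3 ≤ 2 * ψ := by
    have : k < (ψ + 1) * (ψ + 1) := Nat.lt_succ_sqrt k
    have h1 : s ^ 6 < ((ψ : ℝ) + 1) * (ψ + 1) := by rw [← hks]; exact_mod_cast this
    have h2 : s ^ 3 < ψ + 1 := by
      refine lt_of_pow_lt_pow_left₀ 2 (by positivity) ?_
      nlinarith
    have h3 : (2 : ℝ) ≤ s ^ 3 := by
      calc (2 : ℝ) ≤ s ^ 1 := by linarith
        _ ≤ s ^ 3 := pow_le_pow_right₀ hs1 (by norm_num)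
    linarith
  have hψ0 : (0 : ℝ) < ψ := by
    have : 0 < s ^ 3 := by positivity
    linarith
  have e10 : 10 * (12 * l) / ψ ≤ 240 / s ^ 2 := by
    rw [div_le_div_iff₀ hψ0 (by positivity)]
    have : l * s ^ 2 ≤ s * s ^ 2 := by gcongr
    nlinarith
  have ep : (2 * k : ℝ) * (12 * l) * (8 * l / (k : ℝ) ^ 2) ≤ 192 / s ^ 2 := by
    have : (2 * k : ℝ) * (12 * l) * (8 * l / (k : ℝ) ^ 2) = 192 * l ^ 2 / k := by
      field_simp; ring
    rw [this, div_le_div_iff₀ hk0 (by positivity), hks]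
    have h1 : l ^ 2 ≤ s ^ 2 := by gcongr
    have h2 : l ^ 2 * s ^ 2 ≤ s ^ 2 * s ^ 2 := by gcongr
    have h3 : s ^ 4 ≤ s ^ 6 := pow_le_pow_right₀ hs1 (by norm_num)
    nlinarith
  have eψ : 2 * ψ / (k : ℝ) ≤ 2 / s ^ 2 := by
    rw [div_le_div_iff₀ hk0 (by positivity), hks]
    have h2 : (ψ : ℝ) * s ^ 2 ≤ s ^ 3 * s ^ 2 := by gcongr
    have h3 : s ^ 5 ≤ s ^ 6 := pow_le_pow_right₀ hs1 (by norm_num)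
    nlinarith
  have eq1 : (2 * k : ℝ) * (12 * l) * (1 / k) / ψ ≤ 48 / s ^ 2 := by
    have : (2 * k : ℝ) * (12 * l) * (1 / k) = 24 * l := by field_simp; ring
    rw [this, div_le_div_iff₀ hψ0 (by positivity)]
    have : l * s ^ 2 ≤ s * s ^ 2 := by gcongr
    nlinarith
  have hs2 : 1000000 * s ≤ s ^ 2 := by nlinarith
  rw [← hθ]
  refine ladder_chain (k := k) (lam := 12 * l) (p := 8 * l / (k : ℝ) ^ 2) (q := 1 / k) (ψ := ψ) (r := k * k / 4)
    (by omega) (by positivity) ?_ (by linarith) (by exact_mod_cast hψ0) ?_ (by omega) ?_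
    (by positivity) ?_ ?_
  · rw [div_le_one (by positivity)]
    have : l ≤ k := (Real.log_le_sub_one_of_pos hk0).trans (by linarith)
    nlinarith
  · have h1 : ψ * ψ ≤ k := Nat.sqrt_le k
    have h2 : 8 ≤ ψ := Nat.le_sqrt.2 (by omega)
    nlinarith
  · set p := 8 * l / (k : ℝ) ^ 2 with hp
    have hp1 : p ≤ 1 := by
      rw [hp, div_le_one (by positivity)]
      have : l ≤ k := (Real.log_le_sub_one_of_pos hk0).trans (by linarith)
      nlinarith
    have h1 : (1 - p) ^ (k * k / 4) ≤ Real.exp (-p) ^ (k * k / 4) := by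
      apply pow_le_pow_left₀ (by linarith)
      linarith [Real.add_one_le_exp (-p)]
    refine h1.trans ?_
    rw [← Real.exp_nat_mul]
    have h2 : (1 : ℝ) / k = Real.exp (-l) := by rw [Real.exp_neg, hl, Real.exp_log hk0, one_div]
    rw [h2, Real.exp_le_exp]
    have h3 : k * k ≤ 8 * (k * k / 4) := by
      have : 8 ≤ k * k := by nlinarith
      omega
    have h4 : (k : ℝ) * k ≤ 8 * ((k * k / 4 : ℕ) : ℝ) := by exact_mod_cast h3
    have h5 : l ≤ ((k * k / 4 : ℕ) : ℝ) * p := by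
      rw [hp, mul_div_assoc', le_div_iff₀ (by positivity)]
      nlinarith
    linarith
  · have : 240 / s ^ 2 ≤ 1 / 4 := by
      rw [div_le_div_iff₀ (by positivity) (by norm_num)]
      nlinarith
    have e : (192 : ℝ) / s ^ 2 + 48 / s ^ 2 = 240 / s ^ 2 := by ring
    linarith
  · have : 434 / s ^ 2 ≤ 1 / (64 * (12 * l)) := by
      rw [div_le_div_iff₀ (by positivity) (by positivity)]
      nlinarith
    have e : (192 : ℝ) / s ^ 2 + 240 / s ^ 2 + 2 / s ^ 2 = 434 / s ^ 2 := by ring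
    linarith

theorem nf_sum_bound : ∀ᶠ k : ℕ in Filter.atTop,
    ∑ Δ ∈ allComplexes (2 * k), ((nf k Δ).card : ℝ) ≤
      (allComplexes (2 * k)).card * (((2 * k).choose k : ℕ) : ℝ) / (k : ℝ) ^ 8 := by
  have t1 : ∀ᶠ k : ℕ in Filter.atTop, Real.log k ≤ ((k : ℝ)) ^ ((1 : ℝ) / 6) := by
    have := (isLittleO_log_rpow_atTop (show (0 : ℝ) < 1 / 6 by norm_num)).bound
      (show (0 : ℝ) < 1 by norm_num)
    filter_upwards [tendsto_natCast_atTop_atTop.eventually this] with k hk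
    rw [one_mul, Real.norm_eq_abs, Real.norm_eq_abs,
      abs_of_nonneg (Real.rpow_nonneg (Nat.cast_nonneg k) _)] at hk
    exact (le_abs_self _).trans hk
  have t2 : ∀ᶠ k : ℕ in Filter.atTop, (1000000 : ℝ) ≤ ((k : ℝ)) ^ ((1 : ℝ) / 6) :=
    ((tendsto_rpow_atTop (show (0 : ℝ) < 1 / 6 by norm_num)).comp
      tendsto_natCast_atTop_atTop).eventually_ge_atTop _
  have t3 : ∀ᶠ k : ℕ in Filter.atTop, (k : ℝ) ^ 12 * (25 / 32 : ℝ) ^ k ≤ 1 / 2 := by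
    have := tendsto_pow_const_mul_const_pow_of_abs_lt_one 12
      (show |(25 / 32 : ℝ)| < 1 by rw [abs_lt]; norm_num)
    exact (this.eventually (gt_mem_nhds (show (0 : ℝ) < 1 / 2 by norm_num))).mono
      (fun _ h => le_of_lt h)
  filter_upwards [t1, t2, t3, Filter.eventually_ge_atTop 1000] with k h1 h2 h3 h4
  have hkR : (1000 : ℝ) ≤ k := by exact_mod_cast h4
  have hk0 : (0 : ℝ) < k := by linarith
  have hks : (k : ℝ) = ((k : ℝ) ^ ((1 : ℝ) / 6)) ^ 6 := by
    rw [← Real.rpow_natCast, ← Real.rpow_mul hk0.le]; norm_num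
  have hL : Ladder _ _ _ := @params _ _ h2 hks h1
  have hS := struct_bound (by omega) hL
  set N : ℝ := (((2 * k).choose k : ℕ) : ℝ) with hN
  have hN4 : (4 : ℝ) ^ k ≤ 2 * k * N := by
    have := Nat.four_pow_le_two_mul_self_mul_centralBinom k (by omega)
    rw [Nat.centralBinom] at this
    rw [hN]
    exact_mod_cast this
  have hN0 : 0 ≤ N := by positivity
  have htail : (25 / 8 : ℝ) ^ k ≤ N / (k : ℝ) ^ 11 := by
    have e : (25 / 8 : ℝ) ^ k = (25 / 32 : ℝ) ^ k * 4 ^ k := by rw [← mul_pow]; norm_num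
    rw [e, le_div_iff₀ (by positivity)]
    calc (25 / 32 : ℝ) ^ k * 4 ^ k * (k : ℝ) ^ 11 ≤ (25 / 32 : ℝ) ^ k * (2 * k * N) * (k : ℝ) ^ 11 := by
          gcongr
      _ = ((k : ℝ) ^ 12 * (25 / 32 : ℝ) ^ k) * (2 * N) := by ring
      _ ≤ 1 / 2 * (2 * N) := by gcongr
      _ = N := by ring
  have herr : (25 / 8 : ℝ) ^ k + k * (10 * (1 / (k : ℝ) ^ 12) * N) ≤ 11 * N / (k : ℝ) ^ 11 := by
    have e : k * (10 * (1 / (k : ℝ) ^ 12) * N) = 10 * N / (k : ℝ) ^ 11 := by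
      field_simp
    rw [e]
    calc _ ≤ N / (k : ℝ) ^ 11 + 10 * N / (k : ℝ) ^ 11 := by linarith
      _ = _ := by ring
  set S := ∑ Δ ∈ allComplexes (2 * k), ((nf k Δ).card : ℝ) with hSd
  set O : ℝ := ((allComplexes (2 * k)).card : ℝ) with hO
  have hS0 : 0 ≤ S := Finset.sum_nonneg (fun _ _ => Nat.cast_nonneg _)
  have hO0 : 0 ≤ O := Nat.cast_nonneg _
  clear_value O S N
  have hlog2 : 1 / 2 ≤ Real.log 2 := by linarith [Real.log_two_gt_d9]
  have g1 : 1 / 2 * (1 / (4 * (k : ℝ))) * S ≤ 2 * O * (11 * N / (k : ℝ) ^ 11) := by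
    calc _ ≤ Real.log 2 * (1 / (2 * ((k + 1 : ℕ) : ℝ))) * S := by
          have hc : 2 * ((k + 1 : ℕ) : ℝ) ≤ 4 * k := by push_cast; linarith
          have hc2 : 1 / (4 * (k : ℝ)) ≤ 1 / (2 * ((k + 1 : ℕ) : ℝ)) :=
            one_div_le_one_div_of_le (by positivity) hc
          gcongr
      _ ≤ _ := hS
      _ ≤ _ := by gcongr
  have g2 : S ≤ 176 / (k : ℝ) ^ 2 * (O * N / (k : ℝ) ^ 8) := by
    have : S = 8 * k * (1 / 2 * (1 / (4 * (k : ℝ))) * S) := by field_simp; ring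
    rw [this]
    calc _ ≤ 8 * k * (2 * O * (11 * N / (k : ℝ) ^ 11)) := by gcongr
      _ = _ := by field_simp; ring
  refine g2.trans (mul_le_of_le_one_left (by positivity) ?_)
  rw [div_le_one (by positivity)]
  nlinarith
end UC

namespace UC

def star {n : ℕ} (k : ℕ) (x : Finset (Fin n)) : Finset (Finset (Fin n)) :=
  (ldn k x).biUnion (lup k)

theorem mem_star {n k : ℕ} {x x' : Finset (Fin n)} :
    x' ∈ star k x ↔ x'.card = k + 1 ∧ ∃ y, y.card = k ∧ y ⊆ x ∧ y ⊆ x' := by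
  simp only [star, Finset.mem_biUnion, mem_ldn, mem_lup]
  constructor
  · rintro ⟨y, ⟨h1, h2⟩, h3, h4⟩; exact ⟨h3, y, h2, h1, h4⟩
  · rintro ⟨h3, y, h2, h1, h4⟩; exact ⟨y, ⟨h1, h2⟩, h3, h4⟩

theorem card_ldn {n k : ℕ} {x : Finset (Fin n)} (hx : x.card = k + 1) :
    (ldn k x).card = k + 1 := by
  rw [ldn, Finset.card_powersetCard, hx, Nat.choose_succ_self_right]

theorem card_star {k : ℕ} {x : Finset (Fin (2 * k))} (hx : x.card = k + 1) :
    (star k x).card ≤ (k + 1) * k := by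
  rw [← card_ldn hx]
  apply Finset.card_biUnion_le_card_mul
  intro y hy
  rw [card_lup (mem_ldn.1 hy).2]; omega

theorem self_star {n k : ℕ} {x : Finset (Fin n)} (hx : x.card = k + 1) : x ∈ star k x := by
  obtain ⟨y, hy, hc⟩ := Finset.exists_subset_card_eq (show k ≤ x.card by omega)
  exact mem_star.2 ⟨hx, y, hc, hy, hy⟩

theorem card_ldn_union {n k : ℕ} {x x' : Finset (Fin n)} (hx : x.card = k + 1)
    (hx' : x'.card = k + 1) (hne : x' ≠ x) : 2 * k + 1 ≤ (ldn k x ∪ ldn k x').card := by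
  have h := Finset.card_union_add_card_inter (ldn k x) (ldn k x')
  rw [card_ldn hx, card_ldn hx'] at h
  have h1 : (ldn k x ∩ ldn k x').card ≤ 1 := by
    rw [Finset.card_le_one]
    have key : ∀ a ∈ ldn k x ∩ ldn k x', a = x ∩ x' := by
      intro a ha
      rw [Finset.mem_inter, mem_ldn, mem_ldn] at ha
      apply Finset.eq_of_subset_of_card_le (Finset.subset_inter ha.1.1 ha.2.1)
      by_contra hlt
      have e1 : x ∩ x' = x := Finset.eq_of_subset_of_card_le Finset.inter_subset_left (by omega)
      have e2 : x ∩ x' = x' := Finset.eq_of_subset_of_card_le Finset.inter_subset_right (by omega)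
      exact hne (e2.symm.trans e1)
    intro a ha b hb
    rw [key a ha, key b hb]
  omega

theorem card_ldn_union' {n k : ℕ} {x x' : Finset (Fin n)} (hx : x.card = k + 1)
    (hx' : x'.card = k + 1) (hne : x' ∉ star k x) : (ldn k x ∪ ldn k x').card = 2 * k + 2 := by
  rw [Finset.card_union_of_disjoint, card_ldn hx, card_ldn hx']
  · ring
  · rw [Finset.disjoint_left]
    intro a ha ha'
    rw [mem_ldn] at ha ha'
    exact hne (mem_star.2 ⟨hx', a, ha.2, ha.1, ha'.1⟩)

theorem count_sup {n : ℕ} (F E : Finset (Finset (Fin n))) (hE : E ⊆ F) :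
    ∑ B ∈ F.powerset, (if E ⊆ B then (1 : ℝ) else 0) = 2 ^ F.card * (1 / 2 : ℝ) ^ E.card := by
  rw [Finset.sum_boole]
  have h1 : F.powerset.filter (fun B => E ⊆ B) = Finset.Icc E F := by
    ext B
    simp only [Finset.mem_filter, Finset.mem_powerset, Finset.mem_Icc]
    tauto
  rw [h1, Finset.card_Icc_finset hE]
  push_cast
  have h2 := Finset.card_le_card hE
  rw [one_div, inv_pow, pow_sub₀ _ (by norm_num) h2]

def ind {n : ℕ} (k : ℕ) (x : Finset (Fin n)) (B : Finset (Finset (Fin n))) : ℝ :=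
  if ldn k x ⊆ B then 1 else 0

theorem ind_mul {n k : ℕ} (x x' : Finset (Fin n)) (B : Finset (Finset (Fin n))) :
    ind k x B * ind k x' B = if ldn k x ∪ ldn k x' ⊆ B then 1 else 0 := by
  simp only [ind, Finset.union_subset_iff]
  by_cases h1 : ldn k x ⊆ B <;> by_cases h2 : ldn k x' ⊆ B <;> simp [h1, h2]

def YY {n : ℕ} (k : ℕ) (W B : Finset (Finset (Fin n))) : ℝ := ∑ x ∈ W, ind k x B

def JJ {n : ℕ} (k : ℕ) (W B : Finset (Finset (Fin n))) : ℝ :=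
  ∑ x ∈ W, ∑ x' ∈ (star k x).erase x, ind k x B * ind k x' B

theorem sum_YY {k : ℕ} {F W : Finset (Finset (Fin (2 * k)))}
    (hW : ∀ x ∈ W, x.card = k + 1 ∧ ∀ x' ∈ star k x, ldn k x' ⊆ F) : ∑ B ∈ F.powerset, YY k W B = 2 ^ F.card * (W.card * (1 / 2 : ℝ) ^ (k + 1)) := by
  simp only [YY]
  rw [Finset.sum_comm]
  have : ∀ x ∈ W, ∑ B ∈ F.powerset, ind k x B = 2 ^ F.card * (1 / 2 : ℝ) ^ (k + 1) := by
    intro x hx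
    have h := count_sup F (ldn k x) ((hW x hx).2 x (self_star (hW x hx).1))
    rw [card_ldn (hW x hx).1] at h
    exact h
  rw [Finset.sum_congr rfl this, Finset.sum_const, nsmul_eq_mul]; ring

theorem sum_star {k : ℕ} {F W : Finset (Finset (Fin (2 * k)))}
    (hW : ∀ x ∈ W, x.card = k + 1 ∧ ∀ x' ∈ star k x, ldn k x' ⊆ F) : ∀ x ∈ W, ∑ x' ∈ (star k x).erase x, ∑ B ∈ F.powerset, ind k x B * ind k x' B ≤
    2 ^ F.card * (((k + 1) * k : ℝ) * (1 / 2 : ℝ) ^ (2 * k + 1)) := by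
  intro x hx
  obtain ⟨hc, hs⟩ := hW x hx
  have h1 : ∀ x' ∈ (star k x).erase x, ∑ B ∈ F.powerset, ind k x B * ind k x' B ≤
      2 ^ F.card * (1 / 2 : ℝ) ^ (2 * k + 1) := by
    intro x' hx'
    obtain ⟨hne, hx'⟩ := Finset.mem_erase.1 hx'
    simp only [ind_mul]
    rw [count_sup F _ (Finset.union_subset (hs x (self_star hc)) (hs x' hx'))]
    have := card_ldn_union hc (mem_star.1 hx').1 hne
    gcongr ?_ * ?_
    exact pow_le_pow_of_le_one (by norm_num) (by norm_num) this
  refine (Finset.sum_le_card_nsmul _ _ _ h1).trans ?_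
  rw [nsmul_eq_mul]
  have h2 : (((star k x).erase x).card : ℝ) ≤ (k + 1) * k := by
    exact_mod_cast (Finset.card_erase_le).trans (card_star hc)
  calc _ ≤ ((k + 1) * k : ℝ) * (2 ^ F.card * (1 / 2 : ℝ) ^ (2 * k + 1)) := by gcongr
    _ = _ := by ring

theorem sum_JJ {k : ℕ} {F W : Finset (Finset (Fin (2 * k)))}
    (hW : ∀ x ∈ W, x.card = k + 1 ∧ ∀ x' ∈ star k x, ldn k x' ⊆ F) : ∑ B ∈ F.powerset, JJ k W B ≤
    2 ^ F.card * (W.card * (((k + 1) * k : ℝ) * (1 / 2 : ℝ) ^ (2 * k + 1))) := by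
  simp only [JJ]
  rw [Finset.sum_comm]
  have : ∀ x ∈ W, ∑ B ∈ F.powerset, ∑ x' ∈ (star k x).erase x, ind k x B * ind k x' B ≤
      2 ^ F.card * (((k + 1) * k : ℝ) * (1 / 2 : ℝ) ^ (2 * k + 1)) := by
    intro x hx
    rw [Finset.sum_comm]
    exact sum_star hW x hx
  refine (Finset.sum_le_card_nsmul _ _ _ this).trans ?_
  rw [nsmul_eq_mul]
  exact le_of_eq (by ring)

theorem sum_YYsq {k : ℕ} {F W : Finset (Finset (Fin (2 * k)))}
    (hW : ∀ x ∈ W, x.card = k + 1 ∧ ∀ x' ∈ star k x, ldn k x' ⊆ F) : ∑ B ∈ F.powerset, YY k W B ^ 2 ≤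
    2 ^ F.card * (W.card ^ 2 * (1 / 2 : ℝ) ^ (2 * k + 2) + W.card * (1 / 2 : ℝ) ^ (k + 1) +
      W.card * (((k + 1) * k : ℝ) * (1 / 2 : ℝ) ^ (2 * k + 1))) := by
  have h0 : ∀ B, YY k W B ^ 2 = ∑ x ∈ W, ∑ x' ∈ W, ind k x B * ind k x' B := by
    intro B
    rw [sq, YY, Finset.sum_mul_sum]
  simp only [h0]
  rw [Finset.sum_comm]
  have hpos : ∀ x x' : Finset (Fin (2 * k)), 0 ≤ ∑ B ∈ F.powerset, ind k x B * ind k x' B := by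
    intro x x'
    refine Finset.sum_nonneg (fun B _ => ?_)
    rw [ind_mul]; split_ifs <;> norm_num
  have : ∀ x ∈ W, ∑ B ∈ F.powerset, ∑ x' ∈ W, ind k x B * ind k x' B ≤
      2 ^ F.card * (W.card * (1 / 2 : ℝ) ^ (2 * k + 2) + (1 / 2 : ℝ) ^ (k + 1) +
        ((k + 1) * k : ℝ) * (1 / 2 : ℝ) ^ (2 * k + 1)) := by
    intro x hx
    obtain ⟨hc, hs⟩ := hW x hx
    rw [Finset.sum_comm]
    have hb : ∀ x' ∈ W, ∑ B ∈ F.powerset, ind k x B * ind k x' B ≤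
        2 ^ F.card * (1 / 2 : ℝ) ^ (2 * k + 2) +
        (if x' ∈ star k x then ∑ B ∈ F.powerset, ind k x B * ind k x' B else 0) := by
      intro x' hx'
      split_ifs with h
      · have : (0 : ℝ) ≤ 2 ^ F.card * (1 / 2 : ℝ) ^ (2 * k + 2) := by positivity
        linarith
      · simp only [ind_mul]
        obtain ⟨hc', hs'⟩ := hW x' hx'
        rw [count_sup F _ (Finset.union_subset (hs x (self_star hc)) (hs' x' (self_star hc'))),
          card_ldn_union' hc hc' h, add_zero]
    refine (Finset.sum_le_sum hb).trans ?_
    rw [Finset.sum_add_distrib, Finset.sum_const, nsmul_eq_mul, ← Finset.sum_filter]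
    have h3 : ∑ x' ∈ W.filter (fun x' => x' ∈ star k x),
        ∑ B ∈ F.powerset, ind k x B * ind k x' B ≤
        ∑ x' ∈ star k x, ∑ B ∈ F.powerset, ind k x B * ind k x' B := by
      apply Finset.sum_le_sum_of_subset_of_nonneg
      · intro z hz; exact (Finset.mem_filter.1 hz).2
      · intro z _ _; exact hpos x z
    have h4 := Finset.add_sum_erase (star k x)
      (fun x' => ∑ B ∈ F.powerset, ind k x B * ind k x' B) (self_star hc)
    have h5 := sum_star hW x hx
    have h6 : ∑ B ∈ F.powerset, ind k x B * ind k x B = 2 ^ F.card * (1 / 2 : ℝ) ^ (k + 1) := by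
      simp only [ind_mul, Finset.union_self]
      rw [count_sup F _ (hs x (self_star hc)), card_ldn hc]
    rw [h6] at h4
    linarith
  refine (Finset.sum_le_card_nsmul _ _ _ this).trans ?_
  rw [nsmul_eq_mul]
  exact le_of_eq (by ring)

/-- Chebyshev and Markov inside a class. -/
theorem bad_count {k : ℕ} {F W : Finset (Finset (Fin (2 * k)))}
    (hW : ∀ x ∈ W, x.card = k + 1 ∧ ∀ x' ∈ star k x, ldn k x' ⊆ F) {μ δ T : ℝ} (hμ : μ = W.card * (1 / 2 : ℝ) ^ (k + 1)) (hμ0 : 0 < μ) (hδ : 0 < δ)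
    (hT : T ≤ (1 - δ) * μ) :
    ((F.powerset.filter (fun B => YY k W B - JJ k W B < T)).card : ℝ) ≤
      2 ^ F.card * (4 * (1 + (k + 1) * k * (1 / 2 : ℝ) ^ k) / (δ ^ 2 * μ) +
        2 * ((k + 1) * k * (1 / 2 : ℝ) ^ k) / δ) := by
  have hJ0 : ∀ B, 0 ≤ JJ k W B := by
    intro B
    refine Finset.sum_nonneg (fun x _ => Finset.sum_nonneg (fun x' _ => ?_))
    rw [ind_mul]; split_ifs <;> norm_num
  have h1 : ∀ B ∈ F.powerset.filter (fun B => YY k W B - JJ k W B < T),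
      1 ≤ 4 / (δ * μ) ^ 2 * (YY k W B - μ) ^ 2 + 2 / (δ * μ) * JJ k W B := by
    intro B hB
    have hB := (Finset.mem_filter.1 hB).2
    have hJ := hJ0 B
    have hdm : 0 < δ * μ := by positivity
    by_cases hc : δ * μ / 2 ≤ JJ k W B
    · have : 1 ≤ 2 / (δ * μ) * JJ k W B := by
        rw [div_mul_eq_mul_div, le_div_iff₀ hdm]; linarith
      have : 0 ≤ 4 / (δ * μ) ^ 2 * (YY k W B - μ) ^ 2 := by positivity
      linarith
    · push Not at hc
      have h2 : YY k W B - μ < - (δ * μ / 2) := by linarith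
      have h3 : (δ * μ / 2) ^ 2 ≤ (YY k W B - μ) ^ 2 := by nlinarith
      have : 1 ≤ 4 / (δ * μ) ^ 2 * (YY k W B - μ) ^ 2 := by
        rw [div_mul_eq_mul_div, le_div_iff₀ (by positivity)]; nlinarith
      have : 0 ≤ 2 / (δ * μ) * JJ k W B := by positivity
      linarith
  have h2 := Finset.sum_le_sum h1
  rw [Finset.sum_const, nsmul_eq_mul, mul_one] at h2
  have h3 : ∑ B ∈ F.powerset.filter (fun B => YY k W B - JJ k W B < T),
      (4 / (δ * μ) ^ 2 * (YY k W B - μ) ^ 2 + 2 / (δ * μ) * JJ k W B) ≤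
      ∑ B ∈ F.powerset, (4 / (δ * μ) ^ 2 * (YY k W B - μ) ^ 2 + 2 / (δ * μ) * JJ k W B) := by
    refine Finset.sum_le_sum_of_subset_of_nonneg (Finset.filter_subset _ _) (fun B _ _ => ?_)
    have := hJ0 B
    positivity
  refine h2.trans (h3.trans ?_)
  rw [Finset.sum_add_distrib, ← Finset.mul_sum, ← Finset.mul_sum]
  have hv : ∑ B ∈ F.powerset, (YY k W B - μ) ^ 2 ≤
      2 ^ F.card * (μ * (1 + (k + 1) * k * (1 / 2 : ℝ) ^ k)) := by
    have e : ∑ B ∈ F.powerset, (YY k W B - μ) ^ 2 = ∑ B ∈ F.powerset, YY k W B ^ 2 -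
        2 * μ * ∑ B ∈ F.powerset, YY k W B + 2 ^ F.card * μ ^ 2 := by
      rw [Finset.mul_sum, ← Finset.sum_sub_distrib]
      have : (2 : ℝ) ^ F.card * μ ^ 2 = ∑ B ∈ F.powerset, μ ^ 2 := by
        rw [Finset.sum_const, Finset.card_powerset, nsmul_eq_mul]; push_cast; ring
      rw [this, ← Finset.sum_add_distrib]
      exact Finset.sum_congr rfl (fun B _ => by ring)
    rw [e, sum_YY hW, ← hμ]
    have h5 := sum_YYsq hW
    have e2 : (W.card ^ 2 * (1 / 2 : ℝ) ^ (2 * k + 2) + W.card * (1 / 2 : ℝ) ^ (k + 1) +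
      W.card * (((k + 1) * k : ℝ) * (1 / 2 : ℝ) ^ (2 * k + 1))) =
      μ ^ 2 + μ * (1 + (k + 1) * k * (1 / 2 : ℝ) ^ k) := by
      rw [hμ]; ring
    rw [e2] at h5
    nlinarith
  have hj := sum_JJ hW
  have e3 : (W.card * (((k + 1) * k : ℝ) * (1 / 2 : ℝ) ^ (2 * k + 1))) =
      μ * ((k + 1) * k * (1 / 2 : ℝ) ^ k) := by rw [hμ]; ring
  rw [e3] at hj
  calc _ ≤ 4 / (δ * μ) ^ 2 * (2 ^ F.card * (μ * (1 + (k + 1) * k * (1 / 2 : ℝ) ^ k))) +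
        2 / (δ * μ) * (2 ^ F.card * (μ * ((k + 1) * k * (1 / 2 : ℝ) ^ k))) := by gcongr
    _ = _ := by field_simp
end UC

namespace UC

def iso {n : ℕ} (k : ℕ) (Δ : Finset (Finset (Fin n))) : Finset (Finset (Fin n)) :=
  Finset.univ.filter (fun x => IsHole Δ k x ∧
    ∀ x' : Finset (Fin n), IsHole Δ k x' → x' ≠ x → (x ∩ x').card ≠ k)

def good {n : ℕ} (k : ℕ) (Δ : Finset (Finset (Fin n))) : Finset (Finset (Fin n)) :=
  (lay n (k + 1)).filter (fun x => ∀ x' ∈ star k x, ldn k x' ⊆ fr k Δ)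

theorem good_spec {k : ℕ} (Δ : Finset (Finset (Fin (2 * k)))) :
    ∀ x ∈ good k Δ, x.card = k + 1 ∧ ∀ x' ∈ star k x, ldn k x' ⊆ fr k Δ := by
  intro x hx
  obtain ⟨h1, h2⟩ := Finset.mem_filter.1 hx
  exact ⟨mem_lay.1 h1, h2⟩

theorem ind_nonneg {n k : ℕ} (x : Finset (Fin n)) (B) : 0 ≤ ind k x B := by
  rw [ind]; split_ifs <;> norm_num

theorem iso_ge {k : ℕ} {Δ B : Finset (Finset (Fin (2 * k)))}
    (hB : B ⊆ fr k Δ) :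
    YY k (good k Δ) B - JJ k (good k Δ) B ≤ ((iso k (glue k Δ B)).card : ℝ) := by
  have hmem : ∀ y ∈ fr k Δ, y ∈ glue k Δ B ↔ y ∈ B := by
    intro y hy
    have h := glue_inter hB
    have h2 : y ∈ glue k Δ B ∩ fr k Δ ↔ y ∈ B := by rw [h]
    rw [Finset.mem_inter] at h2
    tauto
  have key : ∀ x ∈ good k Δ, ind k x B - ∑ x' ∈ (star k x).erase x, ind k x B * ind k x' B ≤
      if x ∈ iso k (glue k Δ B) then 1 else 0 := by
    intro x hx
    obtain ⟨hc, hs⟩ := good_spec Δ x hx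
    have hsum0 : 0 ≤ ∑ x' ∈ (star k x).erase x, ind k x B * ind k x' B :=
      Finset.sum_nonneg (fun x' _ => mul_nonneg (ind_nonneg _ _) (ind_nonneg _ _))
    by_cases hd : ldn k x ⊆ B
    · have h1 : ind k x B = 1 := by rw [ind, if_pos hd]
      split_ifs with hi
      · linarith
      · have hhole : IsHole (glue k Δ B) k x := by
          refine ⟨hc, ?_, ?_⟩
          · rw [mem_glue_ne hB (by omega)]
            intro hxΔ
            obtain ⟨y, hy, hyc⟩ := Finset.exists_subset_card_eq (show k ≤ x.card by omega)
            have hyf := hs x (self_star hc) (mem_ldn.2 ⟨hy, hyc⟩)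
            refine (Finset.mem_sdiff.1 hyf).2 (Finset.mem_union_left _ ?_)
            exact mem_shad.2 ⟨hyc, x, mem_upp.2 ⟨hxΔ, by omega⟩, hy⟩
          · intro y hy hyc
            have hyl : y ∈ ldn k x := mem_ldn.2 ⟨hy, hyc⟩
            exact (hmem y (hB (hd hyl))).2 (hd hyl)
        have hni : ¬ ∀ x', IsHole (glue k Δ B) k x' → x' ≠ x → (x ∩ x').card ≠ k := by
          intro hall
          exact hi (Finset.mem_filter.2 ⟨Finset.mem_univ _, hhole, hall⟩)
        push Not at hni
        obtain ⟨x', hx', hne, hcap⟩ := hni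
        have hst : x' ∈ star k x := mem_star.2
          ⟨hx'.1, x ∩ x', hcap, Finset.inter_subset_left, Finset.inter_subset_right⟩
        have hd' : ldn k x' ⊆ B := by
          intro y hy
          rw [← hmem y (hs x' hst hy)]
          exact hx'.2.2 y (mem_ldn.1 hy).1 (mem_ldn.1 hy).2
        have h2 : ind k x' B = 1 := by rw [ind, if_pos hd']
        have h3 := Finset.single_le_sum (f := fun x' => ind k x B * ind k x' B)
          (fun x' _ => mul_nonneg (ind_nonneg _ _) (ind_nonneg _ _))
          (Finset.mem_erase.2 ⟨hne, hst⟩)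
        simp only [h1, h2, one_mul] at h3 ⊢
        linarith
    · have h1 : ind k x B = 0 := by rw [ind, if_neg hd]
      rw [h1] at hsum0 ⊢
      split_ifs <;> linarith
  have h := Finset.sum_le_sum key
  rw [Finset.sum_sub_distrib, Finset.sum_boole] at h
  refine h.trans ?_
  have : ((good k Δ).filter (fun x => x ∈ iso k (glue k Δ B))) ⊆ iso k (glue k Δ B) := by
    intro x hx; exact (Finset.mem_filter.1 hx).2
  exact_mod_cast Finset.card_le_card this

theorem good_card {k : ℕ} (Δ : Finset (Finset (Fin (2 * k)))) :
    (2 * k).choose (k + 1) ≤ (good k Δ).card + (nf k Δ).card * (k * ((k + 1) * k)) := by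
  have hsub : lay (2 * k) (k + 1) ⊆ good k Δ ∪
      (nf k Δ).biUnion (fun y => (lup k y).biUnion (fun x' => star k x')) := by
    intro x hx
    by_cases hg : x ∈ good k Δ
    · exact Finset.mem_union_left _ hg
    · refine Finset.mem_union_right _ ?_
      have hg' : ¬ ∀ x' ∈ star k x, ldn k x' ⊆ fr k Δ :=
        fun h => hg (Finset.mem_filter.2 ⟨hx, h⟩)
      push Not at hg'
      obtain ⟨x', hx', hn⟩ := hg'
      obtain ⟨y, hy, hyn⟩ := Finset.not_subset.1 hn
      rw [mem_ldn] at hy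
      have hynf : y ∈ nf k Δ := by
        by_contra h
        exact hyn (Finset.mem_sdiff.2 ⟨mem_lay.2 hy.2, h⟩)
      obtain ⟨hc', z, hz1, hz2, hz3⟩ := mem_star.1 hx'
      refine Finset.mem_biUnion.2 ⟨y, hynf, Finset.mem_biUnion.2 ⟨x', mem_lup.2 ⟨hc', hy.1⟩, ?_⟩⟩
      exact mem_star.2 ⟨mem_lay.1 hx, z, hz1, hz3, hz2⟩
  have h1 := Finset.card_le_card hsub
  rw [card_lay] at h1
  refine h1.trans ((Finset.card_union_le _ _).trans ?_)
  gcongr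
  apply Finset.card_biUnion_le_card_mul
  intro y hy
  have hyc := mem_lay.1 (nf_sub Δ hy)
  have h2 : (lup k y).card = k := by rw [card_lup hyc]; omega
  calc _ ≤ (lup k y).card * ((k + 1) * k) := by
        apply Finset.card_biUnion_le_card_mul
        intro x' hx'
        exact card_star (mem_lup.1 hx').1
    _ = _ := by rw [h2]

def eta (k : ℕ) (δ μ : ℝ) : ℝ := 4 * (1 + (k + 1) * k * (1 / 2 : ℝ) ^ k) / (δ ^ 2 * μ) +
        2 * ((k + 1) * k * (1 / 2 : ℝ) ^ k) / δ

theorem class_bound {k : ℕ} (hk : 1 ≤ k) {Δ : Finset (Finset (Fin (2 * k)))} (h : IsComplex Δ)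
    {μ0 δ T : ℝ} (hμ0 : 0 < μ0) (hδ : 0 < δ) (hδ1 : δ < 1) (hT : T ≤ (1 - δ) * μ0)
    (hg : μ0 ≤ (good k Δ).card * (1 / 2 : ℝ) ^ (k + 1)) :
    (((cls k Δ).filter (fun Δ' => ((iso k Δ').card : ℝ) < T)).card : ℝ) ≤
      (cls k Δ).card * eta k δ μ0 := by
  set μ := ((good k Δ).card : ℝ) * (1 / 2 : ℝ) ^ (k + 1) with hμ
  have hb := bad_count (good_spec Δ) hμ (lt_of_lt_of_le hμ0 hg) hδ
    (hT.trans (mul_le_mul_of_nonneg_left hg (by linarith)))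
  have hsub : (cls k Δ).filter (fun Δ' => ((iso k Δ').card : ℝ) < T) ⊆
      ((fr k Δ).powerset.filter (fun B => YY k (good k Δ) B - JJ k (good k Δ) B < T)).image
        (glue k Δ) := by
    intro Δ' hΔ'
    obtain ⟨h1, h2⟩ := Finset.mem_filter.1 hΔ'
    rw [cls_eq hk h] at h1
    obtain ⟨B, hB, rfl⟩ := Finset.mem_image.1 h1
    refine Finset.mem_image.2 ⟨B, Finset.mem_filter.2 ⟨hB, ?_⟩, rfl⟩
    exact lt_of_le_of_lt (iso_ge (Finset.mem_powerset.1 hB)) h2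
  have h3 := (Finset.card_le_card hsub).trans Finset.card_image_le
  have h4 : (((cls k Δ).filter (fun Δ' => ((iso k Δ').card : ℝ) < T)).card : ℝ) ≤
    (((fr k Δ).powerset.filter
      (fun B => YY k (good k Δ) B - JJ k (good k Δ) B < T)).card : ℝ) := by exact_mod_cast h3
  refine h4.trans (hb.trans ?_)
  rw [card_cls hk h]
  push_cast
  rw [eta]
  gcongr

theorem global_bound {k : ℕ} (hk : 2 ≤ k) {μ0 δ T : ℝ} (hμ0 : 0 < μ0) (hδ : 0 < δ) (hδ1 : δ < 1)
    (hT : T ≤ (1 - δ) * μ0)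
    (hM : μ0 ≤ (((2 * k).choose (k + 1) : ℝ) - ((2 * k).choose k : ℝ) / (k : ℝ) ^ 2) *
      (1 / 2 : ℝ) ^ (k + 1))
    (hnf : ∑ Δ ∈ allComplexes (2 * k), ((nf k Δ).card : ℝ) ≤
      (allComplexes (2 * k)).card * (((2 * k).choose k : ℕ) : ℝ) / (k : ℝ) ^ 8) :
    (((allComplexes (2 * k)).filter (fun Δ' => ((iso k Δ').card : ℝ) < T)).card : ℝ) ≤
      (allComplexes (2 * k)).card * (1 / (k : ℝ) ^ 2 + eta k δ μ0) := by
  set Ω := allComplexes (2 * k) with hΩ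
  set N : ℝ := (((2 * k).choose k : ℕ) : ℝ) with hN
  have hkR : (2 : ℝ) ≤ k := by exact_mod_cast hk
  have hN0 : 0 < N := by
    rw [hN]; exact_mod_cast Nat.choose_pos (by omega)
  set G := Ω.filter (fun Δ => ((nf k Δ).card : ℝ) ≤ N / (k : ℝ) ^ 6) with hG
  set H := Ω.filter (fun Δ => ¬ ((nf k Δ).card : ℝ) ≤ N / (k : ℝ) ^ 6) with hH
  have hη : 0 ≤ eta k δ μ0 := by rw [eta]; positivity
  have hHc : (H.card : ℝ) ≤ Ω.card * (1 / (k : ℝ) ^ 2) := by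
    have h1 : ∑ Δ ∈ H, N / (k : ℝ) ^ 6 ≤ ∑ Δ ∈ Ω, ((nf k Δ).card : ℝ) := by
      refine le_trans (Finset.sum_le_sum (g := fun Δ => ((nf k Δ).card : ℝ)) ?_) ?_
      · intro Δ hΔ; exact (not_le.1 (Finset.mem_filter.1 hΔ).2).le
      · exact Finset.sum_le_sum_of_subset_of_nonneg (Finset.filter_subset _ _)
          (fun _ _ _ => Nat.cast_nonneg _)
    rw [Finset.sum_const, nsmul_eq_mul] at h1
    have h2 := h1.trans hnf
    have e : (Ω.card : ℝ) * N / (k : ℝ) ^ 8 = Ω.card * (1 / (k : ℝ) ^ 2) * (N / (k : ℝ) ^ 6) := by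
      field_simp
    rw [e] at h2
    exact le_of_mul_le_mul_right h2 (by positivity)
  have hGc : ((G.filter (fun Δ' => ((iso k Δ').card : ℝ) < T)).card : ℝ) ≤
      G.card * eta k δ μ0 := by
    set key : Finset (Finset (Fin (2 * k))) → _ := fun Δ => (upp k Δ, lw k Δ) with hkey
    have hm1 : ∀ Δ ∈ G.filter (fun Δ' => ((iso k Δ').card : ℝ) < T), key Δ ∈ G.image key :=
      fun Δ hΔ => Finset.mem_image_of_mem _ (Finset.mem_filter.1 hΔ).1
    rw [Finset.card_eq_sum_card_fiberwise hm1,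
      Finset.card_eq_sum_card_fiberwise (f := key) (t := G.image key) (s := G)
        (fun Δ hΔ => Finset.mem_image_of_mem _ hΔ)]
    push_cast
    rw [Finset.sum_mul]
    refine Finset.sum_le_sum (fun P hP => ?_)
    obtain ⟨Δ, hΔ, rfl⟩ := Finset.mem_image.1 hP
    obtain ⟨hΔΩ, hΔn⟩ := Finset.mem_filter.1 hΔ
    have hGf : G.filter (fun Δ' => key Δ' = key Δ) = cls k Δ := by
      ext Δ'
      simp only [hG, hkey, cls, Finset.mem_filter, Prod.mk.injEq]
      constructor
      · rintro ⟨⟨h1, _⟩, h2⟩; exact ⟨h1, h2⟩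
      · rintro ⟨h1, h2, h3⟩
        refine ⟨⟨h1, ?_⟩, h2, h3⟩
        have : nf k Δ' = nf k Δ := by simp only [nf, nlow, h2, h3]
        rwa [this]
    have hGf2 : (G.filter (fun Δ' => ((iso k Δ').card : ℝ) < T)).filter
        (fun Δ' => key Δ' = key Δ) = (cls k Δ).filter (fun Δ' => ((iso k Δ').card : ℝ) < T) := by
      rw [← hGf]
      ext Δ'
      simp only [Finset.mem_filter]
      tauto
    rw [hGf2, hGf]
    refine class_bound (by omega) (mem_allC.1 hΔΩ) hμ0 hδ hδ1 hT (hM.trans ?_)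
    gcongr
    have h1 := good_card Δ
    have h2 : (((2 * k).choose (k + 1) : ℕ) : ℝ) ≤
      (good k Δ).card + (nf k Δ).card * (k * ((k + 1) * k)) := by exact_mod_cast h1
    have h3 : ((nf k Δ).card : ℝ) * (k * ((k + 1) * k)) ≤ N / (k : ℝ) ^ 2 := by
      have h4 : (k * ((k + 1) * k) : ℝ) ≤ (k : ℝ) ^ 4 := by
        have : (k : ℝ) + 1 ≤ k ^ 2 := by nlinarith
        calc (k * ((k + 1) * k) : ℝ) ≤ k * (k ^ 2 * k) := by gcongr
          _ = _ := by ring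
      calc _ ≤ N / (k : ℝ) ^ 6 * (k : ℝ) ^ 4 := by gcongr
        _ = _ := by field_simp
    linarith
  have hsub : Ω.filter (fun Δ' => ((iso k Δ').card : ℝ) < T) ⊆
      H ∪ G.filter (fun Δ' => ((iso k Δ').card : ℝ) < T) := by
    intro Δ hΔ
    obtain ⟨h1, h2⟩ := Finset.mem_filter.1 hΔ
    by_cases h3 : ((nf k Δ).card : ℝ) ≤ N / (k : ℝ) ^ 6
    · exact Finset.mem_union_right _ (Finset.mem_filter.2 ⟨Finset.mem_filter.2 ⟨h1, h3⟩, h2⟩)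
    · exact Finset.mem_union_left _ (Finset.mem_filter.2 ⟨h1, h3⟩)
  have h5 := (Finset.card_le_card hsub).trans (Finset.card_union_le _ _)
  have h6 : ((Ω.filter (fun Δ' => ((iso k Δ').card : ℝ) < T)).card : ℝ) ≤
      H.card + (G.filter (fun Δ' => ((iso k Δ').card : ℝ) < T)).card := by exact_mod_cast h5
  have h7 : (G.card : ℝ) ≤ Ω.card := by exact_mod_cast Finset.card_le_card (Finset.filter_subset _ _)
  have h8 : (G.card : ℝ) * eta k δ μ0 ≤ Ω.card * eta k δ μ0 := by gcongr
  linarith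
end UC

namespace UC
open Filter Topology

theorem cb_identity {k : ℕ} (hk : 1 ≤ k) :
    (((2 * k).choose k : ℕ) : ℝ) * √(k : ℝ) / 4 ^ k =
      Stirling.stirlingSeq (2 * k) / Stirling.stirlingSeq k ^ 2 := by
  have hk0 : (0 : ℝ) < k := by exact_mod_cast hk
  have h1 : (((2 * k).choose k : ℕ) : ℝ) = ((2 * k).factorial : ℝ) / (k.factorial : ℝ) ^ 2 := by
    rw [Nat.cast_choose ℝ (by omega : k ≤ 2 * k)]
    have : 2 * k - k = k := by omega
    rw [this, sq]
  have h2 : √(2 * ((2 * k : ℕ) : ℝ)) = 2 * √(k : ℝ) := by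
    push_cast
    rw [show (2 * (2 * (k : ℝ))) = 2 ^ 2 * k by ring, Real.sqrt_mul (by positivity),
      Real.sqrt_sq (by norm_num)]
  have h3 : √(2 * (k : ℝ)) ^ 2 = 2 * k := Real.sq_sqrt (by positivity)
  have h4 : √(k : ℝ) ^ 2 = k := Real.sq_sqrt hk0.le
  have h5 : 0 < √(k : ℝ) := Real.sqrt_pos.2 hk0
  have hf : (0 : ℝ) < k.factorial := by exact_mod_cast Nat.factorial_pos k
  have hf2 : (0 : ℝ) < (2 * k).factorial := by exact_mod_cast Nat.factorial_pos _
  have he : (0 : ℝ) < Real.exp 1 := Real.exp_pos 1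
  have hp : ((((2 * k : ℕ) : ℝ)) / Real.exp 1) ^ (2 * k) =
      4 ^ k * (((k : ℝ) / Real.exp 1) ^ k) ^ 2 := by
    push_cast
    rw [mul_div_assoc, mul_pow, pow_mul 2 2 k, mul_comm 2 k, pow_mul]
    norm_num
  rw [Stirling.stirlingSeq, Stirling.stirlingSeq, h1, h2, hp]
  set q := ((k : ℝ) / Real.exp 1) ^ k with hq
  have hq0 : 0 < q := by positivity
  rw [div_pow _ _ 2, mul_pow _ q 2, h3]
  field_simp
  rw [h4]

theorem cb_tendsto : Tendsto (fun k : ℕ => (((2 * k).choose k : ℕ) : ℝ) * √(k : ℝ) / 4 ^ k)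
    atTop (𝓝 (√Real.pi / √Real.pi ^ 2)) := by
  have hs := Stirling.tendsto_stirlingSeq_sqrt_pi
  have h2 : Tendsto (fun k : ℕ => 2 * k) atTop atTop :=
    tendsto_id.const_mul_atTop' (by norm_num)
  have hpi : √Real.pi ^ 2 ≠ 0 := by positivity
  refine ((hs.comp h2).div (hs.pow 2) hpi).congr' ?_
  filter_upwards [eventually_ge_atTop 1] with k hk
  exact (cb_identity hk).symm

def cc (k : ℕ) : ℝ := k / (k + 1) - 1 / (k : ℝ) ^ 2

theorem inv_sq_tendsto : Tendsto (fun k : ℕ => 1 / (k : ℝ) ^ 2) atTop (𝓝 0) := by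
  have := (tendsto_one_div_atTop_nhds_zero_nat (𝕜 := ℝ)).pow 2
  simpa [div_pow] using this

theorem cc_tendsto : Tendsto cc atTop (𝓝 1) := by
  have h1 : Tendsto (fun k : ℕ => (k : ℝ) / (k + 1)) atTop (𝓝 1) :=
    tendsto_natCast_div_add_atTop (1 : ℝ)
  have h2 := h1.sub inv_sq_tendsto
  rw [sub_zero] at h2
  exact h2

def mu0 (k : ℕ) : ℝ := (((2 * k).choose k : ℕ) : ℝ) * cc k * (1 / 2 : ℝ) ^ (k + 1)

def tt (k : ℕ) : ℝ := (2 : ℝ) ^ (((2 * k : ℝ) - 1) / 2) / Real.sqrt (Real.pi * (2 * k))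

theorem tt_eq (k : ℕ) : tt k = 2 ^ k / (2 * (√Real.pi * √(k : ℝ))) := by
  have h1 : (2 : ℝ) ^ (((2 * k : ℝ) - 1) / 2) = 2 ^ k / √2 := by
    rw [show ((2 * k : ℝ) - 1) / 2 = (k : ℝ) - 1 / 2 by ring, Real.rpow_sub (by norm_num),
      Real.rpow_natCast, ← Real.sqrt_eq_rpow]
  have h2 : Real.sqrt (Real.pi * (2 * k)) = √2 * (√Real.pi * √(k : ℝ)) := by
    rw [Real.sqrt_mul Real.pi_pos.le, Real.sqrt_mul (by norm_num)]; ring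
  have h3 : √(2 : ℝ) * √2 = 2 := Real.mul_self_sqrt (by norm_num)
  rw [tt, h1, h2, div_div, ← mul_assoc, h3]

def rr (k : ℕ) : ℝ := ((((2 * k).choose k : ℕ) : ℝ) * √(k : ℝ) / 4 ^ k) * √Real.pi * cc k

theorem rr_tendsto : Tendsto rr atTop (𝓝 1) := by
  have h := (cb_tendsto.mul_const (√Real.pi)).mul cc_tendsto
  have hpi : √Real.pi ≠ 0 := by positivity
  have : √Real.pi / √Real.pi ^ 2 * √Real.pi * 1 = 1 := by field_simp
  rw [this] at h
  exact h

theorem mu0_eq {k : ℕ} (hk : 1 ≤ k) : mu0 k = tt k * rr k := by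
  have hk0 : (0 : ℝ) < k := by exact_mod_cast hk
  have h5 : 0 < √(k : ℝ) := Real.sqrt_pos.2 hk0
  have hpi : 0 < √Real.pi := by positivity
  have h4 : (4 : ℝ) ^ k = 2 ^ k * 2 ^ k := by rw [← mul_pow]; norm_num
  rw [mu0, tt_eq, rr, h4, pow_succ, one_div_pow]
  field_simp

theorem tt_inv_tendsto : Tendsto (fun k => (tt k)⁻¹) atTop (𝓝 0) := by
  have h := (tendsto_self_mul_const_pow_of_lt_one (r := (1 / 2 : ℝ)) (by norm_num)
    (by norm_num)).const_mul (2 * √Real.pi)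
  rw [mul_zero] at h
  refine squeeze_zero' (Eventually.of_forall fun k => ?_) ?_ h
  · rw [tt_eq]; positivity
  · filter_upwards [eventually_ge_atTop 1] with k hk
    have hk1 : (1 : ℝ) ≤ k := by exact_mod_cast hk
    have h5 : √(k : ℝ) ≤ k := by
      rw [Real.sqrt_le_left (by linarith)]; nlinarith
    rw [tt_eq, inv_div, one_div_pow]
    have : 2 * √Real.pi * ((k : ℝ) * (1 / 2 ^ k)) = 2 * (√Real.pi * k) / 2 ^ k := by ring
    rw [this]
    gcongr

theorem mu0_inv_tendsto : Tendsto (fun k => (mu0 k)⁻¹) atTop (𝓝 0) := by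
  have h := tt_inv_tendsto.mul (rr_tendsto.inv₀ one_ne_zero)
  rw [zero_mul] at h
  refine h.congr' ?_
  filter_upwards [eventually_ge_atTop 1] with k hk
  rw [mu0_eq hk, mul_inv]

theorem poly_geo : Tendsto (fun k : ℕ => ((k : ℝ) + 1) * k * (1 / 2 : ℝ) ^ k) atTop (𝓝 0) := by
  have h1 := tendsto_self_mul_const_pow_of_lt_one (r := (1 / 2 : ℝ)) (by norm_num) (by norm_num)
  have h2 := tendsto_pow_const_mul_const_pow_of_lt_one 2 (r := (1 / 2 : ℝ)) (by norm_num)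
    (by norm_num)
  have := h2.add h1
  rw [add_zero] at this
  refine this.congr (fun k => ?_)
  ring

theorem eta_tendsto (δ : ℝ) : Tendsto (fun k => eta k δ (mu0 k)) atTop (𝓝 0) := by
  have h1 := ((poly_geo.const_add 1).const_mul 4).mul (mu0_inv_tendsto.const_mul ((δ ^ 2)⁻¹))
  have h2 := (poly_geo.const_mul 2).div_const δ
  have h3 := h1.add h2
  have e : 4 * (1 + 0) * ((δ ^ 2)⁻¹ * 0) + 2 * 0 / δ = 0 := by simp
  rw [e] at h3
  refine h3.congr (fun k => ?_)
  rw [eta, div_eq_mul_inv _ (δ ^ 2 * mu0 k), mul_inv]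

theorem choose_succ_eq {k : ℕ} : (((2 * k).choose (k + 1) : ℕ) : ℝ) =
    (((2 * k).choose k : ℕ) : ℝ) * (k / (k + 1)) := by
  have h := Nat.choose_succ_right_eq (2 * k) k
  have h2 : 2 * k - k = k := by omega
  rw [h2] at h
  have h3 : (((2 * k).choose (k + 1) : ℕ) : ℝ) * (k + 1) = (((2 * k).choose k : ℕ) : ℝ) * k := by
    exact_mod_cast h
  have : (k : ℝ) + 1 ≠ 0 := by positivity
  field_simp
  linarith

theorem T_le {ε δ : ℝ} (hδε : δ < ε) :
    ∀ᶠ k : ℕ in atTop, (1 - ε) * tt k ≤ (1 - δ) * mu0 k := by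
  have h := rr_tendsto.const_mul (1 - δ)
  rw [mul_one] at h
  filter_upwards [h.eventually_const_lt (show 1 - ε < 1 - δ by linarith),
    eventually_ge_atTop 1] with k hk hk1
  rw [mu0_eq hk1]
  have ht : 0 ≤ tt k := by rw [tt_eq]; positivity
  nlinarith

theorem prob_bound {ε δ : ℝ} (hδp : 0 < δ) (hδ0 : δ < 1) (hδε : δ < ε) :
    ∀ᶠ k : ℕ in atTop, 1 - (1 / (k : ℝ) ^ 2 + eta k δ (mu0 k)) ≤
      uniformProb (2 * k) (fun Δ => (1 - ε) * tt k ≤ ((iso k Δ).card : ℝ)) := by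
  filter_upwards [T_le hδε, nf_sum_bound, eventually_ge_atTop 2,
    rr_tendsto.eventually_const_lt (show (0 : ℝ) < 1 by norm_num)] with k hT hnf hk hr
  have hk0 : (0 : ℝ) < k := by exact_mod_cast (by omega : 0 < k)
  have hμ : 0 < mu0 k := by
    rw [mu0_eq (by omega), tt_eq]
    positivity
  have hb := global_bound hk hμ hδp hδ0 hT (by
    rw [mu0, cc, choose_succ_eq]
    apply le_of_eq
    ring) hnf
  have hΩ : (0 : ℝ) < (allComplexes (2 * k)).card := by
    have := card_allC_ge (show 1 ≤ k by omega)
    have h2 : 0 < (allComplexes (2 * k)).card := lt_of_lt_of_le (by positivity) this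
    exact_mod_cast h2
  have hsplit := Finset.card_filter_add_card_filter_not (s := allComplexes (2 * k))
    (fun Δ => (1 - ε) * tt k ≤ ((iso k Δ).card : ℝ))
  simp only [not_le] at hsplit
  have hs : (((allComplexes (2 * k)).filter
        (fun Δ => (1 - ε) * tt k ≤ ((iso k Δ).card : ℝ))).card : ℝ) +
      ((allComplexes (2 * k)).filter
        (fun Δ => ((iso k Δ).card : ℝ) < (1 - ε) * tt k)).card = (allComplexes (2 * k)).card := by
    exact_mod_cast hsplit
  rw [uniformProb, le_div_iff₀ hΩ]
  linarith

theorem prob_le_one (n : ℕ) (P) : uniformProb n P ≤ 1 := by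
  rw [uniformProb]
  apply div_le_one_of_le₀ _ (by positivity)
  exact_mod_cast Finset.card_filter_le _ _

theorem main (ε : ℝ) (hε : 0 < ε) :
    Tendsto (fun k : ℕ => uniformProb (2 * k)
      (fun Δ => (1 - ε) * tt k ≤ ((iso k Δ).card : ℝ))) atTop (𝓝 1) := by
  set δ := min ε 1 / 2 with hδ
  have hm : 0 < min ε 1 := lt_min hε one_pos
  have h1 : min ε 1 ≤ 1 := min_le_right _ _
  have h2 : min ε 1 ≤ ε := min_le_left _ _
  have hlow := (inv_sq_tendsto.add (eta_tendsto δ)).const_sub 1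
  rw [add_zero, sub_zero] at hlow
  refine tendsto_of_tendsto_of_tendsto_of_le_of_le' hlow tendsto_const_nhds
    (prob_bound (by linarith) (by linarith) (by linarith))
    (Eventually.of_forall fun k => prob_le_one _ _)

end UC

/-- For `Δ ~ U(n)` with `n` even, with high probability the number of holes `x`
of size `n/2 + 1` sharing no `(n/2)`-subset with any other hole is at least
`(1-ε)·2^{(n-1)/2}/√(πn)`. -/
theorem stmt6 (ε : ℝ) (hε : 0 < ε) :
    Filter.Tendsto (fun m : ℕ =>
      uniformProb (2 * m) (fun Δ =>
        (1 - ε) * (2 : ℝ) ^ (((2 * m : ℝ) - 1) / 2) / Real.sqrt (Real.pi * (2 * m)) ≤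
          ((Finset.univ.filter (fun x : Finset (Fin (2 * m)) =>
              IsHole Δ m x ∧
                ∀ x' : Finset (Fin (2 * m)), IsHole Δ m x' → x' ≠ x →
                  (x ∩ x').card ≠ m)).card : ℝ)))
      Filter.atTop (nhds 1) := by
  refine (UC.main ε hε).congr (fun m => ?_)
  simp only [UC.tt, UC.iso, mul_div_assoc]
end
end

section
/- Fix real constants 0 < c < 1, ε > 0 and δ > 0, and let n range over values with cn ∈ ℕ, t = cn. Let p = p_n satisfy e^{−α(c)/c + ε} ≤ p_n ≤ 1, and let Δ ∼ RP(n,t,p_n). Then: (i) with probability tending to 1 there exists a (t+1)-element subset of [n] all of whose t-element subsets are faces of Δ; (ii) if moreover p_n ≤ 1 − ε, then with probability tending to 1 the number of (t+1)-element subsets of [n] all of whose t-element subsets are faces of Δ is at least exp((α(c)−δ)·n)·p_n^{cn}. -/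
open scoped Classical

noncomputable section

/-- The natural-log entropy function `α(c)`. -/
def entropy (c : ℝ) : ℝ := -c * Real.log c - (1 - c) * Real.log (1 - c)

/-- The simplicial complex generated by a family `F` of facets: all nonempty
subsets of members of `F`. -/
def genComplex {n : ℕ} (F : Finset (Finset (Fin n))) : Finset (Finset (Fin n)) :=
  Finset.univ.filter (fun x => x.Nonempty ∧ ∃ f ∈ F, x ⊆ f)

/-- The probability, under the random pure model `RP(n,t,p)` (each `t`-subset of
`[n]` is taken as a facet independently with probability `p`), of the event `P`
for the generated complex. -/
def rpProb (n t : ℕ) (p : ℝ) (P : Finset (Finset (Fin n)) → Prop) : ℝ :=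
  ∑ F ∈ (Finset.univ.filter (fun s : Finset (Fin n) => s.card = t)).powerset,
    (if P (genComplex F) then p ^ F.card * (1 - p) ^ (Nat.choose n t - F.card) else 0)

lemma aux_sum_sup {β : Type*} [DecidableEq β] (T A : Finset β) (hA : A ⊆ T) (p : ℝ) :
    ∑ F ∈ T.powerset, (p ^ F.card * (1 - p) ^ (T.card - F.card)) * (if A ⊆ F then 1 else 0)
      = p ^ A.card := by
  have h1 : ∑ F ∈ T.powerset,
      (p ^ F.card * (1 - p) ^ (T.card - F.card)) * (if A ⊆ F then (1 : ℝ) else 0)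
      = ∑ F ∈ T.powerset.filter (fun F => A ⊆ F),
        (p ^ F.card * (1 - p) ^ (T.card - F.card)) := by
    rw [Finset.sum_filter]
    refine Finset.sum_congr rfl fun F _ => ?_
    split_ifs <;> simp
  have h2 : ∑ F ∈ T.powerset.filter (fun F => A ⊆ F),
        (p ^ F.card * (1 - p) ^ (T.card - F.card))
      = ∑ G ∈ (T \ A).powerset,
        p ^ A.card * (p ^ G.card * (1 - p) ^ ((T \ A).card - G.card)) := by
    symm
    refine Finset.sum_bij' (fun G _ => G ∪ A) (fun F _ => F \ A) ?_ ?_ ?_ ?_ ?_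
    · intro G hG
      simp only [Finset.mem_powerset, Finset.mem_filter] at hG ⊢
      exact ⟨Finset.union_subset (hG.trans Finset.sdiff_subset) hA, Finset.subset_union_right⟩
    · intro F hF
      simp only [Finset.mem_powerset, Finset.mem_filter] at hF ⊢
      exact Finset.sdiff_subset_sdiff hF.1 subset_rfl
    · intro G hG
      simp only [Finset.mem_powerset] at hG
      have : Disjoint G A := (Finset.subset_sdiff.1 hG).2
      simp [Finset.union_sdiff_right, Finset.sdiff_eq_self_of_disjoint this]
    · intro F hF
      simp only [Finset.mem_powerset, Finset.mem_filter] at hF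
      exact Finset.sdiff_union_of_subset hF.2
    · intro G hG
      simp only [Finset.mem_powerset] at hG
      have : Disjoint G A := (Finset.subset_sdiff.1 hG).2
      rw [Finset.card_union_of_disjoint this, Finset.card_sdiff_of_subset hA, pow_add,
        Nat.sub_sub, Nat.add_comm A.card]
      ring
  rw [h1, h2, ← Finset.mul_sum, Finset.sum_pow_mul_eq_add_pow]
  simp

lemma aux_cheb {β ι : Type*} [DecidableEq β] (T : Finset β) (S : Finset ι)
    (B : ι → Finset β) (m D : ℕ) (hB : ∀ x ∈ S, B x ⊆ T) (hm : ∀ x ∈ S, (B x).card = m)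
    (p : ℝ) (hp0 : 0 < p) (hp1 : p ≤ 1) (hS : S.Nonempty)
    (hD : ∀ x ∈ S, (S.filter (fun x' => ¬ Disjoint (B x) (B x'))).card ≤ D) :
    1 - 4 * D / (S.card * p ^ m) ≤ ∑ F ∈ T.powerset,
      (p ^ F.card * (1 - p) ^ (T.card - F.card)) *
        (if (S.card * p ^ m) / 2 ≤ ((S.filter (fun x => B x ⊆ F)).card : ℝ) then 1 else 0) := by
  set μ : ℝ := S.card * p ^ m with hμ
  have hμ0 : 0 < μ := by
    have : (0 : ℝ) < S.card := by exact_mod_cast hS.card_pos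
    positivity
  set w : Finset β → ℝ := fun F => p ^ F.card * (1 - p) ^ (T.card - F.card) with hw
  have hw0 : ∀ F, 0 ≤ w F := fun F => by
    have : 0 ≤ 1 - p := by linarith
    simp only [hw]; positivity
  set X : Finset β → ℝ := fun F => ((S.filter (fun x => B x ⊆ F)).card : ℝ) with hX
  have hXs : ∀ F, X F = ∑ x ∈ S, (if B x ⊆ F then (1 : ℝ) else 0) := fun F => by simp [hX]
  have e0 : ∑ F ∈ T.powerset, w F = 1 := by
    have := aux_sum_sup T ∅ (by simp) p
    simpa [hw] using this
  have e1 : ∑ F ∈ T.powerset, w F * X F = μ := by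
    simp_rw [hXs, Finset.mul_sum]
    rw [Finset.sum_comm]
    rw [Finset.sum_congr rfl (fun x hx => aux_sum_sup T (B x) (hB x hx) p)]
    rw [Finset.sum_congr rfl (fun x hx => by rw [hm x hx])]
    simp [hμ]
  have e2 : ∑ F ∈ T.powerset, w F * X F ^ 2 ≤ μ ^ 2 + D * μ := by
    have h : ∑ F ∈ T.powerset, w F * X F ^ 2
        = ∑ x ∈ S, ∑ x' ∈ S, p ^ (B x ∪ B x').card := by
      have : ∀ F, w F * X F ^ 2 = ∑ x ∈ S, ∑ x' ∈ S,
          w F * (if B x ∪ B x' ⊆ F then (1 : ℝ) else 0) := by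
        intro F
        rw [pow_two, hXs, Finset.sum_mul_sum, Finset.mul_sum]
        refine Finset.sum_congr rfl fun x _ => ?_
        rw [Finset.mul_sum]
        refine Finset.sum_congr rfl fun x' _ => ?_
        by_cases h1 : B x ⊆ F <;> by_cases h2 : B x' ⊆ F <;> simp [Finset.union_subset_iff, h1, h2]
      simp_rw [this]
      rw [Finset.sum_comm]
      refine Finset.sum_congr rfl fun x hx => ?_
      rw [Finset.sum_comm]
      refine Finset.sum_congr rfl fun x' hx' => ?_
      exact aux_sum_sup T _ (Finset.union_subset (hB x hx) (hB x' hx')) p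
    rw [h]
    have hrow : ∀ x ∈ S, ∑ x' ∈ S, p ^ (B x ∪ B x').card ≤ S.card * (p ^ m * p ^ m) + D * p ^ m := by
      intro x hx
      have : ∀ x' ∈ S, p ^ (B x ∪ B x').card ≤ p ^ m * p ^ m +
          (if ¬ Disjoint (B x) (B x') then p ^ m else 0) := by
        intro x' hx'
        by_cases hd : Disjoint (B x) (B x')
        · rw [Finset.card_union_of_disjoint hd, hm x hx, hm x' hx', pow_add]
          simp [hd]
        · simp only [hd, not_false_eq_true, if_true]
          have h1 : p ^ (B x ∪ B x').card ≤ p ^ m :=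
            pow_le_pow_of_le_one hp0.le hp1 (by
              rw [← hm x hx]; exact Finset.card_le_card Finset.subset_union_left)
          have : 0 ≤ p ^ m * p ^ m := by positivity
          linarith
      refine (Finset.sum_le_sum this).trans ?_
      rw [Finset.sum_add_distrib, Finset.sum_const, nsmul_eq_mul, ← Finset.sum_filter,
        Finset.sum_const, nsmul_eq_mul]
      have h3 : ((S.filter (fun x' => ¬ Disjoint (B x) (B x'))).card : ℝ) ≤ D := by
        exact_mod_cast hD x hx
      have := mul_le_mul_of_nonneg_right h3 (pow_nonneg hp0.le m)
      linarith
    refine (Finset.sum_le_sum hrow).trans ?_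
    rw [Finset.sum_const, nsmul_eq_mul, hμ]
    apply le_of_eq
    ring
  have e3 : ∑ F ∈ T.powerset, w F * (X F - μ) ^ 2 ≤ D * μ := by
    have : ∑ F ∈ T.powerset, w F * (X F - μ) ^ 2 = ∑ F ∈ T.powerset, w F * X F ^ 2
        - 2 * μ * ∑ F ∈ T.powerset, w F * X F + μ ^ 2 * ∑ F ∈ T.powerset, w F := by
      rw [Finset.mul_sum, Finset.mul_sum, ← Finset.sum_sub_distrib, ← Finset.sum_add_distrib]
      refine Finset.sum_congr rfl fun F _ => ?_
      ring
    rw [this, e0, e1]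
    linarith
  have key : ∀ F ∈ T.powerset, w F - w F * (X F - μ) ^ 2 * (4 / μ ^ 2) ≤
      w F * (if μ / 2 ≤ X F then 1 else 0) := by
    intro F _
    split_ifs with h
    · have : 0 ≤ w F * (X F - μ) ^ 2 * (4 / μ ^ 2) := by
        have := hw0 F
        positivity
      linarith
    · push Not at h
      have h1 : 1 ≤ (X F - μ) ^ 2 * (4 / μ ^ 2) := by
        rw [← mul_div_assoc, le_div_iff₀ (by positivity)]
        nlinarith
      have := mul_le_mul_of_nonneg_left h1 (hw0 F)
      rw [← mul_assoc] at this
      linarith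
  refine le_trans ?_ (Finset.sum_le_sum key)
  rw [Finset.sum_sub_distrib, e0, ← Finset.sum_mul]
  have h4 := mul_le_mul_of_nonneg_right e3 (show 0 ≤ 4 / μ ^ 2 by positivity)
  have h5 : D * μ * (4 / μ ^ 2) = 4 * D / μ := by field_simp
  linarith

/-- Main probabilistic estimate. -/
lemma aux_prob (n t : ℕ) (ht : 0 < t) (htn : t < n) (p : ℝ) (hp0 : 0 < p) (hp1 : p ≤ 1)
    (P : Finset (Finset (Fin n)) → Prop)
    (hP : ∀ Δ : Finset (Finset (Fin n)), (n.choose (t + 1) * p ^ (t + 1)) / 2 ≤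
      ((Finset.univ.filter (fun x : Finset (Fin n) =>
        x.card = t + 1 ∧ ∀ y ⊆ x, y.card = t → y ∈ Δ)).card : ℝ) → P Δ) :
    1 - 4 * (n ^ 2 : ℕ) / (n.choose (t + 1) * p ^ (t + 1)) ≤ rpProb n t p P := by
  set S : Finset (Finset (Fin n)) := Finset.powersetCard (t + 1) Finset.univ with hS
  have hSc : S.card = n.choose (t + 1) := by simp [hS]
  have hTe : (Finset.univ.filter (fun s : Finset (Fin n) => s.card = t))
      = Finset.powersetCard t Finset.univ := by
    ext s; simp [Finset.mem_powersetCard]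
  have hTc : (Finset.univ.filter (fun s : Finset (Fin n) => s.card = t)).card = n.choose t := by
    rw [hTe]; simp
  have hmS : ∀ x, x ∈ S ↔ x.card = t + 1 := fun x => by simp [hS, Finset.mem_powersetCard]
  have main := aux_cheb (Finset.univ.filter (fun s : Finset (Fin n) => s.card = t)) S
    (fun x => Finset.powersetCard t x) (t + 1) (n ^ 2)
    (by
      intro x hx y hy
      simp only [Finset.mem_powersetCard] at hy
      simp [hy.2])
    (by
      intro x hx
      rw [Finset.card_powersetCard, (hmS x).1 hx, Nat.choose_succ_self_right])
    p hp0 hp1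
    (by
      rw [← Finset.card_pos, hSc]
      exact Nat.choose_pos htn)
    (by
      intro x hx
      have hsub : (S.filter (fun x' => ¬ Disjoint (Finset.powersetCard t x)
          (Finset.powersetCard t x'))) ⊆
          (Finset.univ : Finset (Fin n × Fin n)).image (fun ab => insert ab.2 (x.erase ab.1)) := by
        intro x' hx'
        rw [Finset.mem_filter, Finset.not_disjoint_iff] at hx'
        obtain ⟨hx'S, y, hy, hy'⟩ := hx'
        rw [Finset.mem_powersetCard] at hy hy'
        obtain ⟨a, ha, hax⟩ := Finset.exists_eq_insert_iff.2 ⟨hy.1, by rw [hy.2, (hmS x).1 hx]⟩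
        obtain ⟨b, hb, hbx⟩ := Finset.exists_eq_insert_iff.2 ⟨hy'.1, by rw [hy'.2, (hmS x').1 hx'S]⟩
        rw [Finset.mem_image]
        refine ⟨(a, b), Finset.mem_univ _, ?_⟩
        simp only
        rw [← hax, Finset.erase_insert ha, hbx]
      refine (Finset.card_le_card hsub).trans (Finset.card_image_le.trans ?_)
      simp [pow_two])
  rw [hSc] at main
  refine main.trans ?_
  unfold rpProb
  refine Finset.sum_le_sum fun F hF => ?_
  rw [hTc]
  have hw : 0 ≤ p ^ F.card * (1 - p) ^ (n.choose t - F.card) := by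
    have : 0 ≤ 1 - p := by linarith
    positivity
  have hFT : ∀ f ∈ F, f.card = t := fun f hf => by
    have := Finset.mem_powerset.1 hF hf
    simpa using this
  have hgen : ∀ y : Finset (Fin n), y.card = t → (y ∈ genComplex F ↔ y ∈ F) := by
    intro y hy
    simp only [genComplex, Finset.mem_filter, Finset.mem_univ, true_and]
    constructor
    · rintro ⟨_, f, hf, hyf⟩
      rwa [Finset.eq_of_subset_of_card_le hyf (by rw [hFT f hf, hy])]
    · intro h
      exact ⟨Finset.card_pos.1 (by omega), y, h, subset_rfl⟩
  have hset : (Finset.univ.filter (fun x : Finset (Fin n) =>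
        x.card = t + 1 ∧ ∀ y ⊆ x, y.card = t → y ∈ genComplex F))
      = S.filter (fun x => Finset.powersetCard t x ⊆ F) := by
    ext x
    simp only [Finset.mem_filter, Finset.mem_univ, true_and, hmS]
    refine and_congr_right fun _ => ?_
    constructor
    · intro h y hy
      rw [Finset.mem_powersetCard] at hy
      exact (hgen y hy.2).1 (h y hy.1 hy.2)
    · intro h y hy hyt
      exact (hgen y hyt).2 (h (Finset.mem_powersetCard.2 ⟨hy, hyt⟩))
  by_cases hq : P (genComplex F)
  · rw [if_pos hq]
    split_ifs <;> simp [hw]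
  · rw [if_neg hq, if_neg, mul_zero]
    intro h
    apply hq
    apply hP
    rw [hset]
    exact h

lemma aux_unimodal (n t : ℕ) (c : ℝ) (hc0 : 0 < c) (hc1 : c < 1) (htn : t ≤ n)
    (ht : (t : ℝ) = c * n) :
    1 ≤ (n + 1) * (c ^ t * (1 - c) ^ (n - t) * n.choose t) := by
  set f : ℕ → ℝ := fun k => c ^ k * (1 - c) ^ (n - k) * n.choose k with hf
  have h1c : 0 < 1 - c := by linarith
  have step : ∀ k, k < n → f (k + 1) * ((k + 1) * (1 - c)) = f k * ((n - k) * c) := by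
    intro k hk
    have h1 : (n.choose (k + 1) : ℝ) * (k + 1) = n.choose k * (n - k) := by
      have := Nat.choose_succ_right_eq n k
      rw [← Nat.cast_sub hk.le]
      exact_mod_cast this
    have h2 : n - k = (n - (k + 1)) + 1 := by omega
    simp only [hf]
    rw [h2, pow_succ, pow_succ]
    linear_combination (c ^ k * c * (1 - c) ^ (n - (k + 1)) * (1 - c)) * h1
  have hf0 : ∀ k, 0 ≤ f k := fun k => by simp only [hf]; positivity
  have up : ∀ j, t + j ≤ n → f (t + j) ≤ f t := by
    intro j
    induction j with
    | zero => intro _; simp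
    | succ j ih =>
      intro hj
      refine le_trans ?_ (ih (by omega))
      have hs := step (t + j) (by omega)
      push_cast at hs
      have hpos : (0 : ℝ) < (t + j + 1) * (1 - c) := by positivity
      have hle : ((n : ℝ) - (t + j)) * c ≤ (t + j + 1) * (1 - c) := by
        have : (0 : ℝ) ≤ j := by positivity
        nlinarith
      have := mul_le_mul_of_nonneg_left hle (hf0 (t + j))
      rw [← hs] at this
      exact le_of_mul_le_mul_right this hpos
  have down : ∀ j, j ≤ t → f (t - j) ≤ f t := by
    intro j
    induction j with
    | zero => intro _; simp
    | succ j ih =>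
      intro hj
      refine le_trans ?_ (ih (by omega))
      have hs := step (t - (j + 1)) (by omega)
      rw [show t - (j + 1) + 1 = t - j by omega, Nat.cast_sub hj] at hs
      push_cast at hs
      have hjt : ((j : ℝ) + 1) ≤ t := by exact_mod_cast hj
      have hpos : (0 : ℝ) < (t - (j + 1) + 1) * (1 - c) := by
        apply mul_pos _ h1c
        linarith
      have hle : ((t : ℝ) - (j + 1) + 1) * (1 - c) ≤ (n - (t - (j + 1))) * c := by
        have : (0 : ℝ) ≤ j := by positivity
        nlinarith
      have := mul_le_mul_of_nonneg_left hle (hf0 (t - j))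
      rw [hs] at this
      refine le_of_mul_le_mul_right this (lt_of_lt_of_le hpos hle)
  have all : ∀ k ∈ Finset.range (n + 1), f k ≤ f t := by
    intro k hk
    rw [Finset.mem_range] at hk
    rcases le_total t k with h | h
    · have := up (k - t) (by omega)
      rwa [show t + (k - t) = k by omega] at this
    · have := down (t - k) (by omega)
      rwa [show t - (t - k) = k by omega] at this
  have hsum : ∑ k ∈ Finset.range (n + 1), f k = 1 := by
    rw [← add_pow]; simp
  have := Finset.sum_le_sum all
  rw [hsum, Finset.sum_const, Finset.card_range, nsmul_eq_mul] at this
  push_cast at this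
  exact this

lemma aux_choose (n t : ℕ) (c : ℝ) (hc0 : 0 < c) (hc1 : c < 1) (htn : t < n)
    (ht : (t : ℝ) = c * n) :
    Real.exp (entropy c * n) ≤ (n + 1) ^ 2 * n.choose (t + 1) := by
  have h1c : 0 < 1 - c := by linarith
  have h1 := aux_unimodal n t c hc0 hc1 htn.le ht
  have h2 : c ^ t * (1 - c) ^ (n - t) = Real.exp (-(entropy c * n)) := by
    have a1 : c ^ t = Real.exp (t * Real.log c) := by
      rw [Real.exp_nat_mul, Real.exp_log hc0]
    have a2 : (1 - c) ^ (n - t) = Real.exp ((n - t : ℕ) * Real.log (1 - c)) := by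
      rw [Real.exp_nat_mul, Real.exp_log h1c]
    rw [a1, a2, ← Real.exp_add, Nat.cast_sub htn.le, ht, entropy]
    congr 1
    ring
  rw [h2] at h1
  have h3 : Real.exp (entropy c * n) ≤ (n + 1) * n.choose t := by
    have := mul_le_mul_of_nonneg_left h1 (Real.exp_pos (entropy c * n)).le
    have h : Real.exp (entropy c * n) * Real.exp (-(entropy c * n)) = 1 := by
      rw [← Real.exp_add]; simp
    calc _ = Real.exp (entropy c * n) * 1 := by ring
      _ ≤ _ := this
      _ = (Real.exp (entropy c * n) * Real.exp (-(entropy c * n))) * ((n + 1) * n.choose t) := by ring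
      _ = _ := by rw [h, one_mul]
  have h4 : (n.choose t : ℝ) ≤ (n + 1) * n.choose (t + 1) := by
    have := Nat.choose_succ_right_eq n t
    have h5 : n.choose t ≤ (n + 1) * n.choose (t + 1) := by
      calc n.choose t ≤ n.choose t * (n - t) := Nat.le_mul_of_pos_right _ (by omega)
        _ = n.choose (t + 1) * (t + 1) := this.symm
        _ ≤ n.choose (t + 1) * (n + 1) := Nat.mul_le_mul_left _ (by omega)
        _ = _ := Nat.mul_comm _ _
    exact_mod_cast h5
  calc _ ≤ _ := h3
    _ ≤ (n + 1) * ((n + 1) * n.choose (t + 1)) := by gcongr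
    _ = _ := by ring

lemma aux_growth (a K : ℝ) (ha : 0 < a) :
    ∃ N : ℕ, ∀ n : ℕ, N ≤ n → K * ((n : ℝ) + 1) ^ 4 ≤ Real.exp (a * n) := by
  have h := Real.tendsto_pow_mul_exp_neg_atTop_nhds_zero 4
  have h2 : Filter.Tendsto (fun n : ℕ => a * ((n : ℝ) + 1)) Filter.atTop Filter.atTop :=
    Filter.Tendsto.const_mul_atTop ha
      (Filter.tendsto_atTop_add_const_right _ _ tendsto_natCast_atTop_atTop)
  have h3 := h.comp h2
  have hpos : 0 < a ^ 4 / ((|K| + 1) * Real.exp a) := by positivity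
  have h4 := h3.eventually (gt_mem_nhds hpos)
  obtain ⟨N, hN⟩ := Filter.eventually_atTop.1 h4
  refine ⟨N, fun n hn => ?_⟩
  have := hN n hn
  simp only [Function.comp] at this
  rw [lt_div_iff₀ (by positivity), mul_pow, mul_add, neg_add, Real.exp_add, mul_one,
    Real.exp_neg a, Real.exp_neg (a * n)] at this
  have e1 := Real.exp_pos a
  have e2 := Real.exp_pos (a * n)
  have h6 : a ^ 4 * ((n : ℝ) + 1) ^ 4 * ((Real.exp (a * n))⁻¹ * (Real.exp a)⁻¹) *
      ((|K| + 1) * Real.exp a) = a ^ 4 * (((n : ℝ) + 1) ^ 4 * (|K| + 1) / Real.exp (a * n)) := by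
    field_simp
  rw [h6] at this
  have h7 : ((n : ℝ) + 1) ^ 4 * (|K| + 1) / Real.exp (a * n) < 1 := by
    have ha4 : 0 < a ^ 4 := by positivity
    by_contra hh
    push Not at hh
    nlinarith
  rw [div_lt_one e2] at h7
  have h8 : (0 : ℝ) ≤ ((n : ℝ) + 1) ^ 4 := by positivity
  nlinarith [le_abs_self K]

lemma aux_all (c ε δ : ℝ) (hc0 : 0 < c) (hc1 : c < 1) (hε : 0 < ε) (hδ : 0 < δ)
    (p : ℕ → ℝ) (hp1 : ∀ n : ℕ, Real.exp (-entropy c / c + ε) ≤ p n)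
    (hp2 : ∀ n : ℕ, p n ≤ 1) (ε' : ℝ) (hε' : 0 < ε') :
    ∃ N : ℕ, ∀ n : ℕ, N ≤ n → ∀ t : ℕ, (t : ℝ) = c * n →
      ∀ P : Finset (Finset (Fin n)) → Prop,
      (∀ Δ : Finset (Finset (Fin n)), Real.exp ((entropy c - δ) * n) * (p n) ^ t ≤
      ((Finset.univ.filter (fun x : Finset (Fin n) =>
        x.card = t + 1 ∧ ∀ y ⊆ x, y.card = t → y ∈ Δ)).card : ℝ) → P Δ) →
      1 - ε' ≤ rpProb n t (p n) P := by
  set p0 : ℝ := Real.exp (-entropy c / c + ε) with hp0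
  have hp0p : 0 < p0 := Real.exp_pos _
  obtain ⟨N1, hN1⟩ := aux_growth (ε * c) (4 / (p0 * ε')) (by positivity)
  obtain ⟨N2, hN2⟩ := aux_growth δ (2 / p0) hδ
  refine ⟨max (max N1 N2) 1, fun n hn t ht P hP => ?_⟩
  have hn1 : 1 ≤ n := le_trans (le_max_right _ _) hn
  have hg1 := hN1 n (le_trans (le_trans (le_max_left _ _) (le_max_left _ _)) hn)
  have hg2 := hN2 n (le_trans (le_trans (le_max_right _ _) (le_max_left _ _)) hn)
  have hnR : (1 : ℝ) ≤ n := by exact_mod_cast hn1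
  have ht0 : 0 < t := by
    have : (0 : ℝ) < t := by rw [ht]; positivity
    exact_mod_cast this
  have htn : t < n := by
    have : (t : ℝ) < n := by rw [ht]; nlinarith
    exact_mod_cast this
  have hpn : 0 < p n := lt_of_lt_of_le hp0p (hp1 n)
  have hch := aux_choose n t c hc0 hc1 htn ht
  have hpt : Real.exp (-(entropy c * n)) * Real.exp (ε * c * n) ≤ p n ^ t := by
    calc _ = p0 ^ t := by
          rw [hp0, ← Real.exp_nat_mul, ← Real.exp_add, ht]
          congr 1
          field_simp
      _ ≤ _ := pow_le_pow_left₀ hp0p.le (hp1 n) t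
  set C : ℝ := ((n.choose (t + 1) : ℕ) : ℝ) with hC
  have hCp : 0 < C := by
    rw [hC]; exact_mod_cast Nat.choose_pos htn
  have hsq : (0 : ℝ) < ((n : ℝ) + 1) ^ 2 := by positivity
  have hsq1 : (1 : ℝ) ≤ ((n : ℝ) + 1) ^ 2 := by nlinarith
  have hsq4 : ((n : ℝ) + 1) ^ 4 = ((n : ℝ) + 1) ^ 2 * ((n : ℝ) + 1) ^ 2 := by ring
  have hptp : 0 < p n ^ t := pow_pos hpn t
  -- lower bound for the mean
  have hmu : p0 * Real.exp (ε * c * n) ≤ ((n : ℝ) + 1) ^ 2 * (C * p n ^ (t + 1)) := by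
    have h1 : Real.exp (ε * c * n) ≤ ((n : ℝ) + 1) ^ 2 * C * p n ^ t := by
      calc Real.exp (ε * c * n) = Real.exp (entropy c * n) *
            (Real.exp (-(entropy c * n)) * Real.exp (ε * c * n)) := by
            rw [← mul_assoc, ← Real.exp_add]; simp
        _ ≤ _ := by gcongr
    calc p0 * Real.exp (ε * c * n) ≤ p n * (((n : ℝ) + 1) ^ 2 * C * p n ^ t) := by
          gcongr
          exact hp1 n
      _ = _ := by ring
  have hmain := aux_prob n t ht0 htn (p n) hpn (hp2 n) P (by
    intro Δ hΔ
    apply hP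
    refine le_trans ?_ hΔ
    have h1 : 2 * Real.exp ((entropy c - δ) * n) ≤ C * p n := by
      have h2 : Real.exp ((entropy c - δ) * n) * Real.exp (δ * n) = Real.exp (entropy c * n) := by
        rw [← Real.exp_add]; congr 1; ring
      have h3 : Real.exp ((entropy c - δ) * n) * (2 / p0 * ((n : ℝ) + 1) ^ 4)
          ≤ ((n : ℝ) + 1) ^ 2 * C := by
        refine le_trans ?_ hch
        rw [← h2]
        gcongr
      have h4 : Real.exp ((entropy c - δ) * n) * (2 / p0) * ((n : ℝ) + 1) ^ 2 ≤ C := by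
        rw [hsq4] at h3
        refine le_of_mul_le_mul_left ?_ hsq
        linarith
      have h5 : Real.exp ((entropy c - δ) * n) * (2 / p0) ≤ C := by
        refine le_trans ?_ h4
        exact le_mul_of_one_le_right (by positivity) hsq1
      calc 2 * Real.exp ((entropy c - δ) * n)
          = Real.exp ((entropy c - δ) * n) * (2 / p0) * p0 := by field_simp
        _ ≤ C * p n := by
          gcongr
          exact hp1 n
    have := mul_le_mul_of_nonneg_right h1 hptp.le
    rw [pow_succ]
    linarith)
  refine le_trans ?_ hmain
  have hden : 0 < C * p n ^ (t + 1) := by positivity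
  have : 4 * ((n ^ 2 : ℕ) : ℝ) / (C * p n ^ (t + 1)) ≤ ε' := by
    rw [div_le_iff₀ hden]
    push_cast
    have h1 : 4 * ((n : ℝ) + 1) ^ 4 ≤ ε' * (p0 * Real.exp (ε * c * n)) := by
      have := mul_le_mul_of_nonneg_left hg1 (show 0 ≤ p0 * ε' by positivity)
      have h2 : p0 * ε' * (4 / (p0 * ε') * ((n : ℝ) + 1) ^ 4) = 4 * ((n : ℝ) + 1) ^ 4 := by
        field_simp
      rw [h2] at this
      linarith
    have h2 := h1.trans (mul_le_mul_of_nonneg_left hmu hε'.le)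
    rw [hsq4] at h2
    have h3 : 4 * ((n : ℝ) + 1) ^ 2 ≤ ε' * (C * p n ^ (t + 1)) := by
      refine le_of_mul_le_mul_left ?_ hsq
      linarith
    nlinarith
  linarith

/-- For constants `0 < c < 1`, `ε, δ > 0`, `t = cn` and
`exp(-α(c)/c + ε) ≤ p_n ≤ 1`, `Δ ~ RP(n,t,p_n)`: (i) with high probability
there is a `(t+1)`-set all of whose `t`-subsets are faces; (ii) if moreover
`p_n ≤ 1 - ε`, with high probability the number of such `(t+1)`-sets is at
least `exp((α(c) - δ)n)·p_n^{cn}`. -/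
theorem stmt7 (c ε δ : ℝ) (hc0 : 0 < c) (hc1 : c < 1) (hε : 0 < ε) (hδ : 0 < δ)
    (p : ℕ → ℝ) (hp1 : ∀ n : ℕ, Real.exp (-entropy c / c + ε) ≤ p n)
    (hp2 : ∀ n : ℕ, p n ≤ 1) :
    ((∀ ε' : ℝ, 0 < ε' → ∃ N : ℕ, ∀ n : ℕ, N ≤ n → ∀ t : ℕ, (t : ℝ) = c * n →
        1 - ε' ≤ rpProb n t (p n)
          (fun Δ => ∃ x : Finset (Fin n), x.card = t + 1 ∧
            ∀ y ⊆ x, y.card = t → y ∈ Δ)) ∧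
      ((∀ n : ℕ, p n ≤ 1 - ε) →
        ∀ ε' : ℝ, 0 < ε' → ∃ N : ℕ, ∀ n : ℕ, N ≤ n → ∀ t : ℕ, (t : ℝ) = c * n →
          1 - ε' ≤ rpProb n t (p n)
            (fun Δ =>
              Real.exp ((entropy c - δ) * n) * (p n) ^ t ≤
                ((Finset.univ.filter (fun x : Finset (Fin n) =>
                  x.card = t + 1 ∧ ∀ y ⊆ x, y.card = t → y ∈ Δ)).card : ℝ)))) := by
  refine ⟨fun ε' hε' => ?_, fun _ ε' hε' => ?_⟩
  · obtain ⟨N, hN⟩ := aux_all c ε δ hc0 hc1 hε hδ p hp1 hp2 ε' hε'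
    refine ⟨N, fun n hn t ht => hN n hn t ht _ ?_⟩
    intro Δ hΔ
    have hpn : 0 < p n := lt_of_lt_of_le (Real.exp_pos _) (hp1 n)
    have h0 : (0 : ℝ) < Real.exp ((entropy c - δ) * n) * (p n) ^ t := by positivity
    have h1 := lt_of_lt_of_le h0 hΔ
    have h2 := Finset.card_pos.1 (Nat.cast_pos.1 h1)
    obtain ⟨x, hx⟩ := h2
    exact ⟨x, (Finset.mem_filter.1 hx).2⟩
  · obtain ⟨N, hN⟩ := aux_all c ε δ hc0 hc1 hε hδ p hp1 hp2 ε' hε'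
    exact ⟨N, fun n hn t ht => hN n hn t ht _ (fun Δ hΔ => hΔ)⟩
end
end
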